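/- arXiv:math/0306417 — 2 statements merged into one kernel-verified Lean document; each statement's English description precedes it below -/
import Mathlib

section
/- Let α be a map from the dyadic rectangles of ℝ^d to [0,∞) with finite product Carleson measure norm ‖α‖_CM = sup_{U⊂ℝ^d, 0<|U|<∞} |U|^{-1} Σ_{R dyadic, R⊂U} α(R), the supremum over all measurable sets U of finite measure. Then for every 1 < p < ∞ there is a constant C_p such that for every measurable set U of finite measure, ‖Σ_{R dyadic, R⊂U} (α(R)/|R|) 1_R‖_{L^p(ℝ^d)} ≤ C_p ‖α‖_CM |U|^{1/p}. -/
open MeasureTheory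
open scoped ENNReal NNReal
attribute [local instance] Classical.propDecidable

/-- The dyadic rectangle `∏_j [n_j 2^{k_j}, (n_j+1) 2^{k_j})` in `ℝ^d`. -/
noncomputable def dyRect {d : ℕ} (k n : Fin d → ℤ) : Set (Fin d → ℝ) :=
  Set.univ.pi fun j => Set.Ico ((n j : ℝ) * 2 ^ (k j)) (((n j : ℝ) + 1) * 2 ^ (k j))

/-- The maximal function of `g` over the finitely many sets `I i`, `i ∈ S`. -/
noncomputable def maxFn {X ι : Type*} [MeasurableSpace X] (μ : Measure X) (I : ι → Set X)
    (S : Finset ι) (g : X → ℝ≥0∞) (x : X) : ℝ≥0∞ :=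
  ⨆ i ∈ S, (I i).indicator (fun _ => (∫⁻ y in I i, g y ∂μ) / μ (I i)) x

/-- The maximal functions over finite subfamilies of `I` are bounded on `L^q`, with
constant `C^(1/q)`. -/
def MaxStrongType {X ι : Type*} [MeasurableSpace X] (μ : Measure X) (I : ι → Set X)
    (q : ℝ) (C : ℝ≥0∞) : Prop :=
  ∀ (S : Finset ι) (g : X → ℝ≥0∞), Measurable g →
    ∫⁻ x, maxFn μ I S g x ^ q ∂μ ≤ C * ∫⁻ x, g x ^ q ∂μ

section General

open Set

variable {X Y ι κ : Type*} [MeasurableSpace X] [MeasurableSpace Y]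

lemma measurable_maxFn (μ : Measure X) {I : ι → Set X} (hI : ∀ i, MeasurableSet (I i))
    (S : Finset ι) (g : X → ℝ≥0∞) : Measurable (maxFn μ I S g) :=
  Measurable.biSup _ S.countable_toSet fun i _ => measurable_const.indicator (hI i)

lemma le_maxFn (μ : Measure X) (I : ι → Set X) {S : Finset ι} (g : X → ℝ≥0∞) {i : ι}
    (hi : i ∈ S) {x : X} (hx : x ∈ I i) :
    (∫⁻ y in I i, g y ∂μ) / μ (I i) ≤ maxFn μ I S g x := by
  refine le_trans ?_ (le_iSup₂ (f := fun i (_ : i ∈ S) => (I i).indicator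
    (fun _ => (∫⁻ y in I i, g y ∂μ) / μ (I i)) x) i hi)
  simp [hx]

lemma le_rpow_of_le_mul_rpow {p q : ℝ} (hpq : p.HolderConjugate q) {A K : ℝ≥0∞}
    (hA : A ≠ ⊤) (h : A ≤ K * A ^ (1 / q)) : A ≤ K ^ p := by
  rcases eq_or_ne A 0 with rfl | h0
  · simp
  have hsum : 1 / p + 1 / q = 1 := by simpa using hpq.inv_add_inv_eq_one
  have hsplit : A = A ^ (1 / p) * A ^ (1 / q) := by
    rw [← ENNReal.rpow_add _ _ h0 hA, hsum, ENNReal.rpow_one]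
  have hne : A ^ (1 / q) ≠ 0 := by simp [ENNReal.rpow_eq_zero_iff, h0, hA]
  have hnt : A ^ (1 / q) ≠ ⊤ := ENNReal.rpow_ne_top_of_nonneg hpq.symm.one_div_nonneg hA
  have h1 : A ^ (1 / p) ≤ K := by
    rw [← ENNReal.mul_le_mul_iff_left hne hnt, ← hsplit]
    exact h
  calc A = (A ^ (1 / p)) ^ p := by
        rw [← ENNReal.rpow_mul, one_div_mul_cancel hpq.ne_zero, ENNReal.rpow_one]
    _ ≤ K ^ p := ENNReal.rpow_le_rpow h1 hpq.nonneg

/-- The covering argument for a finite family of sets any two of which are nested or disjoint. -/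
lemma mul_measure_biUnion_le (μ ν : Measure X) {I : ι → Set X}
    (hI : ∀ i, MeasurableSet (I i))
    (hnest : ∀ i j, I i ⊆ I j ∨ I j ⊆ I i ∨ Disjoint (I i) (I j)) (c : ℝ≥0∞)
    (T : Finset ι) (hT : ∀ i ∈ T, c * μ (I i) ≤ ν (I i)) :
    c * μ (⋃ i ∈ T, I i) ≤ ν (⋃ i ∈ T, I i) := by
  induction T using Finset.strongInduction with
  | H T ih =>
    rcases T.eq_empty_or_nonempty with rfl | hne
    · simp
    obtain ⟨m, hm⟩ := T.exists_maximalFor I hne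
    have hdec : ⋃ i ∈ T, I i = I m ∪ ⋃ i ∈ T.filter (fun i => ¬ I i ⊆ I m), I i := by
      ext x
      simp only [mem_iUnion, mem_union, Finset.mem_filter, exists_prop]
      constructor
      · rintro ⟨i, hi, hx⟩
        by_cases h : I i ⊆ I m
        · exact Or.inl (h hx)
        · exact Or.inr ⟨i, ⟨hi, h⟩, hx⟩
      · rintro (hx | ⟨i, ⟨hi, -⟩, hx⟩)
        · exact ⟨m, hm.1, hx⟩
        · exact ⟨i, hi, hx⟩
    have hdisj : Disjoint (I m) (⋃ i ∈ T.filter (fun i => ¬ I i ⊆ I m), I i) := by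
      simp only [disjoint_iUnion_right, Finset.mem_filter]
      rintro i ⟨hi, hni⟩
      rcases hnest m i with h | h | h
      · exact absurd (hm.2 hi h) hni
      · exact absurd h hni
      · exact h
    have hmeas : MeasurableSet (⋃ i ∈ T.filter (fun i => ¬ I i ⊆ I m), I i) :=
      Finset.measurableSet_biUnion _ fun i _ => hI i
    rw [hdec, measure_union hdisj hmeas, measure_union hdisj hmeas, mul_add]
    gcongr
    · exact hT m hm.1
    · refine ih _ ?_ fun i hi => hT i (Finset.mem_filter.1 hi).1
      exact Finset.filter_ssubset.2 ⟨m, hm.1, by simp⟩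

/-- The `L^q` estimate that follows from a Doob-type weak estimate. -/
lemma lintegral_rpow_le_of_mul_measure_le (μ ν : Measure X) {q : ℝ} (hq : 1 < q) {f : X → ℝ}
    (hf : Measurable f) (hf0 : ∀ x, 0 ≤ f x)
    (hw : ∀ t : ℝ, 0 < t → ENNReal.ofReal t * μ {x | t < f x} ≤ ν {x | t < f x}) :
    ∫⁻ x, ENNReal.ofReal (f x ^ q) ∂μ
      ≤ ENNReal.ofReal (q / (q - 1)) * ∫⁻ x, ENNReal.ofReal (f x ^ (q - 1)) ∂ν := by
  have hq1 : 0 < q - 1 := sub_pos.2 hq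
  rw [lintegral_rpow_eq_lintegral_meas_lt_mul μ (ae_of_all _ hf0) hf.aemeasurable
      (zero_lt_one.trans hq),
    lintegral_rpow_eq_lintegral_meas_lt_mul ν (ae_of_all _ hf0) hf.aemeasurable hq1,
    ← mul_assoc, ← ENNReal.ofReal_mul (by positivity), div_mul_cancel₀ _ hq1.ne']
  gcongr ENNReal.ofReal q * ?_
  refine setLIntegral_mono' measurableSet_Ioi fun t (ht : 0 < t) => ?_
  have hpow : t ^ (q - 1) = t * t ^ (q - 1 - 1) := by
    rw [Real.rpow_sub_one ht.ne' (q - 1)]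
    field_simp
  rw [hpow, ENNReal.ofReal_mul ht.le, ← mul_assoc, mul_comm (μ _)]
  gcongr
  exact hw t ht

lemma maxFn_le_sum (μ : Measure X) (I : ι → Set X) (S : Finset ι) (g : X → ℝ≥0∞) (x : X) :
    maxFn μ I S g x ≤ ∑ i ∈ S, (∫⁻ y in I i, g y ∂μ) / μ (I i) := by
  refine iSup₂_le fun i hi => (indicator_le_self _ _ x).trans ?_
  exact Finset.single_le_sum (f := fun i => (∫⁻ y in I i, g y ∂μ) / μ (I i))
    (fun _ _ => zero_le) hi

lemma maxFn_ne_top (μ : Measure X) {I : ι → Set X} {S : Finset ι} {g : X → ℝ≥0∞}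
    (h : ∀ i ∈ S, (∫⁻ y in I i, g y ∂μ) / μ (I i) ≠ ⊤) (x : X) : maxFn μ I S g x ≠ ⊤ :=
  ne_top_of_le_ne_top (ENNReal.sum_ne_top.2 h) (maxFn_le_sum μ I S g x)

lemma setLIntegral_ne_top_of_lintegral_rpow (μ : Measure X) {q : ℝ} (hq : 1 ≤ q)
    {g : X → ℝ≥0∞} (hg : ∫⁻ x, g x ^ q ∂μ ≠ ⊤) {A : Set X} (hA : μ A ≠ ⊤) :
    ∫⁻ x in A, g x ∂μ ≠ ⊤ := by
  have hle : ∀ x, g x ≤ 1 + g x ^ q := fun x => by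
    rcases le_total (g x) 1 with h | h
    · exact h.trans le_self_add
    · refine le_trans ?_ le_add_self
      simpa using ENNReal.rpow_le_rpow_of_exponent_le h hq
  refine ne_top_of_le_ne_top ?_ (lintegral_mono hle)
  rw [lintegral_add_left measurable_const, lintegral_one, Measure.restrict_apply_univ]
  exact ENNReal.add_ne_top.2 ⟨hA, ne_top_of_le_ne_top hg (setLIntegral_le_lintegral _ _)⟩

/-- The maximal theorem for a family of sets any two of which are nested or disjoint. -/
theorem maxStrongType_of_nested (μ : Measure X) {I : ι → Set X}
    (hI : ∀ i, MeasurableSet (I i))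
    (hnest : ∀ i j, I i ⊆ I j ∨ I j ⊆ I i ∨ Disjoint (I i) (I j))
    (h0 : ∀ i, μ (I i) ≠ 0) (htop : ∀ i, μ (I i) ≠ ⊤) {q : ℝ} (hq : 1 < q) :
    MaxStrongType μ I q (ENNReal.ofReal (q / (q - 1)) ^ q) := by
  intro S g hg
  have hq0 : 0 < q := zero_lt_one.trans hq
  have hq1 : 0 < q - 1 := sub_pos.2 hq
  have hc0 : ENNReal.ofReal (q / (q - 1)) ^ q ≠ 0 := by
    have : 0 < q / (q - 1) := by positivity
    simp [ENNReal.rpow_eq_zero_iff, hq0.not_gt, this]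
  rcases eq_or_ne (∫⁻ x, g x ^ q ∂μ) ⊤ with hgtop | hgtop
  · simp [hgtop, ENNReal.mul_top hc0]
  have hpq := Real.HolderConjugate.conjExponent hq
  set q' := Real.conjExponent q
  have havg : ∀ i, (∫⁻ y in I i, g y ∂μ) / μ (I i) ≠ ⊤ := fun i =>
    ENNReal.div_ne_top (setLIntegral_ne_top_of_lintegral_rpow μ hq.le hgtop (htop i)) (h0 i)
  set h := maxFn μ I S g with hdef
  have hm : Measurable h := measurable_maxFn μ hI S g
  have hfin : ∀ x, h x ≠ ⊤ := maxFn_ne_top μ fun i _ => havg i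
  have hAfin : ∫⁻ x, h x ^ q ∂μ ≠ ⊤ := by
    set c := ∑ i ∈ S, (∫⁻ y in I i, g y ∂μ) / μ (I i)
    have hle : ∀ x, h x ^ q ≤ (⋃ i ∈ S, I i).indicator (fun _ => c ^ q) x := by
      intro x
      by_cases hx : x ∈ ⋃ i ∈ S, I i
      · rw [indicator_of_mem hx]
        exact ENNReal.rpow_le_rpow (maxFn_le_sum μ I S g x) hq0.le
      · rw [indicator_of_notMem hx, nonpos_iff_eq_zero, ENNReal.rpow_eq_zero_iff_of_pos hq0,
          hdef, maxFn]
        simp only [mem_iUnion, not_exists] at hx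
        simp only [ENNReal.iSup_eq_zero]
        exact fun i hi => indicator_of_notMem (hx i hi) _
    refine ne_top_of_le_ne_top ?_ (lintegral_mono hle)
    rw [lintegral_indicator_const (Finset.measurableSet_biUnion _ fun i _ => hI i)]
    refine ENNReal.mul_ne_top (ENNReal.rpow_ne_top_of_nonneg hq0.le
      (ENNReal.sum_ne_top.2 fun i _ => havg i)) ?_
    exact (measure_biUnion_lt_top S.finite_toSet fun i _ => (htop i).lt_top).ne
  have hweak : ∀ t : ℝ, 0 < t → ENNReal.ofReal t * μ {x | t < (h x).toReal}
      ≤ μ.withDensity g {x | t < (h x).toReal} := by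
    intro t ht
    have hset : {x | t < (h x).toReal} = ⋃ i ∈ S.filter
        (fun i => ENNReal.ofReal t < (∫⁻ y in I i, g y ∂μ) / μ (I i)), I i := by
      ext x
      simp only [mem_ofPred_eq, mem_iUnion, Finset.mem_filter, exists_prop]
      rw [← ENNReal.ofReal_lt_iff_lt_toReal ht.le (hfin x), hdef, maxFn]
      simp only [lt_iSup_iff]
      constructor
      · rintro ⟨i, hi, hlt⟩
        have hx : x ∈ I i := by
          by_contra hx
          simp [indicator_of_notMem hx] at hlt
        exact ⟨i, ⟨hi, by simpa [hx] using hlt⟩, hx⟩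
      · rintro ⟨i, ⟨hi, hlt⟩, hx⟩
        exact ⟨i, hi, by simpa [hx] using hlt⟩
    rw [hset]
    refine mul_measure_biUnion_le μ _ hI hnest _ _ fun i hi => ?_
    rw [withDensity_apply _ (hI i)]
    exact ENNReal.mul_le_of_le_div (Finset.mem_filter.1 hi).2.le
  have hkey := lintegral_rpow_le_of_mul_measure_le μ (μ.withDensity g) hq hm.ennreal_toReal
    (fun x => ENNReal.toReal_nonneg) hweak
  have hpow : ∀ r : ℝ, 0 ≤ r → ∀ x, ENNReal.ofReal ((h x).toReal ^ r) = h x ^ r :=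
    fun r hr x => by
      rw [← ENNReal.ofReal_rpow_of_nonneg ENNReal.toReal_nonneg hr, ENNReal.ofReal_toReal (hfin x)]
  simp_rw [hpow q hq0.le, hpow (q - 1) hq1.le] at hkey
  rw [lintegral_withDensity_eq_lintegral_mul _ hg (hm.pow_const _)] at hkey
  have hholder := ENNReal.lintegral_mul_le_Lp_mul_Lq μ hpq hg.aemeasurable
    (hm.pow_const (q - 1)).aemeasurable
  simp_rw [← ENNReal.rpow_mul, hpq.sub_one_mul_conj] at hholder
  have hfinal : ∫⁻ x, h x ^ q ∂μ ≤ (ENNReal.ofReal (q / (q - 1)) *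
      (∫⁻ x, g x ^ q ∂μ) ^ (1 / q)) * (∫⁻ x, h x ^ q ∂μ) ^ (1 / q') := by
    rw [mul_assoc]
    exact hkey.trans (by gcongr)
  refine (le_rpow_of_le_mul_rpow hpq hAfin hfinal).trans_eq ?_
  rw [ENNReal.mul_rpow_of_nonneg _ _ hq0.le, ← ENNReal.rpow_mul,
    one_div_mul_cancel hq0.ne', ENNReal.rpow_one]

lemma measurable_maxFn_left (μ : Measure X) [SFinite μ] {I : ι → Set X}
    (hI : ∀ i, MeasurableSet (I i)) (S : Finset ι) {g : X × Y → ℝ≥0∞} (hg : Measurable g) :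
    Measurable fun z : X × Y => maxFn μ I S (fun x => g (x, z.2)) z.1 := by
  refine Measurable.biSup _ S.countable_toSet fun i _ => ?_
  have hint : Measurable fun y : Y => (∫⁻ x in I i, g (x, y) ∂μ) / μ (I i) :=
    (Measurable.lintegral_prod_left' (μ := μ.restrict (I i)) hg).div_const _
  exact (hint.comp measurable_snd).indicator (measurable_fst (hI i))

lemma maxFn_prod_le (μ : Measure X) (ν : Measure Y) [SFinite μ] [SFinite ν]
    {I : ι → Set X} {J : κ → Set Y} (hI0 : ∀ i, μ (I i) ≠ 0) (hItop : ∀ i, μ (I i) ≠ ⊤)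
    (S : Finset (ι × κ)) {g : X × Y → ℝ≥0∞} (hg : Measurable g) (x : X) (y : Y) :
    maxFn (μ.prod ν) (fun r : ι × κ => I r.1 ×ˢ J r.2) S g (x, y)
      ≤ maxFn ν J (S.image Prod.snd)
          (fun y' => maxFn μ I (S.image Prod.fst) (fun x' => g (x', y')) x) y := by
  refine iSup₂_le fun r hr => ?_
  by_cases hxy : (x, y) ∈ I r.1 ×ˢ J r.2
  swap
  · rw [indicator_of_notMem hxy]; exact zero_le
  rw [indicator_of_mem hxy]
  refine le_trans ?_ (le_maxFn ν J _ (Finset.mem_image_of_mem _ hr) hxy.2)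
  have hint : Measurable fun y' => ∫⁻ x' in I r.1, g (x', y') ∂μ :=
    Measurable.lintegral_prod_left' hg
  calc (∫⁻ z in I r.1 ×ˢ J r.2, g z ∂μ.prod ν) / (μ.prod ν) (I r.1 ×ˢ J r.2)
      = (∫⁻ y' in J r.2, (∫⁻ x' in I r.1, g (x', y') ∂μ) / μ (I r.1) ∂ν) / ν (J r.2) := by
        simp only [div_eq_mul_inv]
        rw [lintegral_mul_const _ hint, ← Measure.prod_restrict, lintegral_prod_symm' _ hg,
          Measure.prod_prod, ENNReal.mul_inv (Or.inl (hI0 _)) (Or.inl (hItop _)), mul_assoc]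
    _ ≤ _ := by
        refine ENNReal.div_le_div_right (lintegral_mono fun y' => ?_) _
        exact le_maxFn μ I (fun x => g (x, y')) (Finset.mem_image_of_mem _ hr) hxy.1

/-- Maximal theorems tensorize. -/
theorem MaxStrongType.prod {μ : Measure X} {ν : Measure Y} [SFinite μ] [SFinite ν]
    {I : ι → Set X} {J : κ → Set Y} (hI : ∀ i, MeasurableSet (I i))
    (hJ : ∀ j, MeasurableSet (J j))
    (hI0 : ∀ i, μ (I i) ≠ 0) (hItop : ∀ i, μ (I i) ≠ ⊤)
    {q : ℝ} (hq : 0 ≤ q) {C D : ℝ≥0∞}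
    (h₁ : MaxStrongType μ I q C) (h₂ : MaxStrongType ν J q D) :
    MaxStrongType (μ.prod ν) (fun r : ι × κ => I r.1 ×ˢ J r.2) q (D * C) := by
  intro S g hg
  obtain ⟨G, hG⟩ : ∃ G : X × Y → ℝ≥0∞, G = fun z =>
    maxFn μ I (S.image Prod.fst) (fun x => g (x, z.2)) z.1 := ⟨_, rfl⟩
  have hGm : Measurable G := hG ▸ measurable_maxFn_left μ hI _ hg
  have hpt : ∀ x y, maxFn (μ.prod ν) (fun r : ι × κ => I r.1 ×ˢ J r.2) S g (x, y)
      ≤ maxFn ν J (S.image Prod.snd) (fun y' => G (x, y')) y := by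
    intro x y
    rw [hG]
    exact maxFn_prod_le μ ν hI0 hItop S hg x y
  have hm := measurable_maxFn (μ.prod ν) (fun r : ι × κ => (hI r.1).prod (hJ r.2)) S g
  have hgq : Measurable fun y => ∫⁻ x, g (x, y) ^ q ∂μ :=
    Measurable.lintegral_prod_left' (f := fun z => g z ^ q) (hg.pow_const q)
  have hGq : Measurable fun x => ∫⁻ y, G (x, y) ^ q ∂ν :=
    Measurable.lintegral_prod_right' (f := fun z => G z ^ q) (hGm.pow_const q)
  calc ∫⁻ z, maxFn (μ.prod ν) (fun r : ι × κ => I r.1 ×ˢ J r.2) S g z ^ q ∂μ.prod ν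
      = ∫⁻ x, ∫⁻ y, maxFn (μ.prod ν) (fun r : ι × κ => I r.1 ×ˢ J r.2) S g (x, y) ^ q ∂ν ∂μ :=
        lintegral_prod _ (hm.pow_const q).aemeasurable
    _ ≤ ∫⁻ x, D * ∫⁻ y, G (x, y) ^ q ∂ν ∂μ := by
        refine lintegral_mono fun x => ?_
        refine le_trans (lintegral_mono fun y => ENNReal.rpow_le_rpow (hpt x y) hq) ?_
        exact h₂ _ (fun y => G (x, y)) (hGm.comp measurable_prodMk_left)
    _ = D * ∫⁻ x, ∫⁻ y, G (x, y) ^ q ∂ν ∂μ := lintegral_const_mul _ hGq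
    _ = D * ∫⁻ y, ∫⁻ x, G (x, y) ^ q ∂μ ∂ν := by
        rw [← lintegral_prod_symm' _ (hGm.pow_const q),
          lintegral_prod _ (hGm.pow_const q).aemeasurable]
    _ ≤ D * ∫⁻ y, C * ∫⁻ x, g (x, y) ^ q ∂μ ∂ν := by
        refine mul_le_mul_right (lintegral_mono fun y => ?_) D
        rw [hG]
        exact h₁ (S.image Prod.fst) (fun x => g (x, y)) (hg.comp measurable_prodMk_right)
    _ = D * C * ∫⁻ z, g z ^ q ∂μ.prod ν := by
        rw [lintegral_const_mul _ hgq, lintegral_prod_symm' _ (hg.pow_const q), mul_assoc]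

theorem MaxStrongType.of_measurePreserving {μ : Measure X} {ν : Measure Y} (e : X ≃ᵐ Y)
    (he : MeasurePreserving e μ ν) {I : ι → Set X} {J : κ → Set Y} (φ : ι → κ)
    (hIJ : ∀ i, I i = e ⁻¹' J (φ i)) (hJ : ∀ j, MeasurableSet (J j))
    {q : ℝ} (hq : 0 ≤ q) {C : ℝ≥0∞} (h : MaxStrongType ν J q C) : MaxStrongType μ I q C := by
  intro S g hg
  have hgm : Measurable fun y => g (e.symm y) := hg.comp e.symm.measurable
  have hpt : ∀ x, maxFn μ I S g x ≤ maxFn ν J (S.image φ) (fun y => g (e.symm y)) (e x) := by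
    intro x
    refine iSup₂_le fun i hi => ?_
    by_cases hx : x ∈ I i
    swap
    · rw [indicator_of_notMem hx]; exact zero_le
    rw [indicator_of_mem hx]
    have hx' : e x ∈ J (φ i) := by rwa [hIJ] at hx
    refine le_trans (le_of_eq ?_) (le_maxFn ν J _ (Finset.mem_image_of_mem _ hi) hx')
    rw [hIJ, he.measure_preimage_equiv,
      ← he.setLIntegral_comp_preimage (hJ _) hgm]
    simp
  calc ∫⁻ x, maxFn μ I S g x ^ q ∂μ
      ≤ ∫⁻ x, maxFn ν J (S.image φ) (fun y => g (e.symm y)) (e x) ^ q ∂μ :=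
        lintegral_mono fun x => ENNReal.rpow_le_rpow (hpt x) hq
    _ = ∫⁻ y, maxFn ν J (S.image φ) (fun y => g (e.symm y)) y ^ q ∂ν :=
        he.lintegral_comp ((measurable_maxFn ν hJ _ _).pow_const q)
    _ ≤ C * ∫⁻ y, g (e.symm y) ^ q ∂ν := h _ _ hgm
    _ = C * ∫⁻ x, g x ^ q ∂μ := by
        rw [← he.lintegral_comp (hgm.pow_const q)]
        simp

end General

section Embedding

open Set

variable {X ι : Type*} [MeasurableSpace X]

/-- The Carleson embedding for the maximal function over a finite family of sets. -/
lemma sum_mul_average_le (μ : Measure X) {I : ι → Set X} (hI : ∀ i, MeasurableSet (I i))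
    {a : ι → ℝ≥0∞} {N : ℝ≥0∞}
    (hcar : ∀ V : Set X, MeasurableSet V → μ V < ⊤ →
      (∑' i, if I i ⊆ V then a i else 0) ≤ N * μ V)
    {U : Set X} (hU : MeasurableSet U) (hUtop : μ U < ⊤) {S : Finset ι}
    (hS : ∀ i ∈ S, I i ⊆ U) (g : X → ℝ≥0∞)
    (hg : ∀ i ∈ S, (∫⁻ y in I i, g y ∂μ) / μ (I i) ≠ ⊤) :
    ∑ i ∈ S, a i * ((∫⁻ y in I i, g y ∂μ) / μ (I i)) ≤ N * ∫⁻ x in U, maxFn μ I S g x ∂μ := by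
  let : MeasurableSpace ι := ⊤
  obtain ⟨c, hc⟩ : ∃ c : ι → ℝ≥0∞, c = fun i => (∫⁻ y in I i, g y ∂μ) / μ (I i) := ⟨_, rfl⟩
  have hfin : ∀ x, maxFn μ I S g x ≠ ⊤ := maxFn_ne_top μ hg
  have hm := measurable_maxFn μ hI S g
  set ν : Measure ι := ∑ i ∈ S, a i • Measure.dirac i with hν
  have hleft : ∑ i ∈ S, a i * ((∫⁻ y in I i, g y ∂μ) / μ (I i))
      = ∫⁻ i, ENNReal.ofReal (c i).toReal ∂ν := by
    rw [hν, lintegral_finsetSum_measure]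
    refine Finset.sum_congr rfl fun i hi => ?_
    rw [lintegral_smul_measure, lintegral_dirac, hc, ENNReal.ofReal_toReal (hg i hi), smul_eq_mul]
  have hright : ∫⁻ x in U, maxFn μ I S g x ∂μ
      = ∫⁻ x in U, ENNReal.ofReal (maxFn μ I S g x).toReal ∂μ :=
    lintegral_congr fun x => (ENNReal.ofReal_toReal (hfin x)).symm
  rw [hleft, hright,
    lintegral_eq_lintegral_meas_lt ν (ae_of_all _ fun _ => ENNReal.toReal_nonneg)
      measurable_from_top.aemeasurable,
    lintegral_eq_lintegral_meas_lt _ (ae_of_all _ fun _ => ENNReal.toReal_nonneg)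
      hm.ennreal_toReal.aemeasurable]
  have hanti : Antitone fun t : ℝ => μ.restrict U {x | t < (maxFn μ I S g x).toReal} :=
    fun s t hst => measure_mono fun x (hx : t < _) => hst.trans_lt hx
  rw [← lintegral_const_mul _ hanti.measurable]
  refine setLIntegral_mono' measurableSet_Ioi fun t (ht : 0 < t) => ?_
  have hmeas : MeasurableSet {x | t < (maxFn μ I S g x).toReal} :=
    measurableSet_lt measurable_const hm.ennreal_toReal
  rw [Measure.restrict_apply hmeas]
  refine le_trans ?_ (hcar _ (hmeas.inter hU) ((measure_mono inter_subset_right).trans_lt hUtop))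
  refine le_trans ?_ (ENNReal.sum_le_tsum S)
  rw [hν, Measure.finsetSum_apply]
  refine Finset.sum_le_sum fun i hi => ?_
  rw [Measure.smul_apply, Measure.dirac_apply' _ MeasurableSpace.measurableSet_top, smul_eq_mul]
  by_cases hti : t < (c i).toReal
  · have hsub : I i ⊆ {x | t < (maxFn μ I S g x).toReal} ∩ U := fun x hx =>
      ⟨hti.trans_le (ENNReal.toReal_mono (hfin x) (hc ▸ le_maxFn μ I g hi hx)), hS i hi hx⟩
    simp [hsub, hti]
  · simp [hti]

lemma lintegral_sum_rpow_le (μ : Measure X) {I : ι → Set X} (hI : ∀ i, MeasurableSet (I i))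
    (h0 : ∀ i, μ (I i) ≠ 0) (htop : ∀ i, μ (I i) ≠ ⊤) {p q : ℝ} (hpq : p.HolderConjugate q)
    {C : ℝ≥0∞} (hmax : MaxStrongType μ I q C)
    {a : ι → ℝ≥0∞} (ha : ∀ i, a i ≠ ⊤) {N : ℝ≥0∞}
    (hcar : ∀ V : Set X, MeasurableSet V → μ V < ⊤ →
      (∑' i, if I i ⊆ V then a i else 0) ≤ N * μ V)
    {U : Set X} (hU : MeasurableSet U) (hUtop : μ U < ⊤) {S : Finset ι}
    (hS : ∀ i ∈ S, I i ⊆ U) :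
    ∫⁻ x, (∑ i ∈ S, (I i).indicator (fun _ => a i / μ (I i)) x) ^ p ∂μ
      ≤ (C ^ (1 / q) * N) ^ p * μ U := by
  obtain ⟨F, hF⟩ : ∃ F : X → ℝ≥0∞, F = fun x =>
    ∑ i ∈ S, (I i).indicator (fun _ => a i / μ (I i)) x := ⟨_, rfl⟩
  have hFm : Measurable F := by
    rw [hF]
    exact Finset.measurable_fun_sum _ fun i _ => measurable_const.indicator (hI i)
  obtain ⟨B, hB⟩ : ∃ B : ℝ≥0∞, B = ∑ i ∈ S, a i / μ (I i) := ⟨_, rfl⟩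
  have hBtop : B ≠ ⊤ := hB ▸ ENNReal.sum_ne_top.2 fun i _ => ENNReal.div_ne_top (ha i) (h0 i)
  have hFB : ∀ x, F x ≤ B := fun x => by
    rw [hF, hB]
    exact Finset.sum_le_sum fun i _ => indicator_le_self _ _ x
  have hp1 : 0 < p - 1 := hpq.sub_one_pos
  suffices hgoal : ∫⁻ x, F x ^ p ∂μ ≤ (C ^ (1 / q) * N) ^ p * μ U by rwa [hF] at hgoal
  have hAtop : ∫⁻ x, F x ^ p ∂μ ≠ ⊤ := by
    have hle : ∀ x, F x ^ p ≤ U.indicator (fun _ => B ^ p) x := fun x => by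
      by_cases hx : x ∈ U
      · rw [indicator_of_mem hx]
        exact ENNReal.rpow_le_rpow (hFB x) hpq.nonneg
      · have hFx : F x = 0 := by
          rw [hF]
          exact Finset.sum_eq_zero fun i hi => indicator_of_notMem (fun h => hx (hS i hi h)) _
        simp [hFx, hpq.pos]
    refine ne_top_of_le_ne_top ?_ (lintegral_mono hle)
    rw [lintegral_indicator_const hU]
    exact ENNReal.mul_ne_top (ENNReal.rpow_ne_top_of_nonneg hpq.nonneg hBtop) hUtop.ne
  obtain ⟨g, hg⟩ : ∃ g : X → ℝ≥0∞, g = fun x => F x ^ (p - 1) := ⟨_, rfl⟩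
  have hgm : Measurable g := hg ▸ hFm.pow_const _
  have hgq : ∫⁻ x, g x ^ q ∂μ = ∫⁻ x, F x ^ p ∂μ := by
    simp_rw [hg, ← ENNReal.rpow_mul, hpq.sub_one_mul_conj]
  have hgtop : ∀ i ∈ S, (∫⁻ y in I i, g y ∂μ) / μ (I i) ≠ ⊤ := fun i _ =>
    ENNReal.div_ne_top (setLIntegral_ne_top_of_lintegral_rpow μ hpq.symm.lt.le
      (hgq ▸ hAtop) (htop i)) (h0 i)
  have hdual : ∫⁻ x, F x ^ p ∂μ = ∑ i ∈ S, a i * ((∫⁻ y in I i, g y ∂μ) / μ (I i)) := by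
    calc ∫⁻ x, F x ^ p ∂μ
        = ∫⁻ x, ∑ i ∈ S, (I i).indicator (fun y => a i / μ (I i) * g y) x ∂μ := by
          refine lintegral_congr fun x => ?_
          have hsplit : F x ^ p = F x * g x := by
            have h := ENNReal.rpow_add_of_nonneg (x := F x) 1 (p - 1) zero_le_one hp1.le
            rwa [add_sub_cancel, ENNReal.rpow_one, ← congrFun hg x] at h
          rw [hsplit, hF, Finset.sum_mul]
          refine Finset.sum_congr rfl fun i _ => ?_
          by_cases hx : x ∈ I i <;> simp [hx]
      _ = ∑ i ∈ S, a i * ((∫⁻ y in I i, g y ∂μ) / μ (I i)) := by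
          rw [lintegral_finsetSum _ fun i _ => (hgm.const_mul _).indicator (hI i)]
          refine Finset.sum_congr rfl fun i _ => ?_
          rw [lintegral_indicator (hI i), lintegral_const_mul _ hgm]
          simp only [div_eq_mul_inv]
          ring
  have hM := measurable_maxFn μ hI S g
  have hholder : ∫⁻ x in U, maxFn μ I S g x ∂μ
      ≤ μ U ^ (1 / p) * (C * ∫⁻ x, F x ^ p ∂μ) ^ (1 / q) := by
    have h := ENNReal.lintegral_mul_le_Lp_mul_Lq (μ.restrict U) hpq
      (aemeasurable_const (b := (1 : ℝ≥0∞))) hM.aemeasurable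
    simp only [Pi.mul_apply, one_mul, ENNReal.one_rpow, lintegral_one,
      Measure.restrict_apply_univ] at h
    refine h.trans ?_
    gcongr
    · exact hpq.symm.one_div_nonneg
    · rw [← hgq]
      exact (setLIntegral_le_lintegral _ _).trans (hmax S g hgm)
  have hfinal : ∫⁻ x, F x ^ p ∂μ
      ≤ (C ^ (1 / q) * N * μ U ^ (1 / p)) * (∫⁻ x, F x ^ p ∂μ) ^ (1 / q) := by
    calc ∫⁻ x, F x ^ p ∂μ
        ≤ N * ∫⁻ x in U, maxFn μ I S g x ∂μ :=
          hdual.trans_le (sum_mul_average_le μ hI hcar hU hUtop hS g hgtop)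
      _ ≤ N * (μ U ^ (1 / p) * (C * ∫⁻ x, F x ^ p ∂μ) ^ (1 / q)) := by gcongr
      _ = _ := by
          rw [ENNReal.mul_rpow_of_nonneg _ _ hpq.symm.one_div_nonneg]
          ring
  refine (le_rpow_of_le_mul_rpow hpq hAtop hfinal).trans_eq ?_
  rw [ENNReal.mul_rpow_of_nonneg _ _ hpq.nonneg, ← ENNReal.rpow_mul,
    one_div_mul_cancel hpq.ne_zero, ENNReal.rpow_one]

/-- The John–Nirenberg inequality for Carleson families, given the dual maximal theorem. -/
theorem lintegral_tsum_rpow_le [Countable ι] (μ : Measure X) {I : ι → Set X}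
    (hI : ∀ i, MeasurableSet (I i))
    (h0 : ∀ i, μ (I i) ≠ 0) (htop : ∀ i, μ (I i) ≠ ⊤) {p q : ℝ} (hpq : p.HolderConjugate q)
    {C : ℝ≥0∞} (hmax : MaxStrongType μ I q C)
    {a : ι → ℝ≥0∞} (ha : ∀ i, a i ≠ ⊤) {N : ℝ≥0∞}
    (hcar : ∀ V : Set X, MeasurableSet V → μ V < ⊤ →
      (∑' i, if I i ⊆ V then a i else 0) ≤ N * μ V)
    {U : Set X} (hU : MeasurableSet U) (hUtop : μ U < ⊤) :
    ∫⁻ x, (∑' i, if I i ⊆ U then (I i).indicator (fun _ => a i / μ (I i)) x else 0) ^ p ∂μ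
      ≤ (C ^ (1 / q) * N) ^ p * μ U := by
  have hsup : ∀ x, (∑' i, if I i ⊆ U then (I i).indicator (fun _ => a i / μ (I i)) x else 0) ^ p
      = ⨆ S : Finset ι, (∑ i ∈ S.filter (fun i => I i ⊆ U),
          (I i).indicator (fun _ => a i / μ (I i)) x) ^ p := fun x => by
    simp_rw [ENNReal.tsum_eq_iSup_sum, Finset.sum_filter]
    exact (ENNReal.orderIsoRpow p hpq.pos).map_iSup _
  simp_rw [hsup]
  rw [lintegral_iSup_directed]
  · exact iSup_le fun S => lintegral_sum_rpow_le μ hI h0 htop hpq hmax ha hcar hU hUtop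
      fun i hi => (Finset.mem_filter.1 hi).2
  · exact fun S => ((Finset.measurable_fun_sum _ fun i _ =>
      measurable_const.indicator (hI i)).pow_const p).aemeasurable
  · refine Monotone.directed_le fun S T hST x => ENNReal.rpow_le_rpow ?_ hpq.nonneg
    exact Finset.sum_le_sum_of_subset (Finset.filter_subset_filter _ hST)

end Embedding

section Dyadic

open Set

/-- The dyadic interval `[n 2^k, (n+1) 2^k)`, indexed by `(k, n)`. -/
noncomputable def dyInterval (r : ℤ × ℤ) : Set ℝ :=
  Ico ((r.2 : ℝ) * 2 ^ r.1) (((r.2 : ℝ) + 1) * 2 ^ r.1)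

lemma volume_dyInterval (r : ℤ × ℤ) : volume (dyInterval r) = ENNReal.ofReal (2 ^ r.1) := by
  rw [dyInterval, Real.volume_Ico]
  congr 1
  ring

lemma dyInterval_subset_or_disjoint {r s : ℤ × ℤ} (h : r.1 ≤ s.1) :
    dyInterval r ⊆ dyInterval s ∨ Disjoint (dyInterval r) (dyInterval s) := by
  obtain ⟨k, n⟩ := r
  obtain ⟨l, m⟩ := s
  obtain ⟨j, rfl⟩ := Int.le.dest h
  refine or_iff_not_imp_right.2 fun hdis => ?_
  obtain ⟨x, ⟨h1, h2⟩, ⟨h3, h4⟩⟩ := not_disjoint_iff.1 hdis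
  have hk : (0 : ℝ) < 2 ^ k := by positivity
  have hpow : (2 : ℝ) ^ (k + (j : ℤ)) = ((2 ^ j : ℤ) : ℝ) * 2 ^ k := by
    rw [zpow_add₀ two_ne_zero, zpow_natCast]
    push_cast
    ring
  simp only [hpow, ← mul_assoc] at h1 h2 h3 h4
  have ha : m * 2 ^ j ≤ n := by
    have := lt_of_mul_lt_mul_right (h3.trans_lt h2) hk.le
    exact Int.lt_add_one_iff.1 (by exact_mod_cast this)
  have hb : n + 1 ≤ (m + 1) * 2 ^ j := by
    have := lt_of_mul_lt_mul_right (h1.trans_lt h4) hk.le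
    exact Int.add_one_le_iff.2 (by exact_mod_cast this)
  refine Ico_subset_Ico ?_ ?_ <;> simp only [hpow, ← mul_assoc]
  · exact mul_le_mul_of_nonneg_right (by exact_mod_cast ha) hk.le
  · exact mul_le_mul_of_nonneg_right (by exact_mod_cast hb) hk.le

lemma dyInterval_nested (r s : ℤ × ℤ) : dyInterval r ⊆ dyInterval s ∨
    dyInterval s ⊆ dyInterval r ∨ Disjoint (dyInterval r) (dyInterval s) := by
  rcases le_total r.1 s.1 with h | h
  · exact (dyInterval_subset_or_disjoint h).imp_right Or.inr
  · exact Or.inr ((dyInterval_subset_or_disjoint h).imp_right fun hd => hd.symm)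

lemma measurableSet_dyInterval (r : ℤ × ℤ) : MeasurableSet (dyInterval r) := measurableSet_Ico

lemma volume_dyInterval_ne_zero (r : ℤ × ℤ) : volume (dyInterval r) ≠ 0 := by
  rw [volume_dyInterval]
  exact (ENNReal.ofReal_pos.2 (by positivity)).ne'

lemma volume_dyInterval_ne_top (r : ℤ × ℤ) : volume (dyInterval r) ≠ ⊤ := by
  rw [volume_dyInterval]
  exact ENNReal.ofReal_ne_top

lemma dyRect_eq_pi {d : ℕ} (k n : Fin d → ℤ) :
    dyRect k n = univ.pi fun j => dyInterval (k j, n j) := rfl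

lemma measurableSet_dyRect {d : ℕ} (k n : Fin d → ℤ) : MeasurableSet (dyRect k n) :=
  MeasurableSet.univ_pi fun _ => measurableSet_Ico

lemma volume_dyRect_ne_zero {d : ℕ} (k n : Fin d → ℤ) : volume (dyRect k n) ≠ 0 := by
  rw [dyRect_eq_pi, volume_pi_pi]
  exact Finset.prod_ne_zero_iff.2 fun j _ => volume_dyInterval_ne_zero _

lemma volume_dyRect_ne_top {d : ℕ} (k n : Fin d → ℤ) : volume (dyRect k n) ≠ ⊤ := by
  rw [dyRect_eq_pi, volume_pi_pi]
  exact ENNReal.prod_ne_top fun j _ => volume_dyInterval_ne_top _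

/-- The strong dyadic maximal theorem. -/
theorem maxStrongType_dyRect (d : ℕ) {q : ℝ} (hq : 1 < q) :
    MaxStrongType volume (fun r : (Fin d → ℤ) × (Fin d → ℤ) => dyRect r.1 r.2) q
      ((ENNReal.ofReal (q / (q - 1)) ^ q) ^ d) := by
  have hq0 : 0 ≤ q := zero_le_one.trans hq.le
  induction d with
  | zero =>
    intro S g _
    rw [pow_zero, one_mul]
    refine lintegral_mono fun x => ENNReal.rpow_le_rpow (iSup₂_le fun r _ => ?_) hq0
    refine (indicator_le_self _ _ x).trans ?_
    have hg : ∀ y, g y = g x := fun y => by rw [Subsingleton.elim y x]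
    simp only [hg, lintegral_const, Measure.restrict_apply_univ]
    exact (ENNReal.mul_div_cancel_right (volume_dyRect_ne_zero _ _)
      (volume_dyRect_ne_top _ _)).le
  | succ d ih =>
    have hone := maxStrongType_of_nested volume measurableSet_dyInterval dyInterval_nested
      volume_dyInterval_ne_zero volume_dyInterval_ne_top hq
    have hprod := hone.prod measurableSet_dyInterval
      (fun r : (Fin d → ℤ) × (Fin d → ℤ) => measurableSet_dyRect r.1 r.2)
      volume_dyInterval_ne_zero volume_dyInterval_ne_top hq0 ih
    rw [← pow_succ] at hprod
    refine hprod.of_measurePreserving (MeasurableEquiv.piFinSuccAbove (fun _ => ℝ) 0)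
      (volume_preserving_piFinSuccAbove (fun _ => ℝ) 0)
      (fun r => ((r.1 0, r.2 0), (fun j => r.1 j.succ, fun j => r.2 j.succ)))
      (fun r => ?_)
      (fun r => (measurableSet_dyInterval r.1).prod (measurableSet_dyRect r.2.1 r.2.2)) hq0
    ext x
    simp [dyRect_eq_pi, Fin.forall_fin_succ, MeasurableEquiv.piFinSuccAbove_apply,
      Fin.insertNthEquiv, Fin.tail]

end Dyadic

/-- **The Chang–Fefferman John–Nirenberg inequality for product Carleson measures.**
Let `α : {dyadic rectangles of ℝ^d} → [0,∞)` satisfy the product Carleson measure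
condition `∑_{R ⊆ U} α(R) ≤ N |U|` for all measurable sets `U` of finite measure.
Then for `1 < p < ∞` and every measurable `U` of finite measure,
`‖∑_{R ⊆ U} (α(R)/|R|) 1_R‖_p ≤ C_p N |U|^{1/p}`, stated in the equivalent form
`∫ (∑_{R ⊆ U} (α(R)/|R|) 1_R)^p ≤ (C_p N)^p |U|`. -/
theorem product_john_nirenberg (d : ℕ) (p : ℝ) (hp : 1 < p) :
    ∃ C : ℝ, 0 < C ∧
      ∀ α : (Fin d → ℤ) × (Fin d → ℤ) → ℝ, (∀ r, 0 ≤ α r) →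
      ∀ N : ℝ, 0 ≤ N →
        (∀ U : Set (Fin d → ℝ), MeasurableSet U → volume U < ⊤ →
          (∑' r : (Fin d → ℤ) × (Fin d → ℤ),
              if dyRect r.1 r.2 ⊆ U then ENNReal.ofReal (α r) else 0)
            ≤ ENNReal.ofReal N * volume U) →
        ∀ U : Set (Fin d → ℝ), MeasurableSet U → volume U < ⊤ →
          ∫⁻ x : Fin d → ℝ,
              (∑' r : (Fin d → ℤ) × (Fin d → ℤ),
                if dyRect r.1 r.2 ⊆ U
                then (dyRect r.1 r.2).indicator
                  (fun _ => ENNReal.ofReal (α r) / volume (dyRect r.1 r.2)) x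
                else 0) ^ p
            ≤ ENNReal.ofReal (C * N) ^ p * volume U := by
  have hpq := Real.HolderConjugate.conjExponent hp
  obtain ⟨K, hK⟩ : ∃ K : ℝ≥0∞, K = ((ENNReal.ofReal (p.conjExponent / (p.conjExponent - 1)) ^
    p.conjExponent) ^ d) ^ (1 / p.conjExponent) := ⟨_, rfl⟩
  have hKtop : K ≠ ⊤ := hK ▸ ENNReal.rpow_ne_top_of_nonneg hpq.symm.one_div_nonneg
    (ENNReal.pow_ne_top (ENNReal.rpow_ne_top_of_nonneg hpq.symm.nonneg ENNReal.ofReal_ne_top))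
  refine ⟨K.toReal + 1, by positivity, fun α _ N _ hcar U hU hUtop => ?_⟩
  refine (lintegral_tsum_rpow_le (I := fun r : (Fin d → ℤ) × (Fin d → ℤ) => dyRect r.1 r.2)
    (a := fun r => ENNReal.ofReal (α r)) volume (fun r => measurableSet_dyRect r.1 r.2)
    (fun r => volume_dyRect_ne_zero r.1 r.2) (fun r => volume_dyRect_ne_top r.1 r.2) hpq
    (maxStrongType_dyRect d hpq.symm.lt) (fun _ => ENNReal.ofReal_ne_top) hcar hU hUtop).trans ?_
  rw [← hK, ENNReal.ofReal_mul (by positivity)]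
  gcongr
  rw [ENNReal.le_ofReal_iff_toReal_le hKtop (by positivity)]
  linarith
end

section
/- Let Δ = {ε[2^k,2^{k+1}) : ε∈{±1}, k∈ℤ} be the lacunary dyadic intervals, and suppose the bounded function m : ℝ → ℂ has the form m = Σ_{ω∈Δ} a_ω 1_ω for real (or complex) coefficients a_ω. Then for every 1 < p < ∞ there is a constant C_p such that ‖A_m‖_{L^p(ℝ)→L^p(ℝ)} ≤ C_p sup_{ω∈Δ} |a_ω|. -/
open MeasureTheory Complex
open scoped ENNReal NNReal

/-- The Fourier transform `f̂(ξ) = ∫ f(x) e^{-i x ξ} dx`. -/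
noncomputable def ft (f : ℝ → ℂ) (ξ : ℝ) : ℂ :=
  ∫ x : ℝ, f x * Complex.exp (-(Complex.I * (x : ℂ) * (ξ : ℂ)))

/-- The Fourier multiplier operator `A_m f(x) = ∫ m(ξ) f̂(ξ) e^{i x ξ} dξ`. -/
noncomputable def multOp (m : ℝ → ℂ) (f : ℝ → ℂ) (x : ℝ) : ℂ :=
  ∫ ξ : ℝ, m ξ * ft f ξ * Complex.exp (Complex.I * (ξ : ℂ) * (x : ℂ))

/-- The lacunary (dyadic) interval `ε [2^k, 2^{k+1})`, for `ε = ±1` encoded as a `Bool`. -/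
noncomputable def lacI (k : ℤ) (ε : Bool) : Set ℝ :=
  if ε then Set.Ico ((2:ℝ) ^ k) ((2:ℝ) ^ (k + 1))
  else Set.Ioc (-(2:ℝ) ^ (k + 1)) (-(2:ℝ) ^ k)

namespace LacunaryMultiplier

section Burkholder

/-- The profile of the negative of Burkholder's function beyond the diagonal. -/
noncomputable def tailProfile (p s b y : ℝ) : ℝ :=
  s * p * b * (y ^ (p - 1) - y * b ^ (p - 2)) + (p - 2) * (y ^ p - b ^ p)

lemma mul_rpow_sub_two {p y : ℝ} (hp : 2 ≤ p) (hy : 0 ≤ y) :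
    y * y ^ (p - 2) = y ^ (p - 1) := by
  rcases hy.eq_or_lt with rfl | hy
  · rw [zero_mul, Real.zero_rpow (by linarith)]
  · rw [← Real.rpow_one_add' hy.le (by linarith)]; congr 1; ring

lemma tailProfile_deriv_nonneg {p s b y : ℝ} (hp : 2 ≤ p) (hs : s = 1 ∨ s = -1)
    (hb : 0 ≤ b) (hy : b < y) :
    0 ≤ s * p * b * ((p - 1) * y ^ (p - 2) - b ^ (p - 2)) + (p - 2) * (p * y ^ (p - 1)) := by
  have hy0 : 0 < y := lt_of_le_of_lt hb hy
  rcases hs with rfl | rfl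
  · have h1 : b ^ (p - 2) ≤ y ^ (p - 2) := Real.rpow_le_rpow hb hy.le (by linarith)
    have h2 : 0 ≤ y ^ (p - 2) := by positivity
    have h3 : 0 ≤ y ^ (p - 1) := by positivity
    have h4 : 0 ≤ (p - 1) * y ^ (p - 2) - b ^ (p - 2) := by nlinarith
    have h5 : 0 ≤ (p - 2) * (p * y ^ (p - 1)) :=
      mul_nonneg (by linarith) (mul_nonneg (by linarith) h3)
    have h6 : 0 ≤ 1 * p * b := by nlinarith
    nlinarith [mul_nonneg h6 h4]
  · have hp1 : 0 < p - 1 := by linarith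
    have key := Real.geom_mean_le_arith_mean2_weighted (w₁ := (p - 2) / (p - 1))
      (w₂ := 1 / (p - 1)) (p₁ := y ^ (p - 1)) (p₂ := b ^ (p - 1))
      (div_nonneg (by linarith) hp1.le) (by positivity) (by positivity) (by positivity)
      (by field_simp; ring)
    rw [← Real.rpow_mul hy0.le, ← Real.rpow_mul hb, mul_div_cancel₀ _ hp1.ne',
      mul_div_cancel₀ _ hp1.ne', Real.rpow_one] at key
    have hbb : b * b ^ (p - 2) = b ^ (p - 1) := mul_rpow_sub_two hp hb
    have h7 : (p - 1) * (b * y ^ (p - 2)) ≤ (p - 2) * y ^ (p - 1) + b ^ (p - 1) := by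
      have := mul_le_mul_of_nonneg_left key hp1.le
      calc (p - 1) * (b * y ^ (p - 2)) = (p - 1) * (y ^ (p - 2) * b) := by ring
        _ ≤ _ := this
        _ = _ := by field_simp
    have : -1 * p * b * ((p - 1) * y ^ (p - 2) - b ^ (p - 2)) + (p - 2) * (p * y ^ (p - 1))
        = p * ((p - 2) * y ^ (p - 1) + b * b ^ (p - 2) - (p - 1) * (b * y ^ (p - 2))) := by ring
    rw [this, hbb]
    exact mul_nonneg (by linarith) (by linarith)

lemma tailProfile_hasDerivAt {p s b y : ℝ} (hy : 0 < y) :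
    HasDerivAt (tailProfile p s b)
      (s * p * b * ((p - 1) * y ^ (p - 2) - b ^ (p - 2)) + (p - 2) * (p * y ^ (p - 1))) y := by
  unfold tailProfile
  have h1 : HasDerivAt (fun y : ℝ => y ^ (p - 1)) ((p - 1) * y ^ (p - 2)) y := by
    have := Real.hasDerivAt_rpow_const (p := p - 1) (Or.inl hy.ne')
    rwa [show p - 1 - 1 = p - 2 by ring] at this
  have h2 : HasDerivAt (fun y : ℝ => y ^ p) (p * y ^ (p - 1)) y :=
    Real.hasDerivAt_rpow_const (Or.inl hy.ne')
  have h3 := ((h1.sub ((hasDerivAt_id y).mul_const (b ^ (p - 2)))).const_mul (s * p * b)).add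
    ((h2.sub_const (b ^ p)).const_mul (p - 2))
  exact h3.congr_deriv (by simp)

lemma continuous_tailProfile {p s b : ℝ} (hp : 2 ≤ p) : Continuous (tailProfile p s b) := by
  unfold tailProfile
  have h1 : Continuous fun y : ℝ => y ^ (p - 1) := Real.continuous_rpow_const (by linarith)
  have h2 : Continuous fun y : ℝ => y ^ p := Real.continuous_rpow_const (by linarith)
  fun_prop

lemma tailProfile_monotoneOn {p s b : ℝ} (hp : 2 ≤ p) (hs : s = 1 ∨ s = -1) (hb : 0 ≤ b) :
    MonotoneOn (tailProfile p s b) (Set.Ici b) := by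
  apply monotoneOn_of_deriv_nonneg (convex_Ici b) (continuous_tailProfile hp).continuousOn
  · intro y hy
    rw [interior_Ici] at hy
    exact (tailProfile_hasDerivAt (lt_of_le_of_lt hb hy)).differentiableAt.differentiableWithinAt
  · intro y hy
    rw [interior_Ici] at hy
    rw [(tailProfile_hasDerivAt (lt_of_le_of_lt hb hy)).deriv]
    exact tailProfile_deriv_nonneg hp hs hb hy

lemma tailProfile_convexOn {p s b : ℝ} (hp : 2 ≤ p) (hs : s = 1 ∨ s = -1) (hb : 0 ≤ b) :
    ConvexOn ℝ (Set.Ici b) (tailProfile p s b) := by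
  apply convexOn_of_hasDerivWithinAt2_nonneg (convex_Ici b)
    (continuous_tailProfile hp).continuousOn
    (f' := fun y => s * p * b * ((p - 1) * y ^ (p - 2) - b ^ (p - 2)) +
      (p - 2) * (p * y ^ (p - 1)))
    (f'' := fun y => p * (p - 1) * (p - 2) * (y ^ (p - 3) * (y + s * b)))
  · intro y hy
    rw [interior_Ici] at hy
    exact (tailProfile_hasDerivAt (lt_of_le_of_lt hb hy)).hasDerivWithinAt
  · intro y hy
    rw [interior_Ici] at hy
    have hy0 : 0 < y := lt_of_le_of_lt hb hy
    have h1 : HasDerivAt (fun y : ℝ => y ^ (p - 2)) ((p - 2) * y ^ (p - 3)) y := by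
      have := Real.hasDerivAt_rpow_const (p := p - 2) (Or.inl hy0.ne')
      rwa [show p - 2 - 1 = p - 3 by ring] at this
    have h2 : HasDerivAt (fun y : ℝ => y ^ (p - 1)) ((p - 1) * y ^ (p - 2)) y := by
      have := Real.hasDerivAt_rpow_const (p := p - 1) (Or.inl hy0.ne')
      rwa [show p - 1 - 1 = p - 2 by ring] at this
    have h3 := (((h1.const_mul (p - 1)).sub_const (b ^ (p - 2))).const_mul (s * p * b)).add
      ((h2.const_mul p).const_mul (p - 2))
    have h4 : y ^ (p - 2) = y ^ (p - 3) * y := by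
      rw [← Real.rpow_add_one hy0.ne']; congr 1; ring
    refine (h3.congr_deriv ?_).hasDerivWithinAt
    rw [h4]; ring
  · intro y hy
    rw [interior_Ici] at hy
    have hy' : b < y := hy
    have hy0 : 0 < y := lt_of_le_of_lt hb hy
    have : 0 ≤ y + s * b := by rcases hs with rfl | rfl <;> linarith
    have h1 : 0 ≤ p * (p - 1) * (p - 2) :=
      mul_nonneg (mul_nonneg (by linarith) (by linarith)) (by linarith)
    positivity

/-- Burkholder's function in the diagonal coordinates `a = x + h`, `b = x - h`. -/
noncomputable def burkholder (p a b : ℝ) : ℝ :=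
  -(p * (a * b) * (max |a| |b|) ^ (p - 2) + (p - 2) * (max |a| |b|) ^ p)

lemma burkholder_comm (p a b : ℝ) : burkholder p a b = burkholder p b a := by
  unfold burkholder; rw [max_comm, mul_comm a b]

lemma burkholder_neg (p a b : ℝ) : burkholder p (-a) (-b) = burkholder p a b := by
  unfold burkholder; rw [abs_neg, abs_neg, neg_mul_neg]

lemma burkholder_eq_tailProfile {p a b : ℝ} (hp : 2 ≤ p) (hb : 0 ≤ b) :
    -burkholder p a b = p * b * b ^ (p - 2) * a + (p - 2) * b ^ p
      + tailProfile p 1 b (max a b) + tailProfile p (-1) b (max (-a) b) := by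
  unfold burkholder tailProfile
  rw [abs_of_nonneg hb]
  rcases le_total b a with h | h
  · rw [abs_of_nonneg (hb.trans h), max_eq_left h, max_eq_right (by linarith : -a ≤ b),
      ← mul_rpow_sub_two hp (hb.trans h), ← mul_rpow_sub_two hp hb]
    ring
  · rcases le_total b (-a) with h' | h'
    · rw [abs_of_nonpos (by linarith), max_eq_right h, max_eq_left h', ← mul_rpow_sub_two hp hb,
        ← mul_rpow_sub_two hp (by linarith : 0 ≤ -a)]
      ring
    · rw [max_eq_right (abs_le.2 ⟨by linarith, h⟩), max_eq_right h, max_eq_right h', ← mul_rpow_sub_two hp hb]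
      ring

lemma burkholder_convexOn_of_nonneg {p b : ℝ} (hp : 2 ≤ p) (hb : 0 ≤ b) :
    ConvexOn ℝ Set.univ fun a => -burkholder p a b := by
  have hmem : ∀ y : ℝ, max y b ∈ Set.Ici b := fun y => le_max_right y b
  have hcomp : ∀ (s : ℝ), (s = 1 ∨ s = -1) → ∀ f : ℝ → ℝ, ConvexOn ℝ Set.univ f →
      ConvexOn ℝ Set.univ fun a => tailProfile p s b (max (f a) b) := by
    intro s hs f hf
    refine ⟨convex_univ, fun x _ y _ α β hα hβ hαβ => ?_⟩
    have h1 := (tailProfile_convexOn hp hs hb).2 (hmem (f x)) (hmem (f y))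
      hα hβ hαβ
    refine le_trans (tailProfile_monotoneOn hp hs hb (hmem _) ?_ ?_) h1
    · exact (convex_Ici b) (hmem (f x)) (hmem (f y)) hα hβ hαβ
    · have h2 := (hf.sup (convexOn_const b convex_univ)).2 (Set.mem_univ x) (Set.mem_univ y)
        hα hβ hαβ
      simpa using h2
  have h1 := hcomp 1 (Or.inl rfl) (fun a => a) (convexOn_id convex_univ)
  have h2 := hcomp (-1) (Or.inr rfl) (fun a => -a) (concaveOn_id convex_univ).neg
  have h3 : ConvexOn ℝ Set.univ fun a : ℝ => p * b * b ^ (p - 2) * a :=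
    (LinearMap.mulLeft ℝ (p * b * b ^ (p - 2))).convexOn convex_univ
  have := ((h3.add (convexOn_const ((p - 2) * b ^ p) convex_univ)).add h1).add h2
  refine this.congr fun a _ => ?_
  simp [burkholder_eq_tailProfile hp hb]

/-- Burkholder's function is separately concave in the diagonal coordinates. -/
lemma burkholder_convexOn {p : ℝ} (b : ℝ) (hp : 2 ≤ p) :
    ConvexOn ℝ Set.univ fun a => -burkholder p a b := by
  rcases le_total 0 b with hb | hb
  · exact burkholder_convexOn_of_nonneg hp hb
  · have h := (burkholder_convexOn_of_nonneg hp (neg_nonneg.2 hb)).comp_linearMap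
      (-LinearMap.id : ℝ →ₗ[ℝ] ℝ)
    refine (h.congr fun a _ => ?_)
    simp [burkholder_neg]

lemma burkholder_eq {p : ℝ} (x h : ℝ) (hp : 2 ≤ p) :
    burkholder p (x + h) (x - h) = 2 * (|h| - (p - 1) * |x|) * (|x| + |h|) ^ (p - 1) := by
  have hmax : max |x + h| |x - h| = |x| + |h| := by
    apply le_antisymm
    · exact max_le (abs_add_le x h) (abs_sub x h)
    · rcases le_total 0 x with hx | hx <;> rcases le_total 0 h with hh | hh <;>
        simp only [abs_of_nonneg, abs_of_nonpos, hx, hh] <;> rw [le_max_iff]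
      · left; exact le_abs_self _
      · right; rw [← sub_eq_add_neg]; exact le_abs_self _
      · right; rw [abs_sub_comm]; exact le_trans (by linarith) (le_abs_self _)
      · left; rw [← abs_neg]; exact le_trans (by linarith) (le_abs_self _)
  have hM : 0 ≤ |x| + |h| := by positivity
  have aux2 : (|x| + |h|) ^ p = (|x| + |h|) * (|x| + |h|) ^ (p - 1) := by
    rw [← Real.rpow_one_add' hM (by linarith)]; congr 1; ring
  unfold burkholder
  rw [hmax, aux2, ← mul_rpow_sub_two hp hM]
  have hx : x ^ 2 = |x| ^ 2 := (sq_abs x).symm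
  have hh : h ^ 2 = |h| ^ 2 := (sq_abs h).symm
  have : (x + h) * (x - h) = |x| ^ 2 - |h| ^ 2 := by rw [← hx, ← hh]; ring
  rw [this]; ring

lemma burkholder_lower {p : ℝ} (hp : 2 ≤ p) : ∃ C : ℝ, 0 ≤ C ∧ ∀ x h : ℝ,
    |h| ^ p - C * |x| ^ p ≤ burkholder p (x + h) (x - h) := by
  have hp1 : 0 < p - 1 := by linarith
  refine ⟨(2 * (p - 1)) ^ p + 2 * (p - 1) * (1 + 2 * (p - 1)) ^ (p - 1), by positivity,
    fun x h => ?_⟩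
  rw [burkholder_eq x h hp]
  have hx := abs_nonneg x
  have hh := abs_nonneg h
  have aux : ∀ y : ℝ, 0 ≤ y → y * y ^ (p - 1) = y ^ p := by
    intro y hy
    rw [← Real.rpow_one_add' hy (by linarith)]; congr 1; ring
  have hxp : 0 ≤ |x| ^ p := by positivity
  rcases le_total (2 * (p - 1) * |x|) |h| with hc | hc
  · have h1 : |h| ^ (p - 1) ≤ (|x| + |h|) ^ (p - 1) :=
      Real.rpow_le_rpow hh (by linarith) hp1.le
    have h2 : |h| * |h| ^ (p - 1) ≤ 2 * (|h| - (p - 1) * |x|) * (|x| + |h|) ^ (p - 1) :=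
      mul_le_mul (by linarith) h1 (by positivity) (by nlinarith)
    rw [aux _ hh] at h2
    have : 0 ≤ ((2 * (p - 1)) ^ p + 2 * (p - 1) * (1 + 2 * (p - 1)) ^ (p - 1)) * |x| ^ p := by
      positivity
    linarith
  · have h1 : |h| ^ p ≤ (2 * (p - 1)) ^ p * |x| ^ p := by
      rw [← Real.mul_rpow (by positivity) hx]
      exact Real.rpow_le_rpow hh hc (by linarith)
    have h2 : (|x| + |h|) ^ (p - 1) ≤ (1 + 2 * (p - 1)) ^ (p - 1) * |x| ^ (p - 1) := by
      rw [← Real.mul_rpow (by positivity) hx]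
      exact Real.rpow_le_rpow (by positivity) (by linarith) hp1.le
    have h3 : 0 ≤ (|x| + |h|) ^ (p - 1) := by positivity
    have h4 : (p - 1) * |x| * (|x| + |h|) ^ (p - 1) ≤
        (p - 1) * |x| * ((1 + 2 * (p - 1)) ^ (p - 1) * |x| ^ (p - 1)) :=
      mul_le_mul_of_nonneg_left h2 (by positivity)
    have h5 : (p - 1) * |x| * ((1 + 2 * (p - 1)) ^ (p - 1) * |x| ^ (p - 1)) =
        (p - 1) * (1 + 2 * (p - 1)) ^ (p - 1) * |x| ^ p := by rw [← aux _ hx]; ring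
    nlinarith [mul_nonneg hh h3]

end Burkholder

section Bellman

/-- A convex function of two real variables whose perturbations by `± u v` stay convex. -/
lemma exists_real_bellman {p q : ℝ} (hpq : p.HolderConjugate q) (hp : 2 ≤ p) :
    ∃ (Q : ℝ × ℝ → ℝ) (C : ℝ), 0 ≤ C ∧ (∀ z, 0 ≤ Q z) ∧
      (∀ z, Q z ≤ C * (|z.1| ^ p + |z.2| ^ q)) ∧
      ConvexOn ℝ Set.univ (fun z : ℝ × ℝ => Q z + z.1 * z.2) ∧
      ConvexOn ℝ Set.univ (fun z : ℝ × ℝ => Q z - z.1 * z.2) := by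
  obtain ⟨C, hC, hlow⟩ := burkholder_lower hp
  have hbd : ∀ u v h : ℝ, h * v - burkholder p (u + h) (u - h) ≤ C * |u| ^ p + |v| ^ q := by
    intro u v h
    have h1 := Real.young_inequality h v hpq
    have h2 : |h| ^ p / p ≤ |h| ^ p := div_le_self (by positivity) (by linarith)
    have h3 : |v| ^ q / q ≤ |v| ^ q := div_le_self (by positivity) hpq.symm.lt.le
    linarith [hlow u h]
  have hsup : ∀ u v : ℝ,
      BddAbove (Set.range fun h : ℝ => h * v - burkholder p (u + h) (u - h)) := by
    intro u v
    exact ⟨C * |u| ^ p + |v| ^ q, by rintro _ ⟨h, rfl⟩; exact hbd u v h⟩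
  let Q : ℝ × ℝ → ℝ := fun z => ⨆ h : ℝ, (h * z.2 - burkholder p (z.1 + h) (z.1 - h))
  have hconv : ∀ s : ℝ, (s = 1 ∨ s = -1) →
      ConvexOn ℝ Set.univ (fun z : ℝ × ℝ => Q z + s * (z.1 * z.2)) := by
    intro s hs
    refine ⟨convex_univ, fun x _ y _ α β hα hβ hαβ => ?_⟩
    have hss : s * s = 1 := by rcases hs with rfl | rfl <;> norm_num
    rw [← le_sub_iff_add_le]
    refine ciSup_le fun h => ?_
    set w := α • x + β • y with hw
    have hw1 : w.1 = α * x.1 + β * y.1 := rfl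
    have hw2 : w.2 = α * x.2 + β * y.2 := rfl
    set k := h + s * w.1 with hk
    have hx : (k - s * x.1) * x.2 - burkholder p (x.1 + (k - s * x.1)) (x.1 - (k - s * x.1)) ≤
        Q x := le_ciSup (hsup x.1 x.2) (k - s * x.1)
    have hy : (k - s * y.1) * y.2 - burkholder p (y.1 + (k - s * y.1)) (y.1 - (k - s * y.1)) ≤
        Q y := le_ciSup (hsup y.1 y.2) (k - s * y.1)
    have hcv : ∀ t : ℝ, burkholder p (t + (k - s * t)) (t - (k - s * t)) =
        burkholder p (2 * t - s * k) (s * k) := by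
      intro t
      rcases hs with rfl | rfl
      · rw [burkholder_comm]; congr 1 <;> ring
      · congr 1 <;> ring
    have hB := (burkholder_convexOn (p := p) (s * k) hp).2
      (Set.mem_univ (2 * x.1 - s * k)) (Set.mem_univ (2 * y.1 - s * k)) hα hβ hαβ
    have harg : α • (2 * x.1 - s * k) + β • (2 * y.1 - s * k) = 2 * w.1 - s * k := by
      simp only [smul_eq_mul, hw1]
      linear_combination (-s * k) * hαβ
    rw [harg] at hB
    simp only [smul_eq_mul] at hB ⊢
    rw [hcv] at hx hy
    have hh : h = k - s * w.1 := by rw [hk]; ring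
    rw [hh, hcv]
    have hx' := mul_le_mul_of_nonneg_left hx hα
    have hy' := mul_le_mul_of_nonneg_left hy hβ
    have hlin : k * w.2 = α * (k * x.2) + β * (k * y.2) := by rw [hw2]; ring
    nlinarith [hB, hx', hy', hlin]
  refine ⟨Q, C + 1, by linarith, fun z => ?_, fun z => ?_, ?_, ?_⟩
  · refine le_trans ?_ (le_ciSup (hsup z.1 z.2) 0)
    have h2 : 0 ≤ |z.1| ^ (p - 1) := by positivity
    have := burkholder_eq z.1 0 hp
    rw [this, abs_zero, add_zero]
    have h3 : 0 ≤ (p - 1) * |z.1| := mul_nonneg (by linarith) (abs_nonneg _)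
    nlinarith [mul_nonneg h3 h2]
  · refine le_trans (ciSup_le fun h => hbd z.1 z.2 h) ?_
    have h1 : 0 ≤ |z.1| ^ p := by positivity
    have h2 : 0 ≤ |z.2| ^ q := by positivity
    nlinarith
  · simpa using hconv 1 (Or.inl rfl)
  · simpa [sub_eq_add_neg] using hconv (-1) (Or.inr rfl)

end Bellman

section ComplexBellman

/-- A Bellman function for the bilinear form `(z, w) ↦ z w` at the exponents `p`, `q`. -/
structure IsBellman (p q C : ℝ) (Q : ℂ × ℂ → ℝ) : Prop where
  const_nonneg : 0 ≤ C
  nonneg : ∀ z, 0 ≤ Q z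
  le : ∀ z, Q z ≤ C * (‖z.1‖ ^ p + ‖z.2‖ ^ q)
  convex_add_re : ConvexOn ℝ Set.univ fun z : ℂ × ℂ => Q z + (z.1 * z.2).re
  convex_sub_re : ConvexOn ℝ Set.univ fun z : ℂ × ℂ => Q z - (z.1 * z.2).re
  convex_add_im : ConvexOn ℝ Set.univ fun z : ℂ × ℂ => Q z + (z.1 * z.2).im
  convex_sub_im : ConvexOn ℝ Set.univ fun z : ℂ × ℂ => Q z - (z.1 * z.2).im

lemma IsBellman.swap {p q C : ℝ} {Q : ℂ × ℂ → ℝ} (h : IsBellman p q C Q) :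
    IsBellman q p C (fun z => Q z.swap) := by
  have key : ∀ F : ℂ × ℂ → ℝ, ConvexOn ℝ Set.univ F →
      ConvexOn ℝ Set.univ fun z : ℂ × ℂ => F z.swap := by
    intro F hF
    exact hF.comp_linearMap (LinearEquiv.prodComm ℝ ℂ ℂ).toLinearMap
  refine ⟨h.const_nonneg, fun z => h.nonneg _, fun z => ?_, ?_, ?_, ?_, ?_⟩
  · have := h.le z.swap
    simpa [add_comm] using this
  · simpa [mul_comm] using key _ h.convex_add_re
  · simpa [mul_comm] using key _ h.convex_sub_re
  · have := key _ h.convex_add_im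
    refine this.congr fun z _ => ?_
    simp only [Prod.fst_swap, Prod.snd_swap, mul_comm]
  · have := key _ h.convex_sub_im
    refine this.congr fun z _ => ?_
    simp only [Prod.fst_swap, Prod.snd_swap, mul_comm]

lemma exists_isBellman_of_two_le {p q : ℝ} (hpq : p.HolderConjugate q) (hp : 2 ≤ p) :
    ∃ C Q, IsBellman p q C Q := by
  obtain ⟨Q, C, hC, h0, hle, hadd, hsub⟩ := exists_real_bellman hpq hp
  have hQ : ConvexOn ℝ Set.univ Q := by
    have := (hadd.add hsub).smul (by norm_num : (0 : ℝ) ≤ 1 / 2)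
    refine this.congr fun z _ => ?_
    simp; ring
  let L : (ℂ →ₗ[ℝ] ℝ) → (ℂ →ₗ[ℝ] ℝ) → (ℂ × ℂ →ₗ[ℝ] ℝ × ℝ) := fun a b => a.prodMap b
  have hq := hpq.symm.pos
  have habs : ∀ (a b : ℂ →ₗ[ℝ] ℝ), (∀ z, |a z| ≤ ‖z‖) → (∀ z, |b z| ≤ ‖z‖) → ∀ z : ℂ × ℂ,
      Q (L a b z) ≤ C * (‖z.1‖ ^ p + ‖z.2‖ ^ q) := by
    intro a b ha hb z
    refine (hle _).trans (mul_le_mul_of_nonneg_left (add_le_add ?_ ?_) hC)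
    · exact Real.rpow_le_rpow (abs_nonneg _) (ha _) (by linarith)
    · exact Real.rpow_le_rpow (abs_nonneg _) (hb _) hq.le
  let re := Complex.reLm
  let im := Complex.imLm
  have hre : ∀ z, |re z| ≤ ‖z‖ := Complex.abs_re_le_norm
  have him : ∀ z, |im z| ≤ ‖z‖ := Complex.abs_im_le_norm
  refine ⟨4 * C, fun z => Q (L re re z) + Q (L im im z) + Q (L re im z) + Q (L im re z),
    by linarith, fun z => ?_, fun z => ?_, ?_, ?_, ?_, ?_⟩
  · have := h0 (L re re z); have := h0 (L im im z); have := h0 (L re im z)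
    have := h0 (L im re z)
    positivity
  · have := habs re re hre hre z; have := habs im im him him z
    have := habs re im hre him z; have := habs im re him hre z
    linarith
  · refine ((((hadd.comp_linearMap (L re re)).add (hsub.comp_linearMap (L im im))).add
      (hQ.comp_linearMap (L re im))).add (hQ.comp_linearMap (L im re))).congr fun z _ => ?_
    simp [L, re, im]; ring
  · refine ((((hsub.comp_linearMap (L re re)).add (hadd.comp_linearMap (L im im))).add
      (hQ.comp_linearMap (L re im))).add (hQ.comp_linearMap (L im re))).congr fun z _ => ?_
    simp [L, re, im]; ring
  · refine ((((hQ.comp_linearMap (L re re)).add (hQ.comp_linearMap (L im im))).add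
      (hadd.comp_linearMap (L re im))).add (hadd.comp_linearMap (L im re))).congr fun z _ => ?_
    simp [L, re, im]; ring
  · refine ((((hQ.comp_linearMap (L re re)).add (hQ.comp_linearMap (L im im))).add
      (hsub.comp_linearMap (L re im))).add (hsub.comp_linearMap (L im re))).congr fun z _ => ?_
    simp [L, re, im]; ring

lemma exists_isBellman {p q : ℝ} (hpq : p.HolderConjugate q) : ∃ C Q, IsBellman p q C Q := by
  rcases le_total 2 p with hp | hp
  · exact exists_isBellman_of_two_le hpq hp
  · have hq : 2 ≤ q := by
      have h1 := hpq.mul_eq_add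
      have := hpq.lt
      nlinarith [hpq.symm.pos]
    obtain ⟨C, Q, h⟩ := exists_isBellman_of_two_le hpq.symm hq
    exact ⟨C, _, h.swap⟩

lemma IsBellman.continuous {p q C : ℝ} {Q : ℂ × ℂ → ℝ} (h : IsBellman p q C Q) :
    Continuous Q := by
  have h1 := h.convex_add_re.continuousOn isOpen_univ
  rw [continuousOn_univ] at h1
  have h2 : Continuous fun z : ℂ × ℂ => (z.1 * z.2).re := by fun_prop
  exact (h1.sub h2).congr fun z => by simp

end ComplexBellman

section TestFunctions

/-- Measurable, integrable and bounded functions. -/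
structure IsTest (f : ℝ → ℂ) : Prop where
  measurable : Measurable f
  integrable : Integrable f
  bounded : ∃ B, ∀ x, ‖f x‖ ≤ B

lemma IsTest.add {f g : ℝ → ℂ} (hf : IsTest f) (hg : IsTest g) : IsTest fun x => f x + g x := by
  obtain ⟨B, hB⟩ := hf.bounded
  obtain ⟨D, hD⟩ := hg.bounded
  exact ⟨hf.measurable.add hg.measurable, hf.integrable.add hg.integrable, B + D, fun x =>
    (norm_add_le _ _).trans (add_le_add (hB x) (hD x))⟩

lemma IsTest.bdd_mul {c f : ℝ → ℂ} (hf : IsTest f) (hc : Measurable c) {D : ℝ}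
    (hD : ∀ x, ‖c x‖ ≤ D) : IsTest fun x => c x * f x := by
  obtain ⟨B, hB⟩ := hf.bounded
  refine ⟨hc.mul hf.measurable, hf.integrable.bdd_mul hc.aestronglyMeasurable
    (Filter.Eventually.of_forall hD), D * B, fun x => ?_⟩
  rw [norm_mul]
  exact mul_le_mul (hD x) (hB x) (norm_nonneg _) ((norm_nonneg _).trans (hD x))

lemma IsTest.const_mul {f : ℝ → ℂ} (hf : IsTest f) (c : ℂ) : IsTest fun x => c * f x :=
  hf.bdd_mul measurable_const fun _ => le_rfl

lemma IsTest.sub {f g : ℝ → ℂ} (hf : IsTest f) (hg : IsTest g) : IsTest fun x => f x - g x := by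
  have := hf.add (hg.const_mul (-1))
  simpa [sub_eq_add_neg] using this

lemma isTest_zero : IsTest fun _ => 0 :=
  ⟨measurable_const, integrable_zero _ _ _, 0, by simp⟩

lemma IsTest.sum {ι : Type*} (s : Finset ι) {f : ι → ℝ → ℂ} (hf : ∀ i ∈ s, IsTest (f i)) :
    IsTest fun x => ∑ i ∈ s, f i x := by
  classical
  induction s using Finset.induction_on with
  | empty => simpa using isTest_zero
  | insert i s hi ih =>
    simp only [Finset.sum_insert hi]
    exact (hf i (Finset.mem_insert_self i s)).add
      (ih fun j hj => hf j (Finset.mem_insert_of_mem hj))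

lemma IsTest.mul {f g : ℝ → ℂ} (hf : IsTest f) (hg : IsTest g) : IsTest fun x => f x * g x := by
  obtain ⟨B, hB⟩ := hf.bounded
  exact hg.bdd_mul hf.measurable hB

lemma IsTest.comp_neg {f : ℝ → ℂ} (hf : IsTest f) : IsTest fun x => f (-x) := by
  obtain ⟨B, hB⟩ := hf.bounded
  exact ⟨hf.measurable.comp measurable_neg, hf.integrable.comp_neg, B, fun x => hB _⟩

lemma IsTest.norm_rpow_integrable {f : ℝ → ℂ} (hf : IsTest f) {p : ℝ} (hp : 1 ≤ p) :
    Integrable fun x => ‖f x‖ ^ p := by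
  obtain ⟨B, hB⟩ := hf.bounded
  have hB0 : 0 ≤ B := (norm_nonneg _).trans (hB 0)
  refine (hf.integrable.norm.const_mul (B ^ (p - 1))).mono'
    (hf.measurable.norm.pow_const p).aestronglyMeasurable (Filter.Eventually.of_forall fun x => ?_)
  rw [Real.norm_of_nonneg (by positivity)]
  have : ‖f x‖ ^ p = ‖f x‖ ^ (p - 1) * ‖f x‖ := by
    rw [← Real.rpow_add_one' (norm_nonneg _) (by linarith)]; congr 1; ring
  rw [this]
  exact mul_le_mul_of_nonneg_right
    (Real.rpow_le_rpow (norm_nonneg _) (hB x) (by linarith)) (norm_nonneg _)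

end TestFunctions

section Averages

variable {E : Type*} [NormedAddCommGroup E] [NormedSpace ℝ E]

set_option linter.unusedSectionVars false

/-- The average of the translates of `f` with respect to `μ`. -/
noncomputable def avg (μ : Measure ℝ) (f : ℝ → E) (x : ℝ) : E := ∫ y, f (x - y) ∂μ

lemma integrable_comp_sub_prod (μ : Measure ℝ) [IsProbabilityMeasure μ] {F : ℝ → E}
    (hF : StronglyMeasurable F) (hi : Integrable F) :
    Integrable (fun z : ℝ × ℝ => F (z.1 - z.2)) (volume.prod μ) := by
  have hm : StronglyMeasurable fun z : ℝ × ℝ => F (z.1 - z.2) :=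
    hF.comp_measurable (measurable_fst.sub measurable_snd)
  rw [integrable_prod_iff' hm.aestronglyMeasurable]
  refine ⟨Filter.Eventually.of_forall fun y => hi.comp_sub_right y, ?_⟩
  simp only [integral_sub_right_eq_self (fun x => ‖F x‖)]
  exact integrable_const _

lemma integrable_avg (μ : Measure ℝ) [IsProbabilityMeasure μ] {F : ℝ → E}
    (hF : StronglyMeasurable F) (hi : Integrable F) : Integrable (avg μ F) :=
  (integrable_comp_sub_prod μ hF hi).integral_prod_left

lemma integral_avg [CompleteSpace E] (μ : Measure ℝ) [IsProbabilityMeasure μ] {F : ℝ → E}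
    (hF : StronglyMeasurable F) (hi : Integrable F) : ∫ x, avg μ F x = ∫ x, F x := by
  calc ∫ x, avg μ F x = ∫ y, ∫ x, F (x - y) ∂volume ∂μ :=
        integral_integral_swap (f := fun x y => F (x - y)) (integrable_comp_sub_prod μ hF hi)
    _ = ∫ _, ∫ x, F x ∂volume ∂μ :=
        integral_congr_ae (Filter.Eventually.of_forall fun y => integral_sub_right_eq_self F y)
    _ = ∫ x, F x := by simp

lemma IsTest.avg (μ : Measure ℝ) [IsProbabilityMeasure μ] {f : ℝ → ℂ} (hf : IsTest f) :
    IsTest (avg μ f) := by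
  obtain ⟨B, hB⟩ := hf.bounded
  refine ⟨?_, integrable_avg μ hf.measurable.stronglyMeasurable hf.integrable, B, fun x => ?_⟩
  · have hm : Measurable (Function.uncurry fun x y => f (x - y)) :=
      hf.measurable.comp (measurable_fst.sub measurable_snd)
    exact hm.stronglyMeasurable.integral_prod_right.measurable
  · refine (norm_integral_le_of_norm_le_const (Filter.Eventually.of_forall fun y =>
      hB (x - y))).trans ?_
    simp

lemma IsTest.integrable_translate (μ : Measure ℝ) [IsProbabilityMeasure μ] {f : ℝ → ℂ}
    (hf : IsTest f) (x : ℝ) : Integrable (fun y => f (x - y)) μ := by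
  obtain ⟨B, hB⟩ := hf.bounded
  exact Integrable.of_bound (hf.measurable.comp (measurable_const.sub
    measurable_id)).aestronglyMeasurable B (Filter.Eventually.of_forall fun y => hB _)

/-- Jensen's inequality for the Bellman function along an averaging operator. -/
lemma IsBellman.norm_avg_mul_sub_le {p q C : ℝ} {Q : ℂ × ℂ → ℝ} (h : IsBellman p q C Q)
    (hp : 1 ≤ p) (hq : 1 ≤ q)
    (μ : Measure ℝ) [IsProbabilityMeasure μ] {f g : ℝ → ℂ} (hf : IsTest f) (hg : IsTest g)
    (x : ℝ) :
    ‖avg μ (fun x => f x * g x) x - avg μ f x * avg μ g x‖ ≤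
      2 * (avg μ (fun x => Q (f x, g x)) x - Q (avg μ f x, avg μ g x)) := by
  have hpair : Integrable (fun y => (f (x - y), g (x - y))) μ :=
    (hf.integrable_translate μ x).prodMk (hg.integrable_translate μ x)
  have hint : ∫ y, (f (x - y), g (x - y)) ∂μ = (avg μ f x, avg μ g x) :=
    integral_pair (hf.integrable_translate μ x) (hg.integrable_translate μ x)
  have hmul : Integrable (fun y => f (x - y) * g (x - y)) μ :=
    (hf.mul hg).integrable_translate μ x
  have hmeas : Measurable fun y => (f (x - y), g (x - y)) :=
    (hf.measurable.comp (measurable_const.sub measurable_id)).prodMk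
      (hg.measurable.comp (measurable_const.sub measurable_id))
  have hQ : Integrable (fun y => Q (f (x - y), g (x - y))) μ := by
    obtain ⟨B, hB⟩ := hf.bounded
    obtain ⟨D, hD⟩ := hg.bounded
    refine Integrable.of_bound (h.continuous.measurable.comp hmeas).aestronglyMeasurable
      (C * (B ^ p + D ^ q)) (Filter.Eventually.of_forall fun y => ?_)
    rw [Real.norm_of_nonneg (h.nonneg _)]
    refine (h.le _).trans (mul_le_mul_of_nonneg_left (add_le_add ?_ ?_) h.const_nonneg)
    · exact Real.rpow_le_rpow (norm_nonneg _) (hB _) (by linarith)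
    · exact Real.rpow_le_rpow (norm_nonneg _) (hD _) (by linarith)
  have jensen : ∀ ℓ : ℂ →L[ℝ] ℝ, ConvexOn ℝ Set.univ (fun z : ℂ × ℂ => Q z + ℓ (z.1 * z.2)) →
      -ℓ (avg μ (fun x => f x * g x) x - avg μ f x * avg μ g x) ≤
        avg μ (fun x => Q (f x, g x)) x - Q (avg μ f x, avg μ g x) := by
    intro ℓ hℓ
    have hli : Integrable (fun y => ℓ (f (x - y) * g (x - y))) μ := ℓ.integrable_comp hmul
    have hc : ContinuousOn (fun z : ℂ × ℂ => Q z + ℓ (z.1 * z.2)) Set.univ :=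
      (h.continuous.add (by fun_prop)).continuousOn
    have hj := hℓ.map_integral_le hc isClosed_univ
      (Filter.Eventually.of_forall fun _ => Set.mem_univ _) hpair (hQ.add hli)
    rw [hint, integral_add hQ hli, ℓ.integral_comp_comm hmul] at hj
    rw [map_sub]
    simp only [avg] at hj ⊢
    linarith
  have h1 := jensen Complex.reCLM (by simpa using h.convex_add_re)
  have h2 := jensen (-Complex.reCLM) (by simpa [sub_eq_add_neg] using h.convex_sub_re)
  have h3 := jensen Complex.imCLM (h.convex_add_im)
  have h4 := jensen (-Complex.imCLM) (by
    refine h.convex_sub_im.congr fun z _ => ?_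
    simp only [sub_eq_add_neg]; rfl)
  refine (Complex.norm_le_abs_re_add_abs_im _).trans ?_
  have h5 := abs_le.2 ⟨neg_le.1 h1, (neg_neg _).symm.le.trans h2⟩
  have h6 := abs_le.2 ⟨neg_le.1 h3, (neg_neg _).symm.le.trans h4⟩
  rw [two_mul]
  exact add_le_add h5 h6

lemma IsBellman.integrable {p q C : ℝ} {Q : ℂ × ℂ → ℝ} (h : IsBellman p q C Q)
    (hp : 1 ≤ p) (hq : 1 ≤ q) {f g : ℝ → ℂ} (hf : IsTest f) (hg : IsTest g) :
    Integrable fun x => Q (f x, g x) := by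
  refine (((hf.norm_rpow_integrable hp).add (hg.norm_rpow_integrable hq)).const_mul C).mono'
    (h.continuous.measurable.comp
      (hf.measurable.prodMk hg.measurable)).aestronglyMeasurable
    (Filter.Eventually.of_forall fun x => ?_)
  rw [Real.norm_of_nonneg (h.nonneg _)]
  exact h.le _

lemma IsBellman.norm_integral_mul_sub_le {p q C : ℝ} {Q : ℂ × ℂ → ℝ} (h : IsBellman p q C Q)
    (hp : 1 ≤ p) (hq : 1 ≤ q)
    (μ : Measure ℝ) [IsProbabilityMeasure μ] {f g : ℝ → ℂ} (hf : IsTest f) (hg : IsTest g) :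
    ‖(∫ x, f x * g x) - ∫ x, avg μ f x * avg μ g x‖ ≤
      2 * ((∫ x, Q (f x, g x)) - ∫ x, Q (avg μ f x, avg μ g x)) := by
  have hfg := hf.mul hg
  have hQ := h.integrable hp hq hf hg
  have hQm : StronglyMeasurable fun x => Q (f x, g x) :=
    (h.continuous.measurable.comp (hf.measurable.prodMk hg.measurable)).stronglyMeasurable
  have hQa := h.integrable hp hq (hf.avg μ) (hg.avg μ)
  rw [← integral_avg μ hfg.measurable.stronglyMeasurable hfg.integrable,
    ← integral_avg μ hQm hQ,
    ← integral_sub (hfg.avg μ).integrable ((hf.avg μ).mul (hg.avg μ)).integrable,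
    ← integral_sub (integrable_avg μ hQm hQ) hQa, ← integral_const_mul]
  refine norm_integral_le_of_norm_le (((integrable_avg μ hQm hQ).sub hQa).const_mul 2) ?_
  exact Filter.Eventually.of_forall fun x => h.norm_avg_mul_sub_le hp hq μ hf hg x

end Averages

section Gaussian

lemma avg_conv (μ ν : Measure ℝ) [IsProbabilityMeasure μ] [IsProbabilityMeasure ν] {f : ℝ → ℂ}
    (hf : IsTest f) (x : ℝ) :
    avg (μ.conv ν) f x = avg μ (avg ν f) x := by
  obtain ⟨B, hB⟩ := hf.bounded
  have hm : Measurable fun y => f (x - y) := hf.measurable.comp (measurable_const.sub measurable_id)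
  have hm2 : Measurable fun z : ℝ × ℝ => f (x - (z.1 + z.2)) :=
    hm.comp (measurable_fst.add measurable_snd)
  have hi : Integrable (fun z : ℝ × ℝ => f (x - (z.1 + z.2))) (μ.prod ν) :=
    Integrable.of_bound hm2.aestronglyMeasurable B (Filter.Eventually.of_forall fun _ => hB _)
  calc avg (μ.conv ν) f x = ∫ z, f (x - (z.1 + z.2)) ∂(μ.prod ν) :=
        integral_map (measurable_fst.add measurable_snd).aemeasurable hm.aestronglyMeasurable
    _ = ∫ y, ∫ y', f (x - (y + y')) ∂ν ∂μ := integral_prod _ hi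
    _ = avg μ (avg ν f) x := by simp only [avg, sub_sub]

lemma integral_avg_mul (μ : Measure ℝ) [IsProbabilityMeasure μ] (hμ : μ.map (fun x => -x) = μ)
    {f g : ℝ → ℂ} (hf : IsTest f) (hg : IsTest g) :
    ∫ x, avg μ f x * g x = ∫ x, f x * avg μ g x := by
  obtain ⟨B, hB⟩ := hg.bounded
  have h1 : Integrable (fun z : ℝ × ℝ => f (z.1 - z.2) * g z.1) (volume.prod μ) := by
    refine (integrable_comp_sub_prod μ hf.measurable.stronglyMeasurable hf.integrable).mul_bdd
      (hg.measurable.comp measurable_fst).aestronglyMeasurable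
      (Filter.Eventually.of_forall fun z => hB z.1)
  have h2 : Integrable (fun z : ℝ × ℝ => f z.1 * g (z.1 - z.2)) (volume.prod μ) := by
    have hc : Integrable (fun z : ℝ × ℝ => f z.1) (volume.prod μ) := hf.integrable.comp_fst μ
    exact hc.mul_bdd (hg.measurable.comp (measurable_fst.sub measurable_snd)).aestronglyMeasurable
      (Filter.Eventually.of_forall fun z => hB _)
  have hI : AEStronglyMeasurable (fun y => ∫ x, f x * g (x - y)) (μ.map fun x => -x) := by
    rw [hμ]; exact h2.integral_prod_right.aestronglyMeasurable
  calc ∫ x, avg μ f x * g x = ∫ x, ∫ y, f (x - y) * g x ∂μ := by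
        simp only [avg, integral_mul_const]
    _ = ∫ y, ∫ x, f (x - y) * g x ∂volume ∂μ := integral_integral_swap h1
    _ = ∫ y, ∫ x, f x * g (x - (-y)) ∂volume ∂μ := by
        congr 1; ext y
        rw [← integral_sub_right_eq_self (fun x => f x * g (x - -y)) y]
        simp
    _ = ∫ y, ∫ x, f x * g (x - y) ∂volume ∂(μ.map fun x => -x) :=
        (integral_map measurable_neg.aemeasurable hI).symm
    _ = ∫ y, ∫ x, f x * g (x - y) ∂volume ∂μ := by rw [hμ]
    _ = ∫ x, ∫ y, f x * g (x - y) ∂μ := (integral_integral_swap h2).symm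
    _ = ∫ x, f x * avg μ g x := by simp only [avg, integral_const_mul]

lemma norm_exp_neg_I_mul (x ξ : ℝ) : ‖cexp (-(I * (x : ℂ) * (ξ : ℂ)))‖ = 1 := by
  rw [Complex.norm_exp]; simp

lemma ft_avg (μ : Measure ℝ) [IsProbabilityMeasure μ] {f : ℝ → ℂ} (hf : IsTest f) (ξ : ℝ) :
    ft (avg μ f) ξ = charFun μ (-ξ) * ft f ξ := by
  have h1 : Integrable (fun z : ℝ × ℝ => f (z.1 - z.2) * cexp (-(I * (z.1 : ℂ) * (ξ : ℂ))))
      (volume.prod μ) := by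
    refine (integrable_comp_sub_prod μ hf.measurable.stronglyMeasurable hf.integrable).mul_bdd
      (c := 1) (by fun_prop) (Filter.Eventually.of_forall fun z => (norm_exp_neg_I_mul _ _).le)
  calc ft (avg μ f) ξ = ∫ x, ∫ y, f (x - y) * cexp (-(I * (x : ℂ) * (ξ : ℂ))) ∂μ := by
        simp only [ft, avg, integral_mul_const]
    _ = ∫ y, ∫ x : ℝ, f (x - y) * cexp (-(I * (x : ℂ) * (ξ : ℂ))) ∂volume ∂μ :=
        integral_integral_swap h1
    _ = ∫ y, cexp ((-ξ : ℝ) * y * I) * ft f ξ ∂μ := by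
        congr 1; ext y
        rw [ft, ← integral_sub_right_eq_self (fun x : ℝ => f x * cexp (-(I * (x : ℂ) * (ξ : ℂ)))) y,
          ← integral_const_mul]
        congr 1; ext x
        rw [mul_left_comm, ← Complex.exp_add]
        congr 2; push_cast; ring
    _ = charFun μ (-ξ) * ft f ξ := by rw [integral_mul_const, charFun_apply_real]

/-- The heat operator: the average over a centred Gaussian of variance `2 v`. -/
noncomputable def heat (v : ℝ≥0) (f : ℝ → ℂ) : ℝ → ℂ :=
  avg (ProbabilityTheory.gaussianReal 0 (2 * v)) f

lemma IsTest.heat {f : ℝ → ℂ} (hf : IsTest f) (v : ℝ≥0) : IsTest (heat v f) := hf.avg _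

lemma heat_zero (f : ℝ → ℂ) : heat 0 f = f := by
  ext x
  simp [heat, avg, ProbabilityTheory.gaussianReal_zero_var]

lemma heat_add (v w : ℝ≥0) {f : ℝ → ℂ} (hf : IsTest f) : heat (v + w) f = heat v (heat w f) := by
  ext x
  simp only [heat]
  rw [← avg_conv _ _ hf, ProbabilityTheory.gaussianReal_conv_gaussianReal, add_zero, mul_add]

lemma integral_heat_mul (v : ℝ≥0) {f g : ℝ → ℂ} (hf : IsTest f) (hg : IsTest g) :
    ∫ x, heat v f x * g x = ∫ x, f x * heat v g x :=
  integral_avg_mul _ (by simpa using ProbabilityTheory.gaussianReal_map_neg (μ := 0)) hf hg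

lemma ft_heat (v : ℝ≥0) {f : ℝ → ℂ} (hf : IsTest f) (ξ : ℝ) :
    ft (heat v f) ξ = Real.exp (-(v * ξ ^ 2)) * ft f ξ := by
  rw [heat, ft_avg _ hf, ProbabilityTheory.charFun_gaussianReal]
  push_cast
  congr 2
  ring

/-- The total variation of the pairing along the heat flow is controlled. -/
lemma IsBellman.sum_norm_heat_le {p q C : ℝ} {Q : ℂ × ℂ → ℝ} (h : IsBellman p q C Q)
    (hp : 1 ≤ p) (hq : 1 ≤ q) {w : ℕ → ℝ≥0} (hw : Monotone w) {f g : ℝ → ℂ}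
    (hf : IsTest f) (hg : IsTest g) (L : ℕ) :
    ∑ n ∈ Finset.range L, ‖(∫ x, heat (w n) f x * heat (w n) g x) -
        ∫ x, heat (w (n + 1)) f x * heat (w (n + 1)) g x‖ ≤
      2 * ((∫ x, Q (heat (w 0) f x, heat (w 0) g x)) -
        ∫ x, Q (heat (w L) f x, heat (w L) g x)) := by
  induction L with
  | zero => simp
  | succ L ih =>
    rw [Finset.sum_range_succ]
    have hs := h.norm_integral_mul_sub_le hp hq
      (ProbabilityTheory.gaussianReal 0 (2 * (w (L + 1) - w L))) (hf.heat (w L)) (hg.heat (w L))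
    have hv : w (L + 1) - w L + w L = w (L + 1) := tsub_add_cancel_of_le (hw (Nat.le_succ L))
    have e1 := heat_add (w (L + 1) - w L) (w L) hf
    have e2 := heat_add (w (L + 1) - w L) (w L) hg
    rw [hv] at e1 e2
    unfold heat at e1 e2 ih hs ⊢
    rw [← e1, ← e2] at hs
    linarith

/-- The band-pass operator with symbol `exp (-4 ^ (-j) ξ²) - exp (-4 ^ (1 - j) ξ²)`. -/
noncomputable def band (j : ℤ) (f : ℝ → ℂ) (x : ℝ) : ℂ :=
  heat ((4 : ℝ≥0) ^ (-j)) f x - heat ((4 : ℝ≥0) ^ (1 - j)) f x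

lemma IsTest.band {f : ℝ → ℂ} (hf : IsTest f) (j : ℤ) : IsTest (band j f) :=
  (hf.heat _).sub (hf.heat _)

lemma ft_sub {f g : ℝ → ℂ} (hf : IsTest f) (hg : IsTest g) (ξ : ℝ) :
    ft (fun x => f x - g x) ξ = ft f ξ - ft g ξ := by
  have key : ∀ {f : ℝ → ℂ}, IsTest f →
      Integrable fun x : ℝ => f x * cexp (-(I * (x : ℂ) * (ξ : ℂ))) := fun hf =>
    hf.integrable.mul_bdd (c := 1) (by fun_prop)
      (Filter.Eventually.of_forall fun x => (norm_exp_neg_I_mul _ _).le)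
  simp only [ft, sub_mul]
  exact integral_sub (key hf) (key hg)

/-- The profile of the symbols of the band-pass operators. -/
noncomputable def profile (s : ℝ) : ℝ := Real.exp (-s ^ 2) - Real.exp (-(4 * s ^ 2))

lemma ft_band (j : ℤ) {f : ℝ → ℂ} (hf : IsTest f) (ξ : ℝ) :
    ft (band j f) ξ = profile (ξ / 2 ^ j) * ft f ξ := by
  have h := ft_sub (hf.heat ((4 : ℝ≥0) ^ (-j))) (hf.heat ((4 : ℝ≥0) ^ (1 - j))) ξ
  have h4 : (ξ / 2 ^ j) ^ 2 = 4 ^ (-j) * ξ ^ 2 := by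
    have : (4 : ℝ) ^ (-j) = ((2 ^ j) ^ 2)⁻¹ := by
      rw [zpow_neg, ← zpow_natCast, ← zpow_mul, mul_comm, zpow_mul]; norm_num
    rw [this, div_pow]; field_simp
  have h5 : (4 : ℂ) ^ (1 - j) = 4 * 4 ^ (-j) := by
    rw [sub_eq_add_neg, zpow_add₀ (by norm_num), zpow_one]
  refine h.trans ?_
  rw [ft_heat _ hf, ft_heat _ hf, profile, h4]
  push_cast
  rw [h5]
  ring_nf

/-- Randomised Littlewood–Paley estimate, in dual form. -/
lemma exists_norm_integral_sum_band_mul_le {p q : ℝ} (hpq : p.HolderConjugate q) :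
    ∃ C, 0 ≤ C ∧ ∀ (S : Finset ℤ) (c : ℤ → ℂ), (∀ j, ‖c j‖ ≤ 1) → ∀ f g : ℝ → ℂ,
      IsTest f → IsTest g → ‖∫ x, (∑ j ∈ S, c j * band j f x) * g x‖ ≤
        C * ((∫ x, ‖f x‖ ^ p) + ∫ x, ‖g x‖ ^ q) := by
  obtain ⟨C, Q, h⟩ := exists_isBellman hpq
  refine ⟨2 * C, by linarith [h.const_nonneg], fun S c hc f g hf hg => ?_⟩
  have hp := hpq.lt.le
  have hq := hpq.symm.lt.le
  -- the pairing with one band as a difference along the flow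
  have hdiff : ∀ j : ℤ, ∀ v w : ℝ≥0, v + v = 4 ^ (-j) → w + w = 4 ^ (1 - j) →
      ∫ x, band j f x * g x =
        (∫ x, heat v f x * heat v g x) - ∫ x, heat w f x * heat w g x := by
    intro j v w hv hw
    have e : ∀ v, ∫ x, heat v f x * heat v g x = ∫ x, heat (v + v) f x * g x := by
      intro v
      rw [← integral_heat_mul v (hf.heat v) hg, heat_add v v hf]
    rw [e, e, hv, hw, ← integral_sub ((hf.heat _).mul hg).integrable
      ((hf.heat _).mul hg).integrable]
    simp only [band, sub_mul]
  obtain ⟨N, hN⟩ : ∃ N : ℕ, ∀ j ∈ S, -(N : ℤ) ≤ j ∧ j ≤ N := by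
    refine ⟨S.sup Int.natAbs, fun j hj => ?_⟩
    have : j.natAbs ≤ S.sup Int.natAbs := Finset.le_sup (f := Int.natAbs) hj
    omega
  let w : ℕ → ℝ≥0 := fun n => if n = 0 then 0 else 4 ^ ((n : ℤ) - 1 - N) / 2
  have hw : Monotone w := by
    refine monotone_nat_of_le_succ fun n => ?_
    rcases n with _ | n
    · simp [w]
    · simp only [w, Nat.succ_ne_zero, if_false]
      gcongr
      · norm_num
      · omega
  let b : ℕ → ℂ := fun n => (∫ x, heat (w n) f x * heat (w n) g x) -
        ∫ x, heat (w (n + 1)) f x * heat (w (n + 1)) g x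
  have hb : ∀ n : ℕ, b (n + 1) = ∫ x, band ((N : ℤ) - n) f x * g x := by
    intro n
    refine (hdiff _ _ _ ?_ ?_).symm
    · simp only [w, Nat.succ_ne_zero, if_false, add_halves]
      congr 1; push_cast; ring
    · simp only [w, Nat.succ_ne_zero, if_false, add_halves]
      congr 1; push_cast; ring
  have hsum : ∑ n ∈ Finset.range (2 * N + 1 + 1), ‖b n‖ ≤
      2 * C * ((∫ x, ‖f x‖ ^ p) + ∫ x, ‖g x‖ ^ q) := by
    refine (h.sum_norm_heat_le hp hq hw hf hg _).trans ?_
    have h0 : (0 : ℝ) ≤ ∫ x, Q (heat (w (2 * N + 1 + 1)) f x, heat (w (2 * N + 1 + 1)) g x) :=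
      integral_nonneg fun x => h.nonneg _
    have hw0 : w 0 = 0 := if_pos rfl
    have h1 : ∫ x, Q (f x, g x) ≤ C * ((∫ x, ‖f x‖ ^ p) + ∫ x, ‖g x‖ ^ q) := by
      rw [← integral_add (hf.norm_rpow_integrable hp) (hg.norm_rpow_integrable hq),
        ← integral_const_mul]
      exact integral_mono (h.integrable hp hq hf hg)
        (((hf.norm_rpow_integrable hp).add (hg.norm_rpow_integrable hq)).const_mul C)
        fun x => h.le _
    rw [hw0, heat_zero, heat_zero]
    linarith
  have himg : S ⊆ (Finset.range (2 * N + 1)).image fun n : ℕ => (N : ℤ) - n := by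
    intro j hj
    have := hN j hj
    refine Finset.mem_image.2 ⟨(N - j).toNat, Finset.mem_range.2 (by omega), by omega⟩
  calc ‖∫ x, (∑ j ∈ S, c j * band j f x) * g x‖
      = ‖∑ j ∈ S, c j * ∫ x, band j f x * g x‖ := by
        congr 1
        simp only [Finset.sum_mul, mul_assoc]
        rw [integral_finsetSum _ fun j _ => (((hf.band j).mul hg).const_mul (c j)).integrable]
        simp only [integral_const_mul]
    _ ≤ ∑ j ∈ S, ‖∫ x, band j f x * g x‖ := by
        refine (norm_sum_le _ _).trans (Finset.sum_le_sum fun j _ => ?_)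
        rw [norm_mul]
        exact mul_le_of_le_one_left (norm_nonneg _) (hc j)
    _ ≤ ∑ j ∈ (Finset.range (2 * N + 1)).image fun n : ℕ => (N : ℤ) - n,
          ‖∫ x, band j f x * g x‖ :=
        Finset.sum_le_sum_of_subset_of_nonneg himg fun _ _ _ => norm_nonneg _
    _ = ∑ n ∈ Finset.range (2 * N + 1), ‖b (n + 1)‖ := by
        rw [Finset.sum_image (by intro a _ b _ hab; simpa using hab)]
        simp only [hb]
    _ ≤ ∑ n ∈ Finset.range (2 * N + 1 + 1), ‖b n‖ := by
        rw [Finset.sum_range_succ' _ (2 * N + 1)]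
        exact le_add_of_nonneg_right (norm_nonneg _)
    _ ≤ _ := hsum

end Gaussian

section Duality

/-- The dual element `conj z * |z| ^ (p - 2)` of a complex number. -/
noncomputable def dualElt (p : ℝ) (z : ℂ) : ℂ := (starRingEnd ℂ) z * ((‖z‖ ^ (p - 2) : ℝ) : ℂ)

lemma measurable_dualElt (p : ℝ) : Measurable (dualElt p) := by
  unfold dualElt
  refine (Complex.continuous_conj.measurable).mul (Complex.measurable_ofReal.comp ?_)
  exact measurable_norm.pow_const _

lemma norm_dualElt {p : ℝ} (hp : 1 < p) (z : ℂ) : ‖dualElt p z‖ = ‖z‖ ^ (p - 1) := by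
  rcases eq_or_ne z 0 with rfl | hz
  · simp [dualElt, Real.zero_rpow (by linarith : p - 1 ≠ 0)]
  · have hz' : 0 < ‖z‖ := norm_pos_iff.2 hz
    rw [dualElt, norm_mul, RCLike.norm_conj, Complex.norm_of_nonneg (by positivity),
      mul_comm, ← Real.rpow_add_one hz'.ne']
    congr 1; ring

lemma mul_dualElt {p : ℝ} (hp : 1 < p) (z : ℂ) : z * dualElt p z = ((‖z‖ ^ p : ℝ) : ℂ) := by
  rcases eq_or_ne z 0 with rfl | hz
  · simp [Real.zero_rpow (by linarith : p ≠ 0)]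
  · have hz' : 0 < ‖z‖ := norm_pos_iff.2 hz
    rw [dualElt, ← mul_assoc, Complex.mul_conj, ← Complex.ofReal_mul, Complex.normSq_eq_norm_sq,
      ← Real.rpow_natCast, ← Real.rpow_add hz']
    congr 2; push_cast; ring

/-- A bounded function whose pairings satisfy a Young-type bound lies in `L^p`. -/
lemma integrable_norm_rpow_of_pairing_le {p q : ℝ} (hpq : p.HolderConjugate q) {h : ℝ → ℂ}
    (hm : Measurable h) {B : ℝ} (hB : ∀ x, ‖h x‖ ≤ B) {a b : ℝ} (hb : 0 ≤ b)
    (H : ∀ g, IsTest g → ‖∫ x, h x * g x‖ ≤ a + b * ∫ x, ‖g x‖ ^ q) :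
    Integrable (fun x => ‖h x‖ ^ p) ∧
      ∫ x, ‖h x‖ ^ p ≤ 2 * (2 * b + 1) ^ (p - 1) * a := by
  have hp := hpq.lt
  have hq := hpq.symm.lt
  have hmul : (p - 1) * (q - 1) = 1 := by have := hpq.mul_eq_add; linarith
  have hpq' : (p - 1) * q = p := by have := hpq.mul_eq_add; linarith
  have hb1 : 0 < 2 * b + 1 := by linarith
  set θ : ℝ := (2 * b + 1) ^ (-(p - 1)) with hθ
  have hθ0 : 0 < θ := Real.rpow_pos_of_pos hb1 _
  have hθq : b * θ ^ q ≤ θ / 2 := by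
    have : θ ^ q = (2 * b + 1)⁻¹ * θ := by
      rw [← Real.rpow_neg_one, hθ, ← Real.rpow_mul hb1.le, ← Real.rpow_add hb1]
      congr 1; linarith
    rw [this]
    have : b * (2 * b + 1)⁻¹ ≤ 1 / 2 := by
      rw [← div_eq_mul_inv, div_le_div_iff₀ hb1 (by norm_num)]; linarith
    nlinarith
  have hmeas : Measurable fun x => ‖h x‖ ^ p := hm.norm.pow_const _
  have hB0 : 0 ≤ B := (norm_nonneg _).trans (hB 0)
  have hloc : ∀ N : ℕ, IntegrableOn (fun x => ‖h x‖ ^ p) (Set.Icc (-N : ℝ) N) := by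
    intro N
    refine Integrable.of_bound hmeas.aestronglyMeasurable (B ^ p)
      (Filter.Eventually.of_forall fun x => ?_)
    rw [Real.norm_of_nonneg (by positivity)]
    exact Real.rpow_le_rpow (norm_nonneg _) (hB x) (by linarith)
  have hbound : ∀ N : ℕ, ∫ x in Set.Icc (-N : ℝ) N, ‖h x‖ ^ p ≤
      2 * (2 * b + 1) ^ (p - 1) * a := by
    intro N
    set s := Set.Icc (-N : ℝ) N with hs
    have hsm : MeasurableSet s := measurableSet_Icc
    let g : ℝ → ℂ := fun x => s.indicator (fun x => θ * dualElt p (h x)) x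
    have hgm : Measurable g :=
      (((measurable_dualElt p).comp hm).const_mul (θ : ℂ)).indicator hsm
    have hgn : ∀ x, ‖g x‖ = s.indicator (fun x => θ * ‖h x‖ ^ (p - 1)) x := by
      intro x
      simp only [g]
      by_cases hx : x ∈ s
      · simp [hx, norm_dualElt hp, abs_of_pos hθ0]
      · simp [hx]
    have hgB : ∀ x, ‖g x‖ ≤ θ * B ^ (p - 1) := by
      intro x
      rw [hgn]
      refine Set.indicator_apply_le' (fun _ => ?_) (fun _ => by positivity)
      have := Real.rpow_le_rpow (norm_nonneg _) (hB x) (by linarith : 0 ≤ p - 1)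
      gcongr
    have hgt : IsTest g := by
      refine ⟨hgm, ?_, _, hgB⟩
      rw [← integrableOn_iff_integrable_of_support_subset (s := s) Set.support_indicator_subset]
      exact Integrable.of_bound hgm.aestronglyMeasurable _ (Filter.Eventually.of_forall hgB)
    have h1 : ∫ x, h x * g x = ((θ * ∫ x in s, ‖h x‖ ^ p : ℝ) : ℂ) := by
      rw [← integral_const_mul, ← integral_complex_ofReal, ← integral_indicator hsm]
      congr 1; ext x
      by_cases hx : x ∈ s
      · simp only [g, hx, Set.indicator_of_mem]
        rw [mul_left_comm, mul_dualElt hp]; push_cast; ring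
      · simp [g, hx]
    have h2 : ∫ x, ‖g x‖ ^ q = θ ^ q * ∫ x in s, ‖h x‖ ^ p := by
      rw [← integral_const_mul, ← integral_indicator hsm]
      congr 1; ext x
      rw [hgn]
      by_cases hx : x ∈ s
      · simp only [hx, Set.indicator_of_mem]
        rw [Real.mul_rpow hθ0.le (by positivity), ← Real.rpow_mul (norm_nonneg _), hpq']
      · simp [hx, Real.zero_rpow (by linarith : q ≠ 0)]
    have hI : 0 ≤ ∫ x in s, ‖h x‖ ^ p := integral_nonneg fun x => by positivity
    have h3 := H g hgt
    rw [h1, h2, Complex.norm_of_nonneg (by positivity), ← mul_assoc] at h3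
    have h4 := mul_le_mul_of_nonneg_right hθq hI
    have h5 : θ * ∫ x in s, ‖h x‖ ^ p ≤ 2 * a := by linarith
    have h6 : (2 * b + 1) ^ (p - 1) * θ = 1 := by
      rw [hθ, ← Real.rpow_add hb1]; simp
    calc ∫ x in s, ‖h x‖ ^ p = (2 * b + 1) ^ (p - 1) * (θ * ∫ x in s, ‖h x‖ ^ p) := by
          rw [← mul_assoc, h6, one_mul]
      _ ≤ (2 * b + 1) ^ (p - 1) * (2 * a) := by gcongr
      _ = _ := by ring
  have hcover : AECover volume Filter.atTop fun N : ℕ => Set.Icc (-N : ℝ) N :=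
    aecover_Icc (Filter.tendsto_neg_atTop_atBot.comp tendsto_natCast_atTop_atTop)
      tendsto_natCast_atTop_atTop
  have hint : Integrable fun x => ‖h x‖ ^ p := by
    refine hcover.integrable_of_integral_norm_bounded (2 * (2 * b + 1) ^ (p - 1) * a) hloc
      (Filter.Eventually.of_forall fun N => ?_)
    simp only [Real.norm_of_nonneg (Real.rpow_nonneg (norm_nonneg _) _)]
    exact hbound N
  exact ⟨hint, le_of_tendsto (hcover.integral_tendsto_of_countably_generated hint)
    (Filter.Eventually.of_forall hbound)⟩

/-- Randomised Littlewood–Paley estimate. -/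
lemma exists_integral_norm_sum_band_le {p : ℝ} (hp : 1 < p) :
    ∃ C, 0 ≤ C ∧ ∀ (S : Finset ℤ) (c : ℤ → ℂ), (∀ j, ‖c j‖ ≤ 1) → ∀ f : ℝ → ℂ,
      IsTest f → ∫ x, ‖∑ j ∈ S, c j * band j f x‖ ^ p ≤ C * ∫ x, ‖f x‖ ^ p := by
  have hpq := Real.HolderConjugate.conjExponent hp
  obtain ⟨C, hC, H⟩ := exists_norm_integral_sum_band_mul_le hpq
  refine ⟨2 * (2 * C + 1) ^ (p - 1) * C, by positivity, fun S c hc f hf => ?_⟩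
  have ht : IsTest fun x => ∑ j ∈ S, c j * band j f x :=
    IsTest.sum S fun j _ => (hf.band j).const_mul _
  obtain ⟨B, hB⟩ := ht.bounded
  rw [mul_assoc]
  refine (integrable_norm_rpow_of_pairing_le hpq ht.measurable hB hC
    fun g hg => ?_).2
  rw [← mul_add]
  exact H S c hc f g hf hg

end Duality

section Signs

variable {ι : Type*} [Fintype ι] [DecidableEq ι]

/-- Real number attached to a sign. -/
def sgn (e : ℤˣ) : ℝ := ((e : ℤ) : ℝ)

lemma sgn_mul (e e' : ℤˣ) : sgn (e * e') = sgn e * sgn e' := by simp [sgn]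

lemma sgn_mul_self (e : ℤˣ) : sgn e * sgn e = 1 := by
  rw [← sgn_mul, Int.units_mul_self]; simp [sgn]

lemma norm_sgn (e : ℤˣ) : ‖(sgn e : ℂ)‖ = 1 := by
  rcases Int.units_eq_one_or e with rfl | rfl <;> simp [sgn]

lemma sum_sgn_mul_sgn (j k : ι) : ∑ e : ι → ℤˣ, sgn (e j) * sgn (e k) =
    if j = k then (Fintype.card (ι → ℤˣ) : ℝ) else 0 := by
  split_ifs with h
  · subst h
    simp [sgn_mul_self]
  · -- flip the sign at `j`
    let τ : ι → ℤˣ := Pi.mulSingle j (-1)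
    have h1 := Equiv.sum_comp (Equiv.mulLeft τ) fun e : ι → ℤˣ => sgn (e j) * sgn (e k)
    have h2 : ∀ e : ι → ℤˣ, sgn ((τ * e) j) * sgn ((τ * e) k) = -(sgn (e j) * sgn (e k)) := by
      intro e
      simp [τ, sgn, Pi.mulSingle_eq_of_ne (Ne.symm h)]
    simp only [Equiv.coe_mulLeft, h2, Finset.sum_neg_distrib] at h1
    linarith

lemma sum_sign_pairing (A B : ι → ℂ) :
    ∑ e : ι → ℤˣ, (∑ j, (sgn (e j) : ℂ) * A j) * (∑ k, (sgn (e k) : ℂ) * B k) =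
      Fintype.card (ι → ℤˣ) * ∑ j, A j * B j := by
  have h : ∀ e : ι → ℤˣ, (∑ j, (sgn (e j) : ℂ) * A j) * (∑ k, (sgn (e k) : ℂ) * B k) =
      ∑ j, ∑ k, ((sgn (e j) * sgn (e k) : ℝ) : ℂ) * (A j * B k) := by
    intro e
    rw [Finset.sum_mul_sum]
    refine Finset.sum_congr rfl fun j _ => Finset.sum_congr rfl fun k _ => ?_
    push_cast; ring
  simp only [h]
  rw [Finset.sum_comm, Finset.mul_sum]
  refine Finset.sum_congr rfl fun j _ => ?_
  rw [Finset.sum_comm]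
  simp only [← Finset.sum_mul, ← Complex.ofReal_sum, sum_sgn_mul_sgn]
  rw [Finset.sum_eq_single j (fun k _ hk => by simp [hk.symm]) (by simp)]
  simp

lemma convexOn_sum_norm_rpow {p : ℝ} (hp : 1 ≤ p) (z : ι → ℂ) :
    ConvexOn ℝ Set.univ fun c : ι → ℝ =>
      ∑ e : ι → ℤˣ, ‖∑ j, (sgn (e j) : ℂ) * ((c j : ℂ) * z j)‖ ^ p := by
  have h1 : ∀ e : ι → ℤˣ, ConvexOn ℝ Set.univ fun c : ι → ℝ =>
      ‖∑ j, (sgn (e j) : ℂ) * ((c j : ℂ) * z j)‖ ^ p := by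
    intro e
    let L : (ι → ℝ) →ₗ[ℝ] ℂ := ∑ j, (LinearMap.proj j).smulRight ((sgn (e j) : ℂ) * z j)
    have hL : ∀ c, L c = ∑ j, (sgn (e j) : ℂ) * ((c j : ℂ) * z j) := by
      intro c
      simp only [L, LinearMap.sum_apply, LinearMap.smulRight_apply, LinearMap.proj_apply,
        Complex.real_smul]
      exact Finset.sum_congr rfl fun j _ => by ring
    have h2 : ConvexOn ℝ Set.univ fun z : ℂ => ‖z‖ ^ p := by
      refine ⟨convex_univ, fun x _ y _ a b ha hb hab => ?_⟩
      have h3 := (convexOn_univ_norm (E := ℂ)).2 (Set.mem_univ x) (Set.mem_univ y) ha hb hab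
      exact (Real.rpow_le_rpow (norm_nonneg _) h3 (by linarith)).trans
        ((convexOn_rpow hp).2 (norm_nonneg x) (norm_nonneg y) ha hb hab)
    simpa only [Function.comp_def, hL, Set.preimage_univ] using h2.comp_linearMap L
  refine ⟨convex_univ, fun x _ y _ a b ha hb hab => ?_⟩
  simp only [smul_eq_mul, Finset.mul_sum, ← Finset.sum_add_distrib]
  exact Finset.sum_le_sum fun e _ => (h1 e).2 (Set.mem_univ x) (Set.mem_univ y) ha hb hab

lemma sum_signs_norm_rpow_le_of_real {p : ℝ} (hp : 1 ≤ p) (z : ι → ℂ) (c : ι → ℝ)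
    (hc : ∀ j, |c j| ≤ 1) :
    ∑ e : ι → ℤˣ, ‖∑ j, (sgn (e j) : ℂ) * ((c j : ℂ) * z j)‖ ^ p ≤
      ∑ e : ι → ℤˣ, ‖∑ j, (sgn (e j) : ℂ) * z j‖ ^ p := by
  have hmem : c ∈ convexHull ℝ (Set.univ.pi fun _ : ι => ({-1, 1} : Set ℝ)) := by
    rw [convexHull_pi, Set.mem_univ_pi]
    intro j
    rw [convexHull_pair, segment_eq_Icc (by norm_num)]
    exact abs_le.1 (hc j)
  obtain ⟨y, hy, hle⟩ := (convexOn_sum_norm_rpow hp z).exists_ge_of_mem_convexHull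
    (Set.subset_univ _) hmem
  refine hle.trans (le_of_eq ?_)
  have hy' : ∀ j, ∃ e : ℤˣ, sgn e = y j := by
    intro j
    rcases hy j (Set.mem_univ j) with h | h
    · exact ⟨-1, by rw [h]; simp [sgn]⟩
    · exact ⟨1, by rw [h]; simp [sgn]⟩
  choose τ hτ using hy'
  rw [← Equiv.sum_comp (Equiv.mulRight τ) fun e : ι → ℤˣ => ‖∑ j, (sgn (e j) : ℂ) * z j‖ ^ p]
  refine Finset.sum_congr rfl fun e _ => ?_
  congr 2
  refine Finset.sum_congr rfl fun j _ => ?_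
  simp only [Equiv.coe_mulRight, Pi.mul_apply, sgn_mul, hτ]
  push_cast; ring

lemma add_rpow_le_mul_rpow_add_rpow {a b p : ℝ} (ha : 0 ≤ a) (hb : 0 ≤ b) (hp : 1 ≤ p) :
    (a + b) ^ p ≤ 2 ^ (p - 1) * (a ^ p + b ^ p) := by
  lift a to ℝ≥0 using ha
  lift b to ℝ≥0 using hb
  exact_mod_cast NNReal.rpow_add_le_mul_rpow_add_rpow a b hp

/-- The contraction principle. -/
lemma sum_signs_norm_rpow_le {p : ℝ} (hp : 1 ≤ p) (z : ι → ℂ) (c : ι → ℂ)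
    (hc : ∀ j, ‖c j‖ ≤ 1) :
    ∑ e : ι → ℤˣ, ‖∑ j, (sgn (e j) : ℂ) * (c j * z j)‖ ^ p ≤
      2 ^ p * ∑ e : ι → ℤˣ, ‖∑ j, (sgn (e j) : ℂ) * z j‖ ^ p := by
  have h1 := sum_signs_norm_rpow_le_of_real hp z (fun j => (c j).re)
    fun j => (Complex.abs_re_le_norm _).trans (hc j)
  have h2 := sum_signs_norm_rpow_le_of_real hp z (fun j => (c j).im)
    fun j => (Complex.abs_im_le_norm _).trans (hc j)
  have h3 : ∀ e : ι → ℤˣ, ‖∑ j, (sgn (e j) : ℂ) * (c j * z j)‖ ^ p ≤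
      2 ^ (p - 1) * (‖∑ j, (sgn (e j) : ℂ) * (((c j).re : ℂ) * z j)‖ ^ p +
        ‖∑ j, (sgn (e j) : ℂ) * (((c j).im : ℂ) * z j)‖ ^ p) := by
    intro e
    have h4 : ∑ j, (sgn (e j) : ℂ) * (c j * z j) =
        ∑ j, (sgn (e j) : ℂ) * (((c j).re : ℂ) * z j) +
          I * ∑ j, (sgn (e j) : ℂ) * (((c j).im : ℂ) * z j) := by
      rw [Finset.mul_sum, ← Finset.sum_add_distrib]
      refine Finset.sum_congr rfl fun j _ => ?_
      conv_lhs => rw [← Complex.re_add_im (c j)]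
      ring
    rw [h4]
    refine (Real.rpow_le_rpow (norm_nonneg _) (norm_add_le _ _) (by linarith)).trans ?_
    rw [norm_mul, Complex.norm_I, one_mul]
    exact add_rpow_le_mul_rpow_add_rpow (norm_nonneg _) (norm_nonneg _) hp
  calc _ ≤ _ := Finset.sum_le_sum fun e _ => h3 e
    _ = 2 ^ (p - 1) * (∑ e : ι → ℤˣ, ‖∑ j, (sgn (e j) : ℂ) * (((c j).re : ℂ) * z j)‖ ^ p +
        ∑ e : ι → ℤˣ, ‖∑ j, (sgn (e j) : ℂ) * (((c j).im : ℂ) * z j)‖ ^ p) := by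
      rw [← Finset.mul_sum, Finset.sum_add_distrib]
    _ ≤ 2 ^ (p - 1) * (2 * ∑ e : ι → ℤˣ, ‖∑ j, (sgn (e j) : ℂ) * z j‖ ^ p) := by
      rw [two_mul]; gcongr
    _ = _ := by
      rw [← mul_assoc, ← Real.rpow_add_one (by norm_num), sub_add_cancel]

end Signs

section CauchyTransform

/-- M. Riesz' inequality for powers of complex numbers in the right half plane. -/
lemma exists_norm_rpow_le_re_rpow {p : ℝ} (hp1 : 1 < p) (hp2 : p ≤ 2) :
    ∃ A B : ℝ, 0 ≤ A ∧ 0 ≤ B ∧ ∀ ζ : ℂ, 0 < ζ.re →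
      ‖ζ‖ ^ p ≤ A * ζ.re ^ p - B * (ζ ^ (p : ℂ)).re := by
  have hpi := Real.pi_pos
  have hp0 : 0 < p := by linarith
  have hlt : Real.pi / (2 * p) < Real.pi / 2 := by
    apply div_lt_div_of_pos_left hpi (by norm_num); linarith
  set θ : ℝ := (Real.pi / (2 * p) + Real.pi / 2) / 2 with hθ
  have hθ1 : Real.pi / (2 * p) < θ := by rw [hθ]; linarith
  have hθ2 : θ < Real.pi / 2 := by rw [hθ]; linarith
  have hθ0 : 0 < θ := lt_trans (by positivity) hθ1
  have hpθ : Real.pi / 2 < p * θ := by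
    have : p * (Real.pi / (2 * p)) = Real.pi / 2 := by field_simp
    nlinarith
  have hpθ2 : p * θ < Real.pi := by nlinarith
  have hc0 : 0 < Real.cos θ := Real.cos_pos_of_mem_Ioo ⟨by linarith, hθ2⟩
  have hc1 : Real.cos (p * θ) < 0 := Real.cos_neg_of_pi_div_two_lt_of_lt hpθ (by linarith)
  set B : ℝ := -(Real.cos (p * θ))⁻¹ with hB
  have hB0 : 0 ≤ B := by rw [hB]; simpa using hc1.le
  have hBc : B * Real.cos (p * θ) = -1 := by rw [hB, neg_mul, inv_mul_cancel₀ hc1.ne]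
  refine ⟨(1 + B) / Real.cos θ ^ p, B, by positivity, hB0, fun ζ hζ => ?_⟩
  have hζ0 : ζ ≠ 0 := by rintro rfl; simp at hζ
  have hr : 0 < ‖ζ‖ := norm_pos_iff.2 hζ0
  set φ := |arg ζ| with hφ
  have hφ2 : φ < Real.pi / 2 := Complex.abs_arg_lt_pi_div_two_iff.2 (Or.inl hζ)
  have hφ0 : 0 ≤ φ := abs_nonneg _
  have hre : ζ.re = ‖ζ‖ * Real.cos φ := by
    rw [hφ, Real.cos_abs, Complex.norm_mul_cos_arg]
  have hcφ : 0 < Real.cos φ := Real.cos_pos_of_mem_Ioo ⟨by linarith, hφ2⟩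
  have hpow : (ζ ^ (p : ℂ)).re = ‖ζ‖ ^ p * Real.cos (p * φ) := by
    rw [Complex.cpow_ofReal_re, hφ]
    congr 1
    rw [← Real.cos_abs (arg ζ * p), abs_mul, abs_of_pos hp0, mul_comm]
  rw [hpow, hre, Real.mul_rpow hr.le hcφ.le]
  suffices h : 1 ≤ (1 + B) / Real.cos θ ^ p * Real.cos φ ^ p - B * Real.cos (p * φ) by
    have := mul_le_mul_of_nonneg_left h (Real.rpow_nonneg hr.le p)
    linarith
  rcases le_total φ θ with h | h
  · have h1 : Real.cos θ ≤ Real.cos φ :=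
      Real.cos_le_cos_of_nonneg_of_le_pi hφ0 (by linarith) h
    have h2 : Real.cos θ ^ p ≤ Real.cos φ ^ p := Real.rpow_le_rpow hc0.le h1 hp0.le
    have h3 : 1 + B ≤ (1 + B) / Real.cos θ ^ p * Real.cos φ ^ p := by
      rw [div_mul_eq_mul_div, le_div_iff₀ (by positivity)]
      gcongr
    have h4 : B * Real.cos (p * φ) ≤ B := mul_le_of_le_one_right hB0 (Real.cos_le_one _)
    linarith
  · have h1 : Real.cos (p * φ) ≤ Real.cos (p * θ) :=
      Real.cos_le_cos_of_nonneg_of_le_pi (by positivity) (by nlinarith) (by gcongr)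
    have h2 := mul_le_mul_of_nonneg_left h1 hB0
    have h3 : 0 ≤ (1 + B) / Real.cos θ ^ p * Real.cos φ ^ p := by positivity
    linarith

/-- The Cauchy transform, normalised to have positive real part on positive functions. -/
noncomputable def cauchy (h : ℝ → ℂ) (z : ℂ) : ℂ := ∫ t : ℝ, h t * (I / (z - t))

lemma norm_I_div_le {z : ℂ} (hz : 0 < z.im) (t : ℝ) : ‖I / (z - t)‖ ≤ z.im⁻¹ := by
  rw [norm_div, Complex.norm_I, one_div]
  refine inv_anti₀ hz ?_
  simpa [abs_of_pos hz] using Complex.abs_im_le_norm (z - t)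

lemma sub_ofReal_ne_zero {z : ℂ} (hz : 0 < z.im) (t : ℝ) : z - t ≠ 0 := by
  intro h
  have := congrArg Complex.im h
  simp at this
  linarith

lemma IsTest.cauchy_integrable {h : ℝ → ℂ} (hh : IsTest h) {z : ℂ} (hz : 0 < z.im) :
    Integrable fun t : ℝ => h t * (I / (z - t)) := by
  refine hh.integrable.mul_bdd (c := z.im⁻¹) ?_
    (Filter.Eventually.of_forall fun t => norm_I_div_le hz t)
  exact Measurable.aestronglyMeasurable (by fun_prop)

lemma norm_cauchy_le (h : ℝ → ℂ) (hh : Integrable h) {z : ℂ} {d : ℝ} (hd : 0 < d)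
    (hz : ∀ t, h t ≠ 0 → d ≤ ‖z - t‖) : ‖cauchy h z‖ ≤ d⁻¹ * ∫ t, ‖h t‖ := by
  rw [← integral_const_mul]
  refine norm_integral_le_of_norm_le (hh.norm.const_mul _) (Filter.Eventually.of_forall fun t => ?_)
  rw [norm_mul, mul_comm, norm_div, Complex.norm_I, one_div]
  rcases eq_or_ne (h t) 0 with h0 | h0
  · simp [h0]
  · exact mul_le_mul_of_nonneg_right (inv_anti₀ hd (hz t h0)) (norm_nonneg _)

lemma IsTest.differentiableAt_cauchy {h : ℝ → ℂ} (hh : IsTest h) {z : ℂ} (hz : 0 < z.im) :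
    DifferentiableAt ℂ (cauchy h) z := by
  have hball : ∀ w ∈ Metric.ball z (z.im / 2), z.im / 2 < w.im := by
    intro w hw
    have h1 : ‖w - z‖ < z.im / 2 := by simpa [dist_eq_norm] using hw
    have h2 := (abs_le.1 ((Complex.abs_im_le_norm (w - z)))).1
    simp only [Complex.sub_im] at h2
    linarith
  have hpos : ∀ w ∈ Metric.ball z (z.im / 2), 0 < w.im := fun w hw => by
    have := hball w hw; linarith
  have key := hasDerivAt_integral_of_dominated_loc_of_deriv_le (μ := volume) (𝕜 := ℂ)
    (F := fun (w : ℂ) (t : ℝ) => h t * (I / (w - t)))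
    (F' := fun (w : ℂ) (t : ℝ) => h t * (-I / (w - t) ^ 2))
    (bound := fun t => ‖h t‖ * ((z.im / 2)⁻¹ ^ 2)) (x₀ := z)
    (Metric.ball_mem_nhds z (by linarith : 0 < z.im / 2))
    (Filter.Eventually.of_forall fun w => Measurable.aestronglyMeasurable
      (hh.measurable.mul (by fun_prop)))
    (hh.cauchy_integrable hz)
    (Measurable.aestronglyMeasurable (hh.measurable.mul (by fun_prop)))
    (Filter.Eventually.of_forall fun t w hw => ?_)
    (hh.integrable.norm.mul_const _)
    (Filter.Eventually.of_forall fun t w hw => ?_)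
  · exact key.2.differentiableAt
  · have h1 := norm_I_div_le (hpos w hw) t
    have h2 : w.im⁻¹ ≤ (z.im / 2)⁻¹ := inv_anti₀ (by linarith) (hball w hw).le
    have h3 : ‖-I / (w - t) ^ 2‖ = ‖I / (w - t)‖ ^ 2 := by
      simp [norm_pow]
    rw [norm_mul, h3]
    gcongr
    exact h1.trans h2
  · have h1 : HasDerivAt (fun w : ℂ => w - t) 1 w := (hasDerivAt_id w).sub_const _
    have h2 := (((hasDerivAt_const w I).div h1 (sub_ofReal_ne_zero (hpos w hw) t))).const_mul (h t)
    exact h2.congr_deriv (by simp)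

lemma re_I_div (z : ℂ) (t : ℝ) : (I / (z - t)).re = z.im / ((z.re - t) ^ 2 + z.im ^ 2) := by
  rw [Complex.div_re]
  simp [Complex.normSq_apply, pow_two]

lemma re_cauchy {u : ℝ → ℝ} (hu : IsTest fun x => (u x : ℂ)) {z : ℂ} (hz : 0 < z.im) :
    (cauchy (fun x => (u x : ℂ)) z).re = ∫ t, u t * (z.im / ((z.re - t) ^ 2 + z.im ^ 2)) := by
  have := (Complex.reCLM.integral_comp_comm (hu.cauchy_integrable hz)).symm
  simp only [Complex.reCLM_apply] at this
  rw [cauchy, this]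
  congr 1; ext t
  rw [Complex.re_ofReal_mul, re_I_div]

lemma re_cauchy_eq_avg {u : ℝ → ℝ} (hu : IsTest fun x => (u x : ℂ)) {ε : ℝ≥0} (hε : ε ≠ 0)
    (x : ℝ) : (cauchy (fun x => (u x : ℂ)) (x + ε * I)).re =
      Real.pi * avg (ProbabilityTheory.cauchyMeasure 0 ε) u x := by
  have him : 0 < ((x : ℂ) + ε * I).im := by simpa using pos_iff_ne_zero.2 hε
  rw [re_cauchy hu him, avg, ProbabilityTheory.cauchyMeasure_of_scale_ne_zero _ hε]
  have hd : ∀ y, (ProbabilityTheory.cauchyPDF 0 ε y) =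
      ((ProbabilityTheory.cauchyPDFReal 0 ε y).toNNReal : ℝ≥0∞) := fun y => rfl
  rw [funext hd, integral_withDensity_eq_integral_smul
    (ProbabilityTheory.measurable_cauchyPDFReal 0 ε).real_toNNReal, ← integral_const_mul,
    ← integral_sub_left_eq_self _ _ x]
  congr 1; ext y
  have hpos := (ProbabilityTheory.cauchyPDF_pos 0 hε y).le
  rw [NNReal.smul_def, Real.coe_toNNReal _ hpos, ProbabilityTheory.cauchyPDFReal_def]
  have := Real.pi_ne_zero
  simp
  field_simp

lemma re_cauchy_pos {u : ℝ → ℝ} (hu : IsTest fun x => (u x : ℂ)) (h0 : ∀ x, 0 ≤ u x)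
    (hne : ¬ u =ᵐ[volume] 0) {z : ℂ} (hz : 0 < z.im) :
    0 < (cauchy (fun x => (u x : ℂ)) z).re := by
  have hker : ∀ t : ℝ, 0 < z.im / ((z.re - t) ^ 2 + z.im ^ 2) := fun t => by positivity
  have hint : Integrable fun t => u t * (z.im / ((z.re - t) ^ 2 + z.im ^ 2)) := by
    have := Complex.reCLM.integrable_comp (hu.cauchy_integrable hz)
    refine this.congr (Filter.Eventually.of_forall fun t => ?_)
    simp only [Complex.reCLM_apply, Complex.re_ofReal_mul, re_I_div]
  rw [re_cauchy hu hz]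
  refine lt_of_le_of_ne (integral_nonneg fun t => mul_nonneg (h0 t) (hker t).le) fun h => hne ?_
  have := (integral_eq_zero_iff_of_nonneg (fun t => mul_nonneg (h0 t) (hker t).le) hint).1 h.symm
  filter_upwards [this] with t ht
  exact (mul_eq_zero.1 ht).resolve_right (hker t).ne'

end CauchyTransform

section RieszPositive

lemma IsTest.continuous_cauchy {h : ℝ → ℂ} (hh : IsTest h) {ε : ℝ≥0} (hε : ε ≠ 0) :
    Continuous fun x : ℝ => cauchy h (x + ε * I) := by
  rw [continuous_iff_continuousAt]
  intro x
  have him : 0 < ((x : ℂ) + ε * I).im := by simpa using pos_iff_ne_zero.2 hε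
  exact (hh.differentiableAt_cauchy him).continuousAt.comp
    (f := fun x : ℝ => (x : ℂ) + ε * I) (by fun_prop)

/-- The contour integral of `F ^ p` along a horizontal line tends to zero. -/
lemma norm_intervalIntegral_cauchy_cpow_le {p : ℝ} (hp : 1 < p) {u : ℝ → ℝ}
    (hu : IsTest fun x => (u x : ℂ)) (h0 : ∀ x, 0 ≤ u x) (hne : ¬ u =ᵐ[volume] 0) {R X : ℝ}
    (hR : 0 ≤ R) (hsupp : ∀ x, u x ≠ 0 → |x| ≤ R) {ε : ℝ≥0} (hε : ε ≠ 0)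
    (hX : 2 * R + 1 ≤ X) (hXε : ε ≤ X) :
    ‖∫ x in (-X)..X, (cauchy (fun x => (u x : ℂ)) (x + ε * I)) ^ (p : ℂ)‖ ≤
      4 * (2 * ∫ x, ‖u x‖) ^ p * X ^ (1 - p) := by
  have hX0 : 0 < X := by linarith
  have hε0 : (0 : ℝ) < ε := by simpa using pos_iff_ne_zero.2 hε
  set F := cauchy (fun x => (u x : ℂ)) with hF
  set M := ∫ x, ‖u x‖ with hM
  have hM0 : 0 ≤ M := integral_nonneg fun x => norm_nonneg _
  have hnorm : ∫ x, ‖(u x : ℂ)‖ = M := by simp [hM]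
  have hrect := Complex.integral_boundary_rect_eq_zero_of_differentiableOn
    (fun z => F z ^ (p : ℂ)) (-X + ε * I) (X + X * I) (by
      intro z hz
      have hz2 : z.im ∈ Set.uIcc (ε : ℝ) X := by simpa using hz.2
      rw [Set.uIcc_of_le hXε] at hz2
      have hzi : 0 < z.im := hε0.trans_le hz2.1
      exact ((hu.differentiableAt_cauchy hzi).cpow_const
        (Or.inl (re_cauchy_pos hu h0 hne hzi))).differentiableWithinAt)
  simp only [Complex.add_re, Complex.neg_re, Complex.ofReal_re, Complex.mul_re, Complex.I_re,
    mul_zero, Complex.ofReal_im, Complex.I_im, mul_one, sub_self, add_zero, Complex.add_im,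
    Complex.neg_im, neg_zero, Complex.mul_im, zero_add] at hrect
  have hpoint : ∀ z : ℂ, (∀ t, u t ≠ 0 → X / 2 ≤ ‖z - t‖) →
      ‖F z ^ (p : ℂ)‖ ≤ (2 * M) ^ p * X ^ (-p) := by
    intro z hz
    rw [Complex.norm_cpow_real]
    have := norm_cauchy_le (fun x => (u x : ℂ)) hu.integrable (z := z) (d := X / 2) (by linarith)
      (fun t ht => hz t (by simpa using ht))
    rw [hnorm] at this
    refine (Real.rpow_le_rpow (norm_nonneg _) this (by linarith)).trans (le_of_eq ?_)
    rw [Real.rpow_neg hX0.le, ← Real.inv_rpow hX0.le, ← Real.mul_rpow (by positivity)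
      (by positivity)]
    congr 1
    field_simp
  have htop : ‖∫ x in (-X)..X, F (x + X * I) ^ (p : ℂ)‖ ≤ (2 * M) ^ p * X ^ (-p) * (2 * X) := by
    refine (intervalIntegral.norm_integral_le_of_norm_le_const fun x _ => hpoint _ ?_).trans ?_
    · intro t _
      have := Complex.abs_im_le_norm ((x : ℂ) + X * I - t)
      simp [abs_of_pos hX0] at this
      linarith
    · rw [show X - -X = 2 * X by ring, abs_of_pos (by linarith)]
  have hside : ∀ Y : ℝ, |Y| = X → ‖∫ y in (ε : ℝ)..X, F (Y + y * I) ^ (p : ℂ)‖ ≤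
      (2 * M) ^ p * X ^ (-p) * X := by
    intro Y hY
    refine (intervalIntegral.norm_integral_le_of_norm_le_const fun x _ => hpoint _ ?_).trans ?_
    · intro t ht
      have h1 := Complex.abs_re_le_norm ((Y : ℂ) + x * I - t)
      simp at h1
      have h2 := abs_sub_abs_le_abs_sub Y t
      have h3 := hsupp t ht
      rw [hY] at h2
      linarith
    · rw [abs_of_nonneg (by linarith)]
      gcongr
      linarith
  have h1 := hside X (abs_of_pos hX0)
  have h2 := hside (-X) (by rw [abs_neg, abs_of_pos hX0])
  have hXp : X ^ (-p) * X = X ^ (1 - p) := by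
    rw [← Real.rpow_add_one hX0.ne']; congr 1; ring
  push_cast at h2
  have heq : ∫ x in (-X)..X, F (x + ε * I) ^ (p : ℂ) =
      (∫ x in (-X)..X, F (x + X * I) ^ (p : ℂ)) -
      I • (∫ y in (ε : ℝ)..X, F (X + y * I) ^ (p : ℂ)) +
      I • (∫ y in (ε : ℝ)..X, F (-X + y * I) ^ (p : ℂ)) := by
    push_cast at hrect
    linear_combination hrect
  rw [heq]
  refine (norm_add_le _ _).trans ?_
  have h3 := norm_sub_le (∫ x in (-X)..X, F (x + X * I) ^ (p : ℂ))
    (I • (∫ y in (ε : ℝ)..X, F (X + y * I) ^ (p : ℂ)))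
  rw [norm_smul, Complex.norm_I, one_mul] at h3 ⊢
  have h4 : (2 * M) ^ p * X ^ (-p) * X = (2 * M) ^ p * X ^ (1 - p) := by rw [mul_assoc, hXp]
  linarith

lemma avg_rpow_le {p : ℝ} (hp : 1 ≤ p) (μ : Measure ℝ) [IsProbabilityMeasure μ] {u : ℝ → ℝ}
    (hu : IsTest fun x => (u x : ℂ)) (h0 : ∀ x, 0 ≤ u x) (x : ℝ) :
    avg μ u x ^ p ≤ avg μ (fun x => u x ^ p) x := by
  obtain ⟨B, hB⟩ := hu.bounded
  have hm : Measurable u := Complex.measurable_re.comp hu.measurable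
  have hm' : Measurable fun y => u (x - y) := hm.comp (measurable_const.sub measurable_id)
  refine (convexOn_rpow hp).map_integral_le (f := fun y => u (x - y))
    (Real.continuous_rpow_const (by linarith)).continuousOn isClosed_Ici
    (Filter.Eventually.of_forall fun y => h0 _) ?_ ?_
  · refine Integrable.of_bound hm'.aestronglyMeasurable B (Filter.Eventually.of_forall fun y => ?_)
    simpa using hB (x - y)
  · refine Integrable.of_bound (hm'.pow_const p).aestronglyMeasurable (B ^ p)
      (Filter.Eventually.of_forall fun y => ?_)
    have := hB (x - y)
    rw [Complex.norm_of_nonneg (h0 _)] at this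
    rw [Function.comp_apply, Real.norm_of_nonneg (Real.rpow_nonneg (h0 _) _)]
    exact Real.rpow_le_rpow (h0 _) this (by linarith)

lemma exists_integral_norm_cauchy_rpow_le {p : ℝ} (hp1 : 1 < p) (hp2 : p ≤ 2) :
    ∃ C, 0 ≤ C ∧ ∀ (u : ℝ → ℝ) (R : ℝ) (ε : ℝ≥0), (IsTest fun x => (u x : ℂ)) →
      (∀ x, 0 ≤ u x) → 0 ≤ R → (∀ x, u x ≠ 0 → |x| ≤ R) → ε ≠ 0 →
      Integrable (fun x : ℝ => ‖cauchy (fun x => (u x : ℂ)) (x + ε * I)‖ ^ p) ∧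
      ∫ x : ℝ, ‖cauchy (fun x => (u x : ℂ)) (x + ε * I)‖ ^ p ≤ C * ∫ x, u x ^ p := by
  obtain ⟨A, B, hA, hB, hAB⟩ := exists_norm_rpow_le_re_rpow hp1 hp2
  have hpi := Real.pi_pos
  refine ⟨A * Real.pi ^ p, by positivity, fun u R ε hu h0 hR hsupp hε => ?_⟩
  have hI0 : 0 ≤ ∫ x, u x ^ p := integral_nonneg fun x => Real.rpow_nonneg (h0 x) _
  by_cases hne : u =ᵐ[volume] 0
  · have hF : ∀ z, cauchy (fun x => (u x : ℂ)) z = 0 := by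
      intro z
      refine integral_eq_zero_of_ae ?_
      filter_upwards [hne] with t ht
      simp [ht]
    simp only [hF, norm_zero, Real.zero_rpow (by linarith : p ≠ 0)]
    exact ⟨integrable_zero _ _ _, by simp; positivity⟩
  set F : ℝ → ℂ := fun x => cauchy (fun x => (u x : ℂ)) (x + ε * I) with hF
  set μ := ProbabilityTheory.cauchyMeasure 0 ε
  have hFc : Continuous F := hu.continuous_cauchy hε
  have hre : ∀ x, 0 < (F x).re := fun x =>
    re_cauchy_pos hu h0 hne (by simpa using pos_iff_ne_zero.2 hε)
  have hslit : ∀ x, F x ∈ Complex.slitPlane := fun x => Or.inl (hre x)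
  have hup : Integrable fun x => u x ^ p := by
    refine (hu.norm_rpow_integrable hp1.le).congr (Filter.Eventually.of_forall fun x => ?_)
    simp only [Complex.norm_of_nonneg (h0 x)]
  have hum : Measurable u := Complex.measurable_re.comp hu.measurable
  have hupm : StronglyMeasurable fun x => u x ^ p := (hum.pow_const p).stronglyMeasurable
  have havg := integrable_avg μ hupm hup
  have havg0 : ∀ x, 0 ≤ avg μ (fun x => u x ^ p) x := fun x =>
    integral_nonneg fun y => Real.rpow_nonneg (h0 _) _
  have hrep : ∀ x, (F x).re ^ p ≤ Real.pi ^ p * avg μ (fun x => u x ^ p) x := by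
    intro x
    have havgu : 0 ≤ avg μ u x := integral_nonneg fun y => h0 _
    rw [hF, re_cauchy_eq_avg hu hε, Real.mul_rpow hpi.le havgu]
    gcongr
    exact avg_rpow_le hp1.le μ hu h0 x
  have hc1 : Continuous fun x => ‖F x‖ ^ p :=
    hFc.norm.rpow_const fun x => Or.inr (by linarith)
  have hc2 : Continuous fun x => F x ^ (p : ℂ) :=
    hFc.cpow continuous_const hslit
  have hc4 : Continuous fun x => (F x ^ (p : ℂ)).re := Complex.continuous_re.comp hc2
  have hc3 : Continuous fun x => (F x).re ^ p :=
    (Complex.continuous_re.comp hFc).rpow_const fun x => Or.inr (by linarith)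
  set M := 4 * (2 * ∫ x, ‖u x‖) ^ p
  have hM : 0 ≤ M := by
    have : 0 ≤ ∫ x, ‖u x‖ := integral_nonneg fun x => norm_nonneg _
    positivity
  have hbound : ∀ X : ℝ, max (2 * R + 1) ε ≤ X → ∫ x in (-X)..X, ‖F x‖ ^ p ≤
      A * Real.pi ^ p * (∫ x, u x ^ p) + B * (M * X ^ (1 - p)) := by
    intro X hX
    have hX1 : 2 * R + 1 ≤ X := (le_max_left _ _).trans hX
    have hX2 : (ε : ℝ) ≤ X := (le_max_right _ _).trans hX
    have hXX : -X ≤ X := by linarith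
    have e1 : ∫ x in (-X)..X, ‖F x‖ ^ p ≤
        ∫ x in (-X)..X, (A * (F x).re ^ p - B * (F x ^ (p : ℂ)).re) :=
      intervalIntegral.integral_mono hXX (hc1.intervalIntegrable _ _)
        (((hc3.const_mul A).sub (hc4.const_mul B)).intervalIntegrable
          _ _) fun x => hAB _ (hre x)
    have e2 : ∫ x in (-X)..X, (A * (F x).re ^ p - B * (F x ^ (p : ℂ)).re) =
        A * (∫ x in (-X)..X, (F x).re ^ p) - B * (∫ x in (-X)..X, F x ^ (p : ℂ)).re := by
      rw [intervalIntegral.integral_sub ((hc3.const_mul A).intervalIntegrable _ _)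
        ((hc4.const_mul B).intervalIntegrable _ _),
        intervalIntegral.integral_const_mul, intervalIntegral.integral_const_mul]
      congr 2
      exact Complex.reCLM.intervalIntegral_comp_comm (hc2.intervalIntegrable _ _)
    have e3 : ∫ x in (-X)..X, (F x).re ^ p ≤ Real.pi ^ p * ∫ x, u x ^ p := by
      rw [← integral_avg μ hupm hup, ← integral_const_mul, intervalIntegral.integral_of_le hXX]
      refine (setIntegral_mono (hc3.integrableOn_Ioc) (havg.const_mul _).integrableOn hrep).trans ?_
      exact setIntegral_le_integral (havg.const_mul _)
        (Filter.Eventually.of_forall fun x => mul_nonneg (by positivity) (havg0 x))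
    have e4 := norm_intervalIntegral_cauchy_cpow_le hp1 hu h0 hne hR hsupp hε hX1 hX2
    have e5 := (abs_le.1 ((Complex.abs_re_le_norm _).trans e4)).1
    have e6 := mul_le_mul_of_nonneg_left e3 hA
    have e7 := mul_le_mul_of_nonneg_left e5 hB
    rw [e2] at e1
    linarith
  have hatTop : Filter.Tendsto (fun X : ℝ => X) Filter.atTop Filter.atTop := Filter.tendsto_id
  have hatBot : Filter.Tendsto (fun X : ℝ => -X) Filter.atTop Filter.atBot :=
    Filter.tendsto_neg_atTop_atBot
  have hint : Integrable fun x => ‖F x‖ ^ p := by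
    refine integrable_of_intervalIntegral_norm_bounded (l := Filter.atTop)
      (A * Real.pi ^ p * (∫ x, u x ^ p) + B * (M * 1)) (a := fun X : ℝ => -X) (b := fun X => X)
      (fun X => hc1.integrableOn_Ioc) hatBot hatTop ?_
    filter_upwards [Filter.eventually_ge_atTop (max (2 * R + 1) (ε : ℝ))] with X hX
    simp only [Real.norm_of_nonneg (Real.rpow_nonneg (norm_nonneg _) _)]
    refine (hbound X hX).trans ?_
    gcongr
    refine Real.rpow_le_one_of_one_le_of_nonpos ?_ (by linarith)
    linarith [(le_max_left (2 * R + 1) (ε : ℝ)).trans hX]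
  refine ⟨hint, ?_⟩
  have hlim : Filter.Tendsto (fun X : ℝ => A * Real.pi ^ p * (∫ x, u x ^ p) +
      B * (M * X ^ (1 - p))) Filter.atTop (nhds (A * Real.pi ^ p * (∫ x, u x ^ p) + B * (M * 0))) := by
    have := tendsto_rpow_neg_atTop (by linarith : 0 < p - 1)
    rw [neg_sub] at this
    exact ((this.const_mul M).const_mul B).const_add _
  rw [mul_zero, mul_zero, add_zero] at hlim
  refine le_of_tendsto_of_tendsto (intervalIntegral_tendsto_integral hint hatBot hatTop) hlim ?_
  filter_upwards [Filter.eventually_ge_atTop (max (2 * R + 1) (ε : ℝ))] with X hX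
  exact hbound X hX

end RieszPositive

section RieszProjection

lemma im_add_mul_I_pos {ε : ℝ≥0} (hε : ε ≠ 0) (x : ℝ) : 0 < ((x : ℂ) + ε * I).im := by
  simpa using pos_iff_ne_zero.2 hε

lemma IsTest.norm_cauchy_line_le {h : ℝ → ℂ} (hh : IsTest h) {ε : ℝ≥0} (hε : ε ≠ 0) (x : ℝ) :
    ‖cauchy h (x + ε * I)‖ ≤ (ε : ℝ)⁻¹ * ∫ t, ‖h t‖ := by
  have hε0 : (0 : ℝ) < ε := by simpa using pos_iff_ne_zero.2 hε
  refine norm_cauchy_le h hh.integrable hε0 fun t _ => ?_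
  simpa [abs_of_pos hε0] using Complex.abs_im_le_norm ((x : ℂ) + ε * I - t)

lemma IsTest.cauchy_mul {h k : ℝ → ℂ} (hh : IsTest h) (hk : IsTest k) {ε : ℝ≥0} (hε : ε ≠ 0) :
    Integrable fun x : ℝ => cauchy h (x + ε * I) * k x :=
  hk.integrable.bdd_mul (hh.continuous_cauchy hε).aestronglyMeasurable
    (Filter.Eventually.of_forall fun x => hh.norm_cauchy_line_le hε x)

lemma IsTest.indicator {f : ℝ → ℂ} (hf : IsTest f) {s : Set ℝ} (hs : MeasurableSet s) :
    IsTest (s.indicator f) := by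
  obtain ⟨B, hB⟩ := hf.bounded
  exact ⟨hf.measurable.indicator hs, hf.integrable.indicator hs, B, fun x =>
    (norm_indicator_le_norm_self f x).trans (hB x)⟩

lemma exists_norm_integral_cauchy_mul_le_of_nonneg {p q : ℝ} (hpq : p.HolderConjugate q)
    (hp2 : p ≤ 2) :
    ∃ C, 0 ≤ C ∧ ∀ (u : ℝ → ℝ) (k : ℝ → ℂ) (ε : ℝ≥0), (IsTest fun x => (u x : ℂ)) →
      (∀ x, 0 ≤ u x) → IsTest k → ε ≠ 0 →
      ‖∫ x : ℝ, cauchy (fun x => (u x : ℂ)) (x + ε * I) * k x‖ ≤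
        C * (∫ x, u x ^ p) + ∫ x, ‖k x‖ ^ q := by
  have hp1 := hpq.lt
  have hq1 := hpq.symm.lt
  obtain ⟨C, hC, H⟩ := exists_integral_norm_cauchy_rpow_le hp1 hp2
  refine ⟨C, hC, fun u k ε hu h0 hk hε => ?_⟩
  have hup : ∀ {u : ℝ → ℝ}, (IsTest fun x => (u x : ℂ)) → (∀ x, 0 ≤ u x) →
      Integrable fun x => u x ^ p := by
    intro u hu h0
    refine (hu.norm_rpow_integrable hp1.le).congr (Filter.Eventually.of_forall fun x => ?_)
    simp only [Complex.norm_of_nonneg (h0 x)]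
  let v : ℕ → ℝ → ℝ := fun n => (Set.Icc (-n : ℝ) n).indicator u
  have hve : ∀ n x, (v n x : ℂ) = (Set.Icc (-n : ℝ) n).indicator (fun x => (u x : ℂ)) x := by
    intro n x
    by_cases hx : x ∈ Set.Icc (-n : ℝ) n <;> simp [v, hx]
  have hv : ∀ n, IsTest fun x => (v n x : ℂ) := by
    intro n
    simp only [hve]
    exact hu.indicator measurableSet_Icc
  have hv0 : ∀ n x, 0 ≤ v n x := fun n x => Set.indicator_nonneg (fun x _ => h0 x) x
  have hvu : ∀ n x, v n x ≤ u x := fun n x => Set.indicator_le_self' (fun x _ => h0 x) x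
  have hvn : ∀ n x, ‖(v n x : ℂ)‖ ≤ ‖(u x : ℂ)‖ := fun n x => by
    rw [Complex.norm_of_nonneg (hv0 n x), Complex.norm_of_nonneg (h0 x)]; exact hvu n x
  have hfin : ∀ n, ‖∫ x : ℝ, cauchy (fun x => (v n x : ℂ)) (x + ε * I) * k x‖ ≤
      C * (∫ x, u x ^ p) + ∫ x, ‖k x‖ ^ q := by
    intro n
    obtain ⟨hint, hle⟩ := H (v n) n ε (hv n) (hv0 n) n.cast_nonneg (fun x hx => by
      have := Set.mem_of_indicator_ne_zero hx
      exact abs_le.2 this) hε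
    have hkq := hk.norm_rpow_integrable hq1.le
    calc _ ≤ ∫ x : ℝ, (‖cauchy (fun x => (v n x : ℂ)) (x + ε * I)‖ ^ p + ‖k x‖ ^ q) := by
          refine norm_integral_le_of_norm_le (hint.add hkq) (Filter.Eventually.of_forall fun x => ?_)
          rw [norm_mul]
          refine (Real.young_inequality_of_nonneg (norm_nonneg _) (norm_nonneg _) hpq).trans ?_
          exact add_le_add (div_le_self (by positivity) hp1.le) (div_le_self (by positivity) hq1.le)
      _ = (∫ x : ℝ, ‖cauchy (fun x => (v n x : ℂ)) (x + ε * I)‖ ^ p) + ∫ x, ‖k x‖ ^ q :=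
          integral_add hint hkq
      _ ≤ _ := by
          gcongr
          refine hle.trans (mul_le_mul_of_nonneg_left
            (integral_mono (hup (hv n) (hv0 n)) (hup hu h0) fun x => ?_) hC)
          exact Real.rpow_le_rpow (hv0 n x) (hvu n x) (by linarith)
  have hptw : ∀ x, ∀ᶠ n : ℕ in Filter.atTop, v n x = u x := by
    intro x
    obtain ⟨N, hN⟩ := exists_nat_ge |x|
    filter_upwards [Filter.eventually_ge_atTop N] with n hn
    have hx : x ∈ Set.Icc (-n : ℝ) n := abs_le.1 (hN.trans (by exact_mod_cast hn))
    exact Set.indicator_of_mem hx u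
  have hlim1 : ∀ x : ℝ, Filter.Tendsto (fun n => cauchy (fun x => (v n x : ℂ)) (x + ε * I))
      Filter.atTop (nhds (cauchy (fun x => (u x : ℂ)) (x + ε * I))) := by
    intro x
    refine tendsto_integral_of_dominated_convergence
      (fun t => ‖(u t : ℂ) * (I / ((x : ℂ) + ε * I - t))‖)
      (fun n => ((hv n).cauchy_integrable (im_add_mul_I_pos hε x)).aestronglyMeasurable)
      (hu.cauchy_integrable (im_add_mul_I_pos hε x)).norm
      (fun n => Filter.Eventually.of_forall fun t => ?_)
      (Filter.Eventually.of_forall fun t => ?_)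
    · rw [norm_mul, norm_mul]
      gcongr
      exact hvn n t
    · refine tendsto_nhds_of_eventually_eq ?_
      filter_upwards [hptw t] with n hn
      rw [hn]
  have hlim2 : Filter.Tendsto
      (fun n => ∫ x : ℝ, cauchy (fun x => (v n x : ℂ)) (x + ε * I) * k x)
      Filter.atTop (nhds (∫ x : ℝ, cauchy (fun x => (u x : ℂ)) (x + ε * I) * k x)) := by
    refine tendsto_integral_of_dominated_convergence
      (fun x => (ε : ℝ)⁻¹ * (∫ t, ‖(u t : ℂ)‖) * ‖k x‖)
      (fun n => ((hv n).cauchy_mul hk hε).aestronglyMeasurable)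
      (hk.integrable.norm.const_mul _)
      (fun n => Filter.Eventually.of_forall fun x => ?_)
      (Filter.Eventually.of_forall fun x => (hlim1 x).mul_const _)
    rw [norm_mul]
    gcongr
    exact ((hv n).norm_cauchy_line_le hε x).trans (mul_le_mul_of_nonneg_left
      (integral_mono (hv n).integrable.norm hu.integrable.norm fun x => hvn n x) (by positivity))
  exact le_of_tendsto hlim2.norm (Filter.Eventually.of_forall hfin)

lemma exists_norm_integral_cauchy_mul_le {p q : ℝ} (hpq : p.HolderConjugate q)
    (hp2 : p ≤ 2) :
    ∃ C, 0 ≤ C ∧ ∀ (h k : ℝ → ℂ) (ε : ℝ≥0), IsTest h → IsTest k → ε ≠ 0 →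
      ‖∫ x : ℝ, cauchy h (x + ε * I) * k x‖ ≤
        C * ((∫ x, ‖h x‖ ^ p) + ∫ x, ‖k x‖ ^ q) := by
  have hp1 := hpq.lt
  obtain ⟨C, hC, H⟩ := exists_norm_integral_cauchy_mul_le_of_nonneg hpq hp2
  refine ⟨4 * (C + 1), by linarith, fun h k ε hh hk hε => ?_⟩
  obtain ⟨B, hB⟩ := hh.bounded
  have hI : 0 ≤ ∫ x, ‖h x‖ ^ p := integral_nonneg fun x => by positivity
  have hK : 0 ≤ ∫ x, ‖k x‖ ^ q := integral_nonneg fun x => by positivity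
  have key : ∀ φ : ℂ → ℝ, Measurable φ → (∀ z, 0 ≤ φ z) → (∀ z, φ z ≤ ‖z‖) →
      (IsTest fun x => (φ (h x) : ℂ)) ∧
      ‖∫ x : ℝ, cauchy (fun x => (φ (h x) : ℂ)) (x + ε * I) * k x‖ ≤
        (C + 1) * ((∫ x, ‖h x‖ ^ p) + ∫ x, ‖k x‖ ^ q) := by
    intro φ hφ h0 hle
    have hn : ∀ x, ‖(φ (h x) : ℂ)‖ ≤ ‖h x‖ := fun x => by
      rw [Complex.norm_of_nonneg (h0 _)]; exact hle _
    have hm : Measurable fun x => (φ (h x) : ℂ) :=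
      Complex.measurable_ofReal.comp (hφ.comp hh.measurable)
    have ht : IsTest fun x => (φ (h x) : ℂ) :=
      ⟨hm, hh.integrable.mono hm.aestronglyMeasurable (Filter.Eventually.of_forall hn),
        B, fun x => (hn x).trans (hB x)⟩
    refine ⟨ht, (H _ k ε ht (fun x => h0 _) hk hε).trans ?_⟩
    have h2 : ∫ x, φ (h x) ^ p ≤ ∫ x, ‖h x‖ ^ p := by
      refine integral_mono_of_nonneg (Filter.Eventually.of_forall fun x => Real.rpow_nonneg (h0 _) _)
        (hh.norm_rpow_integrable hp1.le) (Filter.Eventually.of_forall fun x => ?_)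
      exact Real.rpow_le_rpow (h0 _) (hle _) (by linarith)
    have := mul_le_mul_of_nonneg_left h2 hC
    nlinarith [mul_nonneg hC hK]
  obtain ⟨t1, b1⟩ := key (fun z => max z.re 0) (by fun_prop) (fun z => le_max_right _ _)
    fun z => max_le (Complex.re_le_norm z) (norm_nonneg z)
  obtain ⟨t2, b2⟩ := key (fun z => max (-z.re) 0) (by fun_prop) (fun z => le_max_right _ _)
    fun z => max_le ((neg_le_abs _).trans (Complex.abs_re_le_norm z)) (norm_nonneg z)
  obtain ⟨t3, b3⟩ := key (fun z => max z.im 0) (by fun_prop) (fun z => le_max_right _ _)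
    fun z => max_le (Complex.im_le_norm z) (norm_nonneg z)
  obtain ⟨t4, b4⟩ := key (fun z => max (-z.im) 0) (by fun_prop) (fun z => le_max_right _ _)
    fun z => max_le ((neg_le_abs _).trans (Complex.abs_im_le_norm z)) (norm_nonneg z)
  have hdec : ∀ x : ℝ, cauchy h (x + ε * I) * k x =
      (cauchy (fun x => ((max (h x).re 0 : ℝ) : ℂ)) (x + ε * I) * k x -
        cauchy (fun x => ((max (-(h x).re) 0 : ℝ) : ℂ)) (x + ε * I) * k x) +
      I * (cauchy (fun x => ((max (h x).im 0 : ℝ) : ℂ)) (x + ε * I) * k x -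
        cauchy (fun x => ((max (-(h x).im) 0 : ℝ) : ℂ)) (x + ε * I) * k x) := by
    intro x
    have hz := im_add_mul_I_pos hε x
    rw [← sub_mul, ← sub_mul, ← mul_assoc, ← add_mul]
    congr 1
    unfold cauchy
    have i12 := (t1.cauchy_integrable hz).sub (t2.cauchy_integrable hz)
    have i34 := ((t3.cauchy_integrable hz).sub (t4.cauchy_integrable hz)).const_mul I
    simp only [Pi.sub_apply] at i34
    rw [← integral_sub (t1.cauchy_integrable hz) (t2.cauchy_integrable hz),
      ← integral_sub (t3.cauchy_integrable hz) (t4.cauchy_integrable hz), ← integral_const_mul]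
    refine Eq.trans ?_ (integral_add i12 i34)
    congr 1; ext t
    have e : ∀ a : ℝ, max a 0 - max (-a) 0 = a := fun a => by
      rcases le_total a 0 with h | h <;> simp [h]
    have e1 : h t = ((max (h t).re 0 : ℝ) - (max (-(h t).re) 0 : ℝ) : ℂ) +
        I * ((max (h t).im 0 : ℝ) - (max (-(h t).im) 0 : ℝ) : ℂ) := by
      rw [← Complex.ofReal_sub, ← Complex.ofReal_sub, e, e, mul_comm, Complex.re_add_im]
    conv_lhs => rw [e1]
    ring
  have i1 := t1.cauchy_mul hk hε
  have i2 := t2.cauchy_mul hk hε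
  have i3 := t3.cauchy_mul hk hε
  have i4 := t4.cauchy_mul hk hε
  have i34 := (i3.sub i4).const_mul I
  simp only [Pi.sub_apply] at i34
  have hsum := integral_add (i1.sub i2) i34
  simp only [Pi.sub_apply] at hsum
  rw [integral_congr_ae (Filter.Eventually.of_forall hdec), hsum, integral_const_mul,
    integral_sub i1 i2, integral_sub i3 i4]
  refine (norm_add_le _ _).trans ?_
  rw [norm_mul, Complex.norm_I, one_mul]
  have n1 := norm_sub_le (∫ x : ℝ, cauchy (fun x => ((max (h x).re 0 : ℝ) : ℂ)) (x + ε * I) * k x)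
    (∫ x : ℝ, cauchy (fun x => ((max (-(h x).re) 0 : ℝ) : ℂ)) (x + ε * I) * k x)
  have n2 := norm_sub_le (∫ x : ℝ, cauchy (fun x => ((max (h x).im 0 : ℝ) : ℂ)) (x + ε * I) * k x)
    (∫ x : ℝ, cauchy (fun x => ((max (-(h x).im) 0 : ℝ) : ℂ)) (x + ε * I) * k x)
  linarith

lemma integral_cauchy_mul_eq {h k : ℝ → ℂ} (hh : IsTest h) (hk : IsTest k) {ε : ℝ≥0}
    (hε : ε ≠ 0) :
    ∫ x : ℝ, cauchy h (x + ε * I) * k x =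
      ∫ ξ in Set.Ioi (0 : ℝ), (Real.exp (-ε * ξ) : ℂ) * (ft h ξ * ft k (-ξ)) := by
  have hε0 : (0 : ℝ) < ε := by simpa using pos_iff_ne_zero.2 hε
  let K : ℝ → ℝ × ℝ → ℂ := fun ξ z => h z.1 * k z.2 * cexp ((I * (z.2 + ε * I - z.1)) * ξ)
  have hexp : Integrable (fun ξ : ℝ => (Real.exp (-ε * ξ) : ℂ)) (volume.restrict (Set.Ioi 0)) :=
    (exp_neg_integrableOn_Ioi 0 hε0).ofReal
  have hhk : Integrable (fun z : ℝ × ℝ => h z.1 * k z.2) (volume.prod volume) :=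
    hh.integrable.mul_prod hk.integrable
  have hK : Integrable (Function.uncurry K)
      ((volume.restrict (Set.Ioi (0 : ℝ))).prod (volume.prod volume)) := by
    have h1 := (hexp.mul_prod hhk).mul_bdd (c := 1)
      (g := fun w : ℝ × ℝ × ℝ => cexp ((w.1 * (w.2.2 - w.2.1) : ℝ) * I))
      (Measurable.aestronglyMeasurable (by fun_prop))
      (Filter.Eventually.of_forall fun w => (Complex.norm_exp_ofReal_mul_I _).le)
    refine h1.congr (Filter.Eventually.of_forall fun w => ?_)
    simp only [Function.uncurry, K]
    rw [mul_right_comm, Complex.ofReal_exp, ← Complex.exp_add, mul_comm]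
    congr 2
    push_cast
    linear_combination (-(ε : ℂ) * w.1) * Complex.I_sq
  have hinner : ∀ ξ : ℝ, ∫ z, K ξ z ∂(volume.prod volume) =
      (Real.exp (-ε * ξ) : ℂ) * (ft h ξ * ft k (-ξ)) := by
    intro ξ
    rw [ft, ft, ← integral_prod_mul, ← integral_const_mul]
    congr 1; ext z
    simp only [K]
    have : cexp ((I * (z.2 + ε * I - z.1)) * ξ) = (Real.exp (-ε * ξ) : ℂ) *
        (cexp (-(I * z.1 * ξ)) * cexp (-(I * z.2 * ((-ξ : ℝ) : ℂ)))) := by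
      rw [Complex.ofReal_exp, ← Complex.exp_add, ← Complex.exp_add]
      congr 1
      push_cast
      linear_combination ((ε : ℂ) * ξ) * Complex.I_sq
    rw [this]; ring
  have hlap : ∀ z : ℝ × ℝ, ∫ ξ in Set.Ioi (0 : ℝ), K ξ z =
      h z.1 * (I / ((z.2 : ℂ) + ε * I - z.1)) * k z.2 := by
    intro z
    simp only [K]
    rw [integral_const_mul]
    have hne := sub_ofReal_ne_zero (im_add_mul_I_pos hε z.2) z.1
    have hre : (I * ((z.2 : ℂ) + ε * I - z.1)).re < 0 := by simpa using hε0
    rw [integral_exp_mul_complex_Ioi hre]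
    have : -cexp (I * ((z.2 : ℂ) + ε * I - z.1) * (0 : ℝ)) / (I * ((z.2 : ℂ) + ε * I - z.1)) =
        I / ((z.2 : ℂ) + ε * I - z.1) := by
      rw [div_eq_div_iff (mul_ne_zero Complex.I_ne_zero hne) hne]
      simp only [Complex.ofReal_zero, mul_zero, Complex.exp_zero]
      linear_combination (-((z.2 : ℂ) + ε * I - z.1)) * Complex.I_sq
    rw [this]; ring
  have hprod : Integrable (fun z : ℝ × ℝ => h z.1 * (I / ((z.2 : ℂ) + ε * I - z.1)) * k z.2)
      (volume.prod volume) :=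
    hK.integral_prod_right.congr (Filter.Eventually.of_forall fun z => hlap z)
  calc ∫ x : ℝ, cauchy h (x + ε * I) * k x
      = ∫ x : ℝ, ∫ t : ℝ, h t * (I / ((x : ℂ) + ε * I - t)) * k x := by
        simp only [cauchy, integral_mul_const]
    _ = ∫ z : ℝ × ℝ, h z.1 * (I / ((z.2 : ℂ) + ε * I - z.1)) * k z.2 ∂(volume.prod volume) :=
        (integral_prod_symm _ hprod).symm
    _ = ∫ z : ℝ × ℝ, ∫ ξ in Set.Ioi (0 : ℝ), K ξ z ∂volume ∂(volume.prod volume) := by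
        simp only [hlap]
    _ = ∫ ξ in Set.Ioi (0 : ℝ), ∫ z, K ξ z ∂(volume.prod volume) :=
        (integral_integral_swap hK).symm
    _ = _ := by simp only [hinner]

lemma ft_comp_neg (f : ℝ → ℂ) (ξ : ℝ) : ft (fun x => f (-x)) ξ = ft f (-ξ) := by
  rw [ft, ft, ← integral_neg_eq_self]
  congr 1; ext x
  simp

/-- Boundedness of the Riesz projection, in dual form. -/
lemma exists_norm_integral_Ioi_ft_mul_le {p q : ℝ} (hpq : p.HolderConjugate q) :
    ∃ C, 0 ≤ C ∧ ∀ h k : ℝ → ℂ, IsTest h → IsTest k →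
      IntegrableOn (fun ξ => ft h ξ * ft k (-ξ)) (Set.Ioi 0) →
      ‖∫ ξ in Set.Ioi (0 : ℝ), ft h ξ * ft k (-ξ)‖ ≤
        C * ((∫ x, ‖h x‖ ^ p) + ∫ x, ‖k x‖ ^ q) := by
  have key : ∀ {p q : ℝ}, p.HolderConjugate q → p ≤ 2 → ∃ C, 0 ≤ C ∧ ∀ h k : ℝ → ℂ,
      IsTest h → IsTest k → IntegrableOn (fun ξ => ft h ξ * ft k (-ξ)) (Set.Ioi 0) →
      ‖∫ ξ in Set.Ioi (0 : ℝ), ft h ξ * ft k (-ξ)‖ ≤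
        C * ((∫ x, ‖h x‖ ^ p) + ∫ x, ‖k x‖ ^ q) := by
    intro p q hpq hp2
    obtain ⟨C, hC, H⟩ := exists_norm_integral_cauchy_mul_le hpq hp2
    refine ⟨C, hC, fun h k hh hk hint => ?_⟩
    let ε : ℕ → ℝ≥0 := fun n => 1 / ((n : ℝ≥0) + 1)
    have hε : ∀ n, ε n ≠ 0 := fun n => by positivity
    have hlim : Filter.Tendsto (fun n => ∫ ξ in Set.Ioi (0 : ℝ),
        (Real.exp (-ε n * ξ) : ℂ) * (ft h ξ * ft k (-ξ))) Filter.atTop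
        (nhds (∫ ξ in Set.Ioi (0 : ℝ), ft h ξ * ft k (-ξ))) := by
      refine tendsto_integral_of_dominated_convergence (fun ξ => ‖ft h ξ * ft k (-ξ)‖)
        (fun n => ?_) hint.norm (fun n => ?_) (Filter.Eventually.of_forall fun ξ => ?_)
      · exact (Measurable.aestronglyMeasurable (by fun_prop)).mul hint.aestronglyMeasurable
      · refine (ae_restrict_mem measurableSet_Ioi).mono fun ξ hξ => ?_
        rw [norm_mul]
        refine mul_le_of_le_one_left (norm_nonneg _) ?_
        rw [Complex.norm_of_nonneg (Real.exp_pos _).le, Real.exp_le_one_iff]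
        have : (0 : ℝ) < ξ := hξ
        have : (0 : ℝ) ≤ ε n := (ε n).2
        nlinarith
      · have h1 : Filter.Tendsto (fun n => (ε n : ℝ)) Filter.atTop (nhds 0) := by
          have := tendsto_one_div_add_atTop_nhds_zero_nat (𝕜 := ℝ)
          simpa [ε] using this
        have h2 : Filter.Tendsto (fun n => ((Real.exp (-ε n * ξ) : ℝ) : ℂ)) Filter.atTop
            (nhds ((Real.exp (-0 * ξ) : ℝ) : ℂ)) :=
          (Complex.continuous_ofReal.tendsto _).comp
            ((Real.continuous_exp.tendsto _).comp (h1.neg.mul_const ξ))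
        simpa using h2.mul_const (ft h ξ * ft k (-ξ))
    refine le_of_tendsto hlim.norm (Filter.Eventually.of_forall fun n => ?_)
    rw [← integral_cauchy_mul_eq hh hk (hε n)]
    exact H h k (ε n) hh hk (hε n)
  rcases le_total p 2 with hp | hp
  · exact key hpq hp
  · have hq : q ≤ 2 := by
      have h1 := hpq.mul_eq_add
      have := hpq.symm.lt
      nlinarith [hpq.lt]
    obtain ⟨C, hC, H⟩ := key hpq.symm hq
    refine ⟨C, hC, fun h k hh hk hint => ?_⟩
    have hsymm : ∀ ξ, ft (fun x => k (-x)) ξ * ft (fun x => h (-x)) (-ξ) = ft h ξ * ft k (-ξ) := by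
      intro ξ
      rw [ft_comp_neg, ft_comp_neg, neg_neg, mul_comm]
    have := H _ _ hk.comp_neg hh.comp_neg (by simpa only [hsymm] using hint)
    simp only [hsymm] at this
    rw [integral_neg_eq_self (fun x => ‖k x‖ ^ q), integral_neg_eq_self (fun x => ‖h x‖ ^ p),
      add_comm] at this
    exact this

end RieszProjection

section RandomisedBands

/-- Square-function bound for the frequency bands, in randomised form and stable under unimodular
(or smaller) coefficients depending on the space variable. -/
lemma exists_sum_signs_integral_band_le {p : ℝ} (hp : 1 < p) :
    ∃ C, 0 ≤ C ∧ ∀ (S : Finset ℤ) (c : ℤ → ℝ → ℂ), (∀ j, Measurable (c j)) →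
      (∀ j x, ‖c j x‖ ≤ 1) → ∀ f : ℝ → ℂ, IsTest f →
      ∑ e : S → ℤˣ, ∫ x, ‖∑ j : S, (sgn (e j) : ℂ) * (c j x * band j f x)‖ ^ p ≤
        C * Fintype.card (S → ℤˣ) * ∫ x, ‖f x‖ ^ p := by
  obtain ⟨C, hC, H⟩ := exists_integral_norm_sum_band_le hp
  refine ⟨2 ^ p * C, by positivity, fun S c hcm hc f hf => ?_⟩
  have t1 : ∀ e : S → ℤˣ, IsTest fun x => ∑ j : S, (sgn (e j) : ℂ) * (c j x * band j f x) :=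
    fun e => IsTest.sum _ fun j _ => ((hf.band j).bdd_mul (hcm j) (hc j)).const_mul _
  have t2 : ∀ e : S → ℤˣ, IsTest fun x => ∑ j : S, (sgn (e j) : ℂ) * band j f x :=
    fun e => IsTest.sum _ fun j _ => (hf.band j).const_mul _
  have i1 := fun e => (t1 e).norm_rpow_integrable hp.le
  have i2 := fun e => (t2 e).norm_rpow_integrable hp.le
  have hle : ∀ e : S → ℤˣ, ∫ x, ‖∑ j : S, (sgn (e j) : ℂ) * band j f x‖ ^ p ≤
      C * ∫ x, ‖f x‖ ^ p := by
    intro e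
    have h := H S (fun j => if hj : j ∈ S then (sgn (e ⟨j, hj⟩) : ℂ) else 0)
      (fun j => by
        split_ifs
        · exact (norm_sgn _).le
        · simp) f hf
    refine le_of_eq_of_le ?_ h
    congr 1; ext x
    rw [← Finset.sum_coe_sort S]
    simp
  calc _ = ∫ x, ∑ e : S → ℤˣ, ‖∑ j : S, (sgn (e j) : ℂ) * (c j x * band j f x)‖ ^ p :=
        (integral_finsetSum _ fun e _ => i1 e).symm
    _ ≤ ∫ x, 2 ^ p * ∑ e : S → ℤˣ, ‖∑ j : S, (sgn (e j) : ℂ) * band j f x‖ ^ p :=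
        integral_mono (integrable_finsetSum _ fun e _ => i1 e)
          ((integrable_finsetSum _ fun e _ => i2 e).const_mul _)
          fun x => sum_signs_norm_rpow_le hp.le _ _ fun j => hc j x
    _ = 2 ^ p * ∑ e : S → ℤˣ, ∫ x, ‖∑ j : S, (sgn (e j) : ℂ) * band j f x‖ ^ p := by
        rw [integral_const_mul, integral_finsetSum _ fun e _ => i2 e]
    _ ≤ 2 ^ p * ∑ e : S → ℤˣ, C * ∫ x, ‖f x‖ ^ p := by
        gcongr with e
        exact hle e
    _ = _ := by
        rw [Finset.sum_const, Finset.card_univ, nsmul_eq_mul]; ring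

end RandomisedBands

section FourierTransform

lemma integrable_mul_exp {f : ℝ → ℂ} (hf : Integrable f) (ξ : ℝ) :
    Integrable fun x : ℝ => f x * cexp (-(I * (x : ℂ) * (ξ : ℂ))) :=
  hf.mul_bdd (c := 1) (by fun_prop)
    (Filter.Eventually.of_forall fun x => (norm_exp_neg_I_mul _ _).le)

lemma continuous_ft {f : ℝ → ℂ} (hf : Integrable f) : Continuous (ft f) := by
  refine continuous_of_dominated (fun ξ => (integrable_mul_exp hf ξ).aestronglyMeasurable)
    (fun ξ => Filter.Eventually.of_forall fun x => ?_) hf.norm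
    (Filter.Eventually.of_forall fun x => by fun_prop)
  rw [norm_mul, norm_exp_neg_I_mul, mul_one]

lemma norm_ft_le (f : ℝ → ℂ) (ξ : ℝ) : ‖ft f ξ‖ ≤ ∫ x, ‖f x‖ := by
  refine (norm_integral_le_integral_norm _).trans_eq ?_
  simp only [norm_mul, norm_exp_neg_I_mul, mul_one]

lemma ft_sum_const_mul {ι : Type*} (s : Finset ι) (c : ι → ℂ) {f : ι → ℝ → ℂ}
    (hf : ∀ i, Integrable (f i)) (ξ : ℝ) :
    ft (fun x => ∑ i ∈ s, c i * f i x) ξ = ∑ i ∈ s, c i * ft (f i) ξ := by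
  simp only [ft, ← integral_const_mul]
  rw [← integral_finsetSum _ fun i _ => (integrable_mul_exp (hf i) ξ).const_mul (c i)]
  congr 1; ext x
  rw [Finset.sum_mul]
  exact Finset.sum_congr rfl fun i _ => by ring

lemma ft_modulate (f : ℝ → ℂ) (c : ℂ) (α ξ : ℝ) :
    ft (fun x => c * cexp (-(I * x * α)) * f x) ξ = c * ft f (ξ + α) := by
  rw [ft, ft, ← integral_const_mul]
  congr 1; ext x
  have : -(I * x * ((ξ + α : ℝ) : ℂ)) = -(I * (x : ℂ) * α) + -(I * x * ξ) := by push_cast; ring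
  rw [this, Complex.exp_add]; ring

lemma continuous_profile : Continuous profile := by unfold profile; fun_prop

lemma abs_profile_le (s : ℝ) : |profile s| ≤ 1 := by
  have h1 : Real.exp (-s ^ 2) ≤ 1 := Real.exp_le_one_iff.2 (by nlinarith [sq_nonneg s])
  have h2 : Real.exp (-(4 * s ^ 2)) ≤ 1 := Real.exp_le_one_iff.2 (by nlinarith [sq_nonneg s])
  have h3 := Real.exp_pos (-s ^ 2)
  have h4 := Real.exp_pos (-(4 * s ^ 2))
  rw [profile, abs_le]
  constructor <;> linarith

lemma profile_neg (s : ℝ) : profile (-s) = profile s := by simp [profile]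

lemma profile_pos {s : ℝ} (hs : s ≠ 0) : 0 < profile s := by
  have : 0 < s ^ 2 := by positivity
  exact sub_pos.2 (Real.exp_lt_exp.2 (by linarith))

lemma integrable_ft_band {f : ℝ → ℂ} (hf : IsTest f) (hft : Integrable (ft f)) (j : ℤ) :
    Integrable (ft (band j f)) := by
  have : ft (band j f) = fun ξ => (profile (ξ / 2 ^ j) : ℂ) * ft f ξ := funext (ft_band j hf)
  rw [this]
  refine hft.bdd_mul (c := 1) ?_ (Filter.Eventually.of_forall fun ξ => ?_)
  · exact (Complex.continuous_ofReal.comp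
      (continuous_profile.comp (continuous_id.div_const _))).aestronglyMeasurable
  · rw [Complex.norm_real]; exact abs_profile_le _

lemma integrable_mul_ft_neg {F g : ℝ → ℂ} (hF : Integrable F) (hg : Integrable g) (α : ℝ) :
    Integrable fun ξ => F ξ * ft g (-ξ + α) :=
  hF.mul_bdd (c := ∫ x, ‖g x‖)
    ((continuous_ft hg).comp (by fun_prop)).aestronglyMeasurable
    (Filter.Eventually.of_forall fun ξ => norm_ft_le _ _)

lemma setIntegral_Ioi_add_right {E : Type*} [NormedAddCommGroup E] [NormedSpace ℝ E] (F : ℝ → E)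
    (α : ℝ) : ∫ ξ in Set.Ioi (0 : ℝ), F (ξ + α) = ∫ ξ in Set.Ioi α, F ξ := by
  have := (measurePreserving_add_right volume α).setIntegral_preimage_emb
    (measurableEmbedding_addRight α) F (Set.Ioi α)
  simpa using this

end FourierTransform

/-- Frequency truncations of the bands at arbitrary thresholds `α j`, in dual form. -/
lemma exists_norm_sum_integral_Ioi_band_le {p q : ℝ} (hpq : p.HolderConjugate q) :
    ∃ C, 0 ≤ C ∧ ∀ (S : Finset ℤ) (a : ℤ → ℂ) (α : ℤ → ℝ), (∀ j, ‖a j‖ ≤ 1) →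
      ∀ f g : ℝ → ℂ, IsTest f → IsTest g → Integrable (ft f) →
      ‖∑ j ∈ S, a j * ∫ ξ in Set.Ioi (α j), ft (band j f) ξ * ft (band j g) (-ξ)‖ ≤
        C * ((∫ x, ‖f x‖ ^ p) + ∫ x, ‖g x‖ ^ q) := by
  obtain ⟨C, hC, hR⟩ := exists_norm_integral_Ioi_ft_mul_le hpq
  obtain ⟨C₁, hC₁, H₁⟩ := exists_sum_signs_integral_band_le hpq.lt
  obtain ⟨C₂, hC₂, H₂⟩ := exists_sum_signs_integral_band_le hpq.symm.lt
  refine ⟨C * (C₁ + C₂), by positivity, fun S a α ha f g hf hg hft => ?_⟩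
  let c : ℤ → ℝ → ℂ := fun j x => a j * cexp (-(I * x * α j))
  let d : ℤ → ℝ → ℂ := fun j x => 1 * cexp (-(I * x * ((-α j : ℝ) : ℂ)))
  have hcm : ∀ j, Measurable (c j) := fun j => by fun_prop
  have hdm : ∀ j, Measurable (d j) := fun j => by fun_prop
  have hc : ∀ j x, ‖c j x‖ ≤ 1 := fun j x => by
    simpa only [c, norm_mul, norm_exp_neg_I_mul, mul_one] using ha j
  have hd : ∀ j x, ‖d j x‖ ≤ 1 := fun j x => by
    simp only [d, norm_mul, norm_exp_neg_I_mul, mul_one, norm_one, le_refl]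
  have tc : ∀ j, IsTest fun x => c j x * band j f x := fun j =>
    (hf.band j).bdd_mul (hcm j) (hc j)
  have td : ∀ j, IsTest fun x => d j x * band j g x := fun j =>
    (hg.band j).bdd_mul (hdm j) (hd j)
  let A : ℤ → ℝ → ℂ := fun j ξ => a j * ft (band j f) (ξ + α j)
  let B : ℤ → ℝ → ℂ := fun j ξ => ft (band j g) (-ξ + -α j)
  let h : (S → ℤˣ) → ℝ → ℂ := fun e x => ∑ j : S, (sgn (e j) : ℂ) * (c j x * band j f x)
  let k : (S → ℤˣ) → ℝ → ℂ := fun e x => ∑ j : S, (sgn (e j) : ℂ) * (d j x * band j g x)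
  have th : ∀ e, IsTest (h e) := fun e => IsTest.sum _ fun j _ => (tc j).const_mul _
  have tk : ∀ e, IsTest (k e) := fun e => IsTest.sum _ fun j _ => (td j).const_mul _
  have fh : ∀ e ξ, ft (h e) ξ = ∑ j : S, (sgn (e j) : ℂ) * A j ξ := fun e ξ => by
    simp only [h]
    rw [ft_sum_const_mul _ _ fun j : S => (tc j).integrable]
    simp only [c, A, ft_modulate]
  have fk : ∀ e ξ, ft (k e) (-ξ) = ∑ j : S, (sgn (e j) : ℂ) * B j ξ := fun e ξ => by
    simp only [k]
    rw [ft_sum_const_mul _ _ fun j : S => (td j).integrable]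
    simp only [d, B, ft_modulate]
    simp only [one_mul]
  have hA : ∀ j, Integrable (A j) := fun j =>
    ((integrable_ft_band hf hft j).comp_add_right (α j)).const_mul _
  have hAB : ∀ j i, Integrable fun ξ => A j ξ * B i ξ := fun j i =>
    integrable_mul_ft_neg (hA j) (hg.band i).integrable _
  have hhk : ∀ e, Integrable fun ξ => ft (h e) ξ * ft (k e) (-ξ) := fun e => by
    simp only [fh, fk, Finset.sum_mul_sum]
    refine integrable_finsetSum _ fun j _ => integrable_finsetSum _ fun i _ => ?_
    refine ((hAB j i).const_mul ((sgn (e j) : ℂ) * sgn (e i))).congr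
      (Filter.Eventually.of_forall fun ξ => ?_)
    ring
  have hterm : ∀ j, ∫ ξ in Set.Ioi (0 : ℝ), A j ξ * B j ξ =
      a j * ∫ ξ in Set.Ioi (α j), ft (band j f) ξ * ft (band j g) (-ξ) := fun j => by
    rw [← setIntegral_Ioi_add_right _ (α j), ← integral_const_mul]
    congr 1; ext ξ
    simp only [A, B, neg_add]
    ring
  have hsum : ∑ e : S → ℤˣ, ∫ ξ in Set.Ioi (0 : ℝ), ft (h e) ξ * ft (k e) (-ξ) =
      Fintype.card (S → ℤˣ) *
        ∑ j ∈ S, a j * ∫ ξ in Set.Ioi (α j), ft (band j f) ξ * ft (band j g) (-ξ) := by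
    rw [← integral_finsetSum _ fun e _ => (hhk e).integrableOn]
    simp only [fh, fk, sum_sign_pairing]
    rw [integral_const_mul, integral_finsetSum _ fun (j : S) _ => (hAB j j).integrableOn]
    simp only [hterm]
    rw [Finset.sum_coe_sort S
      (fun j => a j * ∫ ξ in Set.Ioi (α j), ft (band j f) ξ * ft (band j g) (-ξ))]
  have hcard : (0 : ℝ) < Fintype.card (S → ℤˣ) := by exact_mod_cast Fintype.card_pos
  have hF : 0 ≤ ∫ x, ‖f x‖ ^ p := integral_nonneg fun x => by positivity
  have hG : 0 ≤ ∫ x, ‖g x‖ ^ q := integral_nonneg fun x => by positivity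
  refine le_of_mul_le_mul_left ?_ hcard
  calc (Fintype.card (S → ℤˣ) : ℝ) *
        ‖∑ j ∈ S, a j * ∫ ξ in Set.Ioi (α j), ft (band j f) ξ * ft (band j g) (-ξ)‖
      = ‖∑ e : S → ℤˣ, ∫ ξ in Set.Ioi (0 : ℝ), ft (h e) ξ * ft (k e) (-ξ)‖ := by
        rw [hsum, norm_mul, Complex.norm_natCast]
    _ ≤ ∑ e : S → ℤˣ, C * ((∫ x, ‖h e x‖ ^ p) + ∫ x, ‖k e x‖ ^ q) :=
        (norm_sum_le _ _).trans (Finset.sum_le_sum fun e _ =>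
          hR _ _ (th e) (tk e) (hhk e).integrableOn)
    _ = C * ((∑ e : S → ℤˣ, ∫ x, ‖h e x‖ ^ p) + ∑ e : S → ℤˣ, ∫ x, ‖k e x‖ ^ q) := by
        rw [← Finset.mul_sum, Finset.sum_add_distrib]
    _ ≤ C * (C₁ * Fintype.card (S → ℤˣ) * (∫ x, ‖f x‖ ^ p) +
          C₂ * Fintype.card (S → ℤˣ) * ∫ x, ‖g x‖ ^ q) :=
        mul_le_mul_of_nonneg_left (add_le_add (H₁ S c hcm hc f hf) (H₂ S d hdm hd g hg)) hC
    _ ≤ C * (C₁ * Fintype.card (S → ℤˣ) * ((∫ x, ‖f x‖ ^ p) + ∫ x, ‖g x‖ ^ q) +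
          C₂ * Fintype.card (S → ℤˣ) * ((∫ x, ‖f x‖ ^ p) + ∫ x, ‖g x‖ ^ q)) := by
        refine mul_le_mul_of_nonneg_left (add_le_add ?_ ?_) hC <;>
          refine mul_le_mul_of_nonneg_left ?_ (by positivity) <;> linarith
    _ = _ := by ring

section LacunaryBlocks

lemma exists_hasDerivAt_inv_profile_sq :
    ∃ (β' : ℝ → ℝ) (M : ℝ), ContinuousOn β' (Set.Icc 1 2) ∧
      (∀ s ∈ Set.Icc (1 : ℝ) 2, HasDerivAt (fun s => (profile s ^ 2)⁻¹) (β' s) s) ∧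
      (∀ s ∈ Set.Icc (1 : ℝ) 2, |β' s| ≤ M) ∧
      ∀ s ∈ Set.Icc (1 : ℝ) 2, |(profile s ^ 2)⁻¹| ≤ M := by
  have hne : ∀ s ∈ Set.Icc (1 : ℝ) 2, profile s ^ 2 ≠ 0 := fun s hs =>
    pow_ne_zero 2 (profile_pos (by linarith [hs.1])).ne'
  have hsm : ContDiff ℝ 1 fun s => profile s ^ 2 := by unfold profile; fun_prop
  have hd : Differentiable ℝ fun s => profile s ^ 2 := hsm.differentiable one_ne_zero
  have hc' : ContinuousOn (fun s => -deriv (fun s => profile s ^ 2) s / (profile s ^ 2) ^ 2)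
      (Set.Icc 1 2) :=
    ((hsm.continuous_deriv le_rfl).neg.continuousOn).div (by
      exact (hd.continuous.pow 2).continuousOn) fun s hs => pow_ne_zero 2 (hne s hs)
  have hc : ContinuousOn (fun s => (profile s ^ 2)⁻¹) (Set.Icc (1 : ℝ) 2) :=
    hd.continuous.continuousOn.inv₀ hne
  obtain ⟨M₁, h₁⟩ := isCompact_Icc.exists_bound_of_continuousOn hc'
  obtain ⟨M₂, h₂⟩ := isCompact_Icc.exists_bound_of_continuousOn hc
  exact ⟨_, max M₁ M₂, hc', fun s hs => (hd s).hasDerivAt.fun_inv (hne s hs),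
    fun s hs => (h₁ s hs).trans (le_max_left _ _), fun s hs => (h₂ s hs).trans (le_max_right _ _)⟩

lemma hasDerivAt_integral_Ioi_mul {H : ℝ → ℂ} (hH : Integrable H) (hc : Continuous H) (r s : ℝ) :
    HasDerivAt (fun s => ∫ ξ in Set.Ioi (r * s), H ξ) (-(r * H (r * s))) s := by
  have h1 : ∀ t, ∫ ξ in Set.Ioi t, H ξ = (∫ ξ in Set.Ioi 0, H ξ) - ∫ ξ in (0 : ℝ)..t, H ξ := by
    intro t
    rw [← intervalIntegral.integral_Ioi_sub_Ioi' hH.integrableOn hH.integrableOn, sub_sub_cancel]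
  have h2 : HasDerivAt (fun t => ∫ ξ in Set.Ioi t, H ξ) (-H (r * s)) (r * s) := by
    rw [funext h1]
    exact (hc.integral_hasStrictDerivAt 0 (r * s)).hasDerivAt.const_sub _
  have h3 : HasDerivAt (fun s : ℝ => r * s) r s := by simpa using (hasDerivAt_id s).const_mul r
  have h4 := h2.scomp s h3
  rw [smul_neg, Complex.real_smul] at h4
  exact h4

/-- The sharp frequency cut-offs to `[2 ^ j, 2 ^ (j + 1)]`, in dual form. -/
lemma exists_norm_sum_integral_lacunary_le {p q : ℝ} (hpq : p.HolderConjugate q) :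
    ∃ C, 0 ≤ C ∧ ∀ (S : Finset ℤ) (a : ℤ → ℂ), (∀ j, ‖a j‖ ≤ 1) →
      ∀ f g : ℝ → ℂ, IsTest f → IsTest g → Integrable (ft f) →
      ‖∑ j ∈ S, a j * ∫ ξ in (2 : ℝ) ^ j..2 ^ (j + 1), ft f ξ * ft g (-ξ)‖ ≤
        C * ((∫ x, ‖f x‖ ^ p) + ∫ x, ‖g x‖ ^ q) := by
  obtain ⟨C, hC, hΓ⟩ := exists_norm_sum_integral_Ioi_band_le hpq
  obtain ⟨β', M, hβ'c, hβ, hβ'M, hβM⟩ := exists_hasDerivAt_inv_profile_sq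
  have hM : 0 ≤ M := (abs_nonneg _).trans (hβM 1 (by norm_num))
  refine ⟨3 * M * C, by positivity, fun S a ha f g hf hg hft => ?_⟩
  set W := C * ((∫ x, ‖f x‖ ^ p) + ∫ x, ‖g x‖ ^ q) with hW
  let F : ℝ → ℂ := fun ξ => ft f ξ * ft g (-ξ)
  let H : ℤ → ℝ → ℂ := fun j ξ => ft (band j f) ξ * ft (band j g) (-ξ)
  let Γ : ℝ → ℂ := fun s => ∑ j ∈ S, a j * ∫ ξ in Set.Ioi ((2 : ℝ) ^ j * s), H j ξ
  let Γ' : ℝ → ℂ := fun s => ∑ j ∈ S, a j * -(((2 : ℝ) ^ j : ℝ) * H j (2 ^ j * s))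
  have hFc : Continuous F := (continuous_ft hf.integrable).mul
    ((continuous_ft hg.integrable).comp continuous_neg)
  have hHc : ∀ j, Continuous (H j) := fun j => (continuous_ft (hf.band j).integrable).mul
    ((continuous_ft (hg.band j).integrable).comp continuous_neg)
  have hHi : ∀ j, Integrable (H j) := fun j => by
    simpa using integrable_mul_ft_neg (integrable_ft_band hf hft j) (hg.band j).integrable 0
  have hHF : ∀ (j : ℤ) (s : ℝ), H j (2 ^ j * s) = ((profile s ^ 2 : ℝ) : ℂ) * F (2 ^ j * s) := by
    intro j s
    have h2 : (2 : ℝ) ^ j ≠ 0 := by positivity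
    simp only [H, F]
    rw [ft_band j hf, ft_band j hg, neg_div, profile_neg, mul_div_cancel_left₀ _ h2]
    push_cast; ring
  have hΓd : ∀ s, HasDerivAt Γ (Γ' s) s := fun s =>
    HasDerivAt.fun_sum fun j _ => (hasDerivAt_integral_Ioi_mul (hHi j) (hHc j) _ s).const_mul _
  have hΓ'c : Continuous Γ' := by
    refine continuous_finsetSum _ fun j _ => ?_
    have := hHc j
    fun_prop
  have hΓW : ∀ s, ‖Γ s‖ ≤ W := fun s => hΓ S a (fun j => 2 ^ j * s) ha f g hf hg hft
  have hW0 : 0 ≤ W := (norm_nonneg _).trans (hΓW 0)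
  have huIcc : Set.uIcc (1 : ℝ) 2 = Set.Icc 1 2 := Set.uIcc_of_le one_le_two
  have hdil : ∀ j : ℤ, ∫ ξ in (2 : ℝ) ^ j..2 ^ (j + 1), F ξ =
      ∫ s in (1 : ℝ)..2, ((2 : ℝ) ^ j : ℝ) * F (2 ^ j * s) := by
    intro j
    have := intervalIntegral.smul_integral_comp_mul_left (a := 1) (b := 2) F ((2 : ℝ) ^ j)
    rw [mul_one, ← zpow_add_one₀ two_ne_zero] at this
    rw [← this, intervalIntegral.integral_const_mul, Complex.real_smul]
  have hmain : ∑ j ∈ S, a j * ∫ ξ in (2 : ℝ) ^ j..2 ^ (j + 1), F ξ =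
      -∫ s in (1 : ℝ)..2, (((profile s ^ 2)⁻¹ : ℝ) : ℂ) * Γ' s := by
    simp only [hdil]
    simp only [← intervalIntegral.integral_const_mul]
    rw [← intervalIntegral.integral_finsetSum fun j _ =>
      Continuous.intervalIntegrable (by fun_prop) _ _, ← intervalIntegral.integral_neg]
    refine intervalIntegral.integral_congr fun s hs => ?_
    rw [huIcc] at hs
    have hne : ((profile s ^ 2 : ℝ) : ℂ) ≠ 0 := Complex.ofReal_ne_zero.2
      (pow_ne_zero 2 (profile_pos (by linarith [hs.1])).ne')
    simp only [Γ', hHF]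
    rw [Finset.mul_sum, ← Finset.sum_neg_distrib]
    refine Finset.sum_congr rfl fun j _ => ?_
    rw [Complex.ofReal_inv]
    field_simp
  have hparts := intervalIntegral.integral_mul_deriv_eq_deriv_mul
    (u := fun s => (((profile s ^ 2)⁻¹ : ℝ) : ℂ)) (u' := fun s => (β' s : ℂ)) (v := Γ) (v' := Γ')
    (a := 1) (b := 2) (fun s hs => (hβ s (huIcc ▸ hs)).ofReal_comp) (fun s _ => hΓd s)
    (ContinuousOn.intervalIntegrable (by
      rw [huIcc]; exact Complex.continuous_ofReal.comp_continuousOn hβ'c))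
    (hΓ'c.intervalIntegrable _ _)
  have hn : ∀ s ∈ Set.Icc (1 : ℝ) 2, ‖(((profile s ^ 2)⁻¹ : ℝ) : ℂ) * Γ s‖ ≤ M * W := fun s hs => by
    rw [norm_mul, Complex.norm_real]
    exact mul_le_mul (hβM s hs) (hΓW s) (norm_nonneg _) hM
  have hn' : ‖∫ s in (1 : ℝ)..2, (β' s : ℂ) * Γ s‖ ≤ M * W := by
    have := intervalIntegral.norm_integral_le_of_norm_le_const (a := 1) (b := 2) (C := M * W)
      (f := fun s => (β' s : ℂ) * Γ s) (fun s hs => by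
        rw [Set.uIoc_of_le one_le_two] at hs
        rw [norm_mul, Complex.norm_real]
        exact mul_le_mul (hβ'M s (Set.Ioc_subset_Icc_self hs)) (hΓW s) (norm_nonneg _) hM)
    norm_num at this
    exact this
  rw [hmain, hparts, norm_neg]
  refine (norm_sub_le _ _).trans ?_
  have := norm_sub_le ((((profile 2 ^ 2)⁻¹ : ℝ) : ℂ) * Γ 2) ((((profile 1 ^ 2)⁻¹ : ℝ) : ℂ) * Γ 1)
  have h1 := hn 1 (by norm_num)
  have h2 := hn 2 (by norm_num)
  linarith

lemma iUnion_Ico_two_zpow : ⋃ j : ℤ, Set.Ico ((2 : ℝ) ^ j) (2 ^ (j + 1)) = Set.Ioi 0 := by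
  ext ξ
  simp only [Set.mem_iUnion, Set.mem_Ioi]
  constructor
  · rintro ⟨j, hj⟩
    exact (zpow_pos two_pos j).trans_le hj.1
  · exact fun h => exists_mem_Ico_zpow h one_lt_two

lemma pairwise_disjoint_Ico_two_zpow :
    Pairwise (Function.onFun Disjoint fun j : ℤ => Set.Ico ((2 : ℝ) ^ j) (2 ^ (j + 1))) :=
  Monotone.pairwise_disjoint_on_Ico_succ (zpow_right_mono₀ (one_le_two : (1 : ℝ) ≤ 2))

/-- A one-sided lacunary step multiplier, in dual form. -/
lemma exists_norm_integral_Ioi_step_le {p q : ℝ} (hpq : p.HolderConjugate q) :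
    ∃ C, 0 ≤ C ∧ ∀ (m : ℝ → ℂ) (a : ℤ → ℂ), Measurable m → (∀ j, ‖a j‖ ≤ 1) →
      (∀ j : ℤ, ∀ ξ ∈ Set.Ico ((2 : ℝ) ^ j) (2 ^ (j + 1)), m ξ = a j) →
      ∀ f g : ℝ → ℂ, IsTest f → IsTest g → Integrable (ft f) →
      ‖∫ ξ in Set.Ioi (0 : ℝ), m ξ * (ft f ξ * ft g (-ξ))‖ ≤
        C * ((∫ x, ‖f x‖ ^ p) + ∫ x, ‖g x‖ ^ q) := by
  obtain ⟨C, hC, H⟩ := exists_norm_sum_integral_lacunary_le hpq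
  refine ⟨C, hC, fun m a hm ha hma f g hf hg hft => ?_⟩
  have hF : Integrable fun ξ => ft f ξ * ft g (-ξ) := by
    simpa using integrable_mul_ft_neg hft hg.integrable 0
  have hmF : IntegrableOn (fun ξ => m ξ * (ft f ξ * ft g (-ξ))) (Set.Ioi 0) := by
    refine hF.integrableOn.bdd_mul (c := 1) hm.aestronglyMeasurable ?_
    refine (ae_restrict_mem measurableSet_Ioi).mono fun ξ hξ => ?_
    obtain ⟨j, hj⟩ := exists_mem_Ico_zpow (Set.mem_Ioi.1 hξ) one_lt_two
    rw [hma j ξ hj]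
    exact ha j
  have hs := hasSum_integral_iUnion (f := fun ξ => m ξ * (ft f ξ * ft g (-ξ))) (μ := volume)
    (fun j : ℤ => measurableSet_Ico (a := (2 : ℝ) ^ j) (b := 2 ^ (j + 1)))
    pairwise_disjoint_Ico_two_zpow (by rwa [iUnion_Ico_two_zpow])
  rw [iUnion_Ico_two_zpow] at hs
  refine le_of_tendsto hs.norm (Filter.Eventually.of_forall fun S => ?_)
  refine le_of_eq_of_le ?_ (H S a ha f g hf hg hft)
  congr 1
  refine Finset.sum_congr rfl fun j _ => ?_
  beta_reduce
  rw [setIntegral_congr_fun measurableSet_Ico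
    (g := fun ξ => a j * (ft f ξ * ft g (-ξ))) fun ξ hξ => by simp only [hma j ξ hξ],
    integral_const_mul, integral_Ico_eq_integral_Ioo, ← integral_Ioc_eq_integral_Ioo,
    intervalIntegral.integral_of_le (zpow_le_zpow_right₀ one_le_two (by lia))]

end LacunaryBlocks

section Multiplier

lemma isTest_schwartz (f : SchwartzMap ℝ ℂ) : IsTest f :=
  ⟨f.continuous.measurable, f.integrable, _, fun x => f.norm_le_seminorm ℝ x⟩

lemma integrable_ft_schwartz (f : SchwartzMap ℝ ℂ) : Integrable (ft f) := by
  have h : ft f = fun ξ => (FourierTransform.fourier f : SchwartzMap ℝ ℂ) (ξ / (2 * Real.pi)) := by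
    ext ξ
    rw [SchwartzMap.fourier_coe, Real.fourier_real_eq_integral_exp_smul, ft]
    congr 1; ext x
    rw [smul_eq_mul, mul_comm]
    congr 2
    push_cast
    field_simp
  rw [h]
  exact (SchwartzMap.integrable _).comp_div (by positivity)

/-- A function constant on each lacunary interval and vanishing at the origin is bounded by the
supremum of its values on these intervals. -/
lemma norm_le_of_eq_on_lacI {m : ℝ → ℂ} {a : ℤ × Bool → ℂ} {A : ℝ} (ha : ∀ w, ‖a w‖ ≤ A)
    (hma : ∀ (k : ℤ) (ε : Bool), ∀ ξ ∈ lacI k ε, m ξ = a (k, ε)) (hm0 : m 0 = 0) (ξ : ℝ) :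
    ‖m ξ‖ ≤ A := by
  rcases lt_trichotomy ξ 0 with h | rfl | h
  · obtain ⟨k, hk⟩ := exists_mem_Ico_zpow (neg_pos.2 h) one_lt_two
    rw [hma k false ξ (by simpa [lacI] using And.intro (neg_lt.1 hk.2) (le_neg.1 hk.1))]
    exact ha _
  · rw [hm0, norm_zero]
    exact (norm_nonneg _).trans (ha (0, true))
  · obtain ⟨k, hk⟩ := exists_mem_Ico_zpow h one_lt_two
    rw [hma k true ξ (by simpa [lacI] using hk)]
    exact ha _

lemma norm_exp_I_mul (ξ x : ℝ) : ‖cexp (I * (ξ : ℂ) * (x : ℂ))‖ = 1 := by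
  rw [mul_assoc, mul_comm, ← Complex.ofReal_mul, Complex.norm_exp_ofReal_mul_I]

lemma integrable_multOp_integrand {u : ℝ → ℂ} (hu : Integrable u) (x : ℝ) :
    Integrable fun ξ : ℝ => u ξ * cexp (I * (ξ : ℂ) * (x : ℂ)) :=
  hu.mul_bdd (c := 1) (by fun_prop)
    (Filter.Eventually.of_forall fun ξ => (norm_exp_I_mul _ _).le)

lemma continuous_multOp {m f : ℝ → ℂ} (h : Integrable fun ξ => m ξ * ft f ξ) :
    Continuous (multOp m f) := by
  refine continuous_of_dominated (fun x => (integrable_multOp_integrand h x).aestronglyMeasurable)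
    (fun x => Filter.Eventually.of_forall fun ξ => ?_) h.norm
    (Filter.Eventually.of_forall fun ξ => by fun_prop)
  rw [norm_mul, norm_exp_I_mul, mul_one]

lemma norm_multOp_le (m f : ℝ → ℂ) (x : ℝ) : ‖multOp m f x‖ ≤ ∫ ξ, ‖m ξ * ft f ξ‖ := by
  refine (norm_integral_le_integral_norm _).trans_eq ?_
  congr 1; ext ξ
  rw [norm_mul, norm_exp_I_mul, mul_one]

lemma integral_multOp_mul {m f g : ℝ → ℂ} (h : Integrable fun ξ => m ξ * ft f ξ)
    (hg : Integrable g) :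
    ∫ x, multOp m f x * g x = ∫ ξ, m ξ * (ft f ξ * ft g (-ξ)) := by
  have hK : Integrable (Function.uncurry fun x ξ : ℝ =>
      m ξ * ft f ξ * cexp (I * (ξ : ℂ) * (x : ℂ)) * g x) (volume.prod volume) := by
    have h1 := (hg.mul_prod h).mul_bdd (c := 1)
      (g := fun z : ℝ × ℝ => cexp (I * (z.2 : ℂ) * (z.1 : ℂ)))
      (Measurable.aestronglyMeasurable (by fun_prop))
      (Filter.Eventually.of_forall fun z => (norm_exp_I_mul _ _).le)
    refine h1.congr (Filter.Eventually.of_forall fun z => ?_)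
    simp only [Function.uncurry]
    ring
  calc ∫ x, multOp m f x * g x
      = ∫ x : ℝ, ∫ ξ : ℝ, m ξ * ft f ξ * cexp (I * (ξ : ℂ) * (x : ℂ)) * g x := by
        simp only [multOp, integral_mul_const]
    _ = ∫ ξ : ℝ, ∫ x : ℝ, m ξ * ft f ξ * cexp (I * (ξ : ℂ) * (x : ℂ)) * g x :=
        integral_integral_swap hK
    _ = _ := by
        congr 1; ext ξ
        rw [ft.eq_1 g, ← mul_assoc, ← integral_const_mul]
        congr 1; ext x
        have : -(I * (x : ℂ) * ((-ξ : ℝ) : ℂ)) = I * ξ * x := by push_cast; ring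
        rw [this]; ring

/-- Lacunary step multipliers with coefficients bounded by `1`, in dual form. -/
lemma exists_norm_integral_step_le {p q : ℝ} (hpq : p.HolderConjugate q) :
    ∃ C, 0 ≤ C ∧ ∀ (m : ℝ → ℂ) (a : ℤ × Bool → ℂ), Measurable m → (∀ w, ‖a w‖ ≤ 1) →
      (∀ (k : ℤ) (ε : Bool), ∀ ξ ∈ lacI k ε, m ξ = a (k, ε)) → m 0 = 0 →
      ∀ f g : ℝ → ℂ, IsTest f → IsTest g → Integrable (ft f) →
      ‖∫ ξ, m ξ * (ft f ξ * ft g (-ξ))‖ ≤ C * ((∫ x, ‖f x‖ ^ p) + ∫ x, ‖g x‖ ^ q) := by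
  obtain ⟨C, hC, H⟩ := exists_norm_integral_Ioi_step_le hpq
  refine ⟨2 * C, by positivity, fun m a hm ha hma hm0 f g hf hg hft => ?_⟩
  have hF : Integrable fun ξ => ft f ξ * ft g (-ξ) := by
    simpa using integrable_mul_ft_neg hft hg.integrable 0
  have hmF : Integrable fun ξ => m ξ * (ft f ξ * ft g (-ξ)) :=
    hF.bdd_mul hm.aestronglyMeasurable
      (Filter.Eventually.of_forall (norm_le_of_eq_on_lacI ha hma hm0))
  have hpos := H m (fun k => a (k, true)) hm (fun k => ha _)
    (fun k ξ hξ => hma k true ξ (by simpa [lacI] using hξ)) f g hf hg hft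
  have hft' : Integrable (ft fun x => f (-x)) := by
    rw [funext (ft_comp_neg f)]
    exact hft.comp_neg
  have hneg := H (fun ξ => m (-ξ)) (fun k => a (k, false)) (hm.comp measurable_neg)
    (fun k => ha _) (fun k ξ hξ => hma k false (-ξ) (by
      simpa [lacI, and_comm] using hξ)) _ _ hf.comp_neg hg.comp_neg hft'
  simp only [ft_comp_neg] at hneg
  rw [integral_neg_eq_self (fun x => ‖f x‖ ^ p), integral_neg_eq_self (fun x => ‖g x‖ ^ q),
    integral_comp_neg_Ioi (0 : ℝ) (fun ξ => m ξ * (ft f ξ * ft g (-ξ))), neg_zero] at hneg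
  rw [← integral_add_compl (measurableSet_Ioi (a := (0 : ℝ))) hmF, Set.compl_Ioi]
  refine (norm_add_le _ _).trans ?_
  linarith

lemma eLpNorm_le_of_integral_norm_rpow_le {p K : ℝ} (hp : 1 < p) (hK : 0 ≤ K) {u f : ℝ → ℂ}
    (hu : Measurable u) (hf : Measurable f) (hui : Integrable fun x => ‖u x‖ ^ p)
    (hfi : Integrable fun x => ‖f x‖ ^ p) (hle : ∫ x, ‖u x‖ ^ p ≤ K * ∫ x, ‖f x‖ ^ p) :
    eLpNorm u (ENNReal.ofReal p) volume ≤
      ENNReal.ofReal (K ^ p⁻¹) * eLpNorm f (ENNReal.ofReal p) volume := by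
  have hp0 : 0 < p := by linarith
  have h0 : ENNReal.ofReal p ≠ 0 := by simpa using hp0
  have hr : (ENNReal.ofReal p).toReal = p := ENNReal.toReal_ofReal hp0.le
  have key : ∀ {v : ℝ → ℂ}, Measurable v → Integrable (fun x => ‖v x‖ ^ p) →
      eLpNorm v (ENNReal.ofReal p) volume = ENNReal.ofReal ((∫ x, ‖v x‖ ^ p) ^ p⁻¹) := by
    intro v hv hvi
    have hL : MemLp v (ENNReal.ofReal p) volume := by
      rw [← integrable_norm_rpow_iff hv.aestronglyMeasurable h0 ENNReal.ofReal_ne_top, hr]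
      exact hvi
    rw [hL.eLpNorm_eq_integral_rpow_norm h0 ENNReal.ofReal_ne_top, hr]
  rw [key hu hui, key hf hfi, ← ENNReal.ofReal_mul (by positivity),
    ← Real.mul_rpow hK (integral_nonneg fun x => by positivity)]
  exact ENNReal.ofReal_le_ofReal (Real.rpow_le_rpow (integral_nonneg fun x => by positivity) hle
    (by positivity))

lemma exists_eLpNorm_multOp_le_of_norm_le_one {p : ℝ} (hp : 1 < p) :
    ∃ C, 0 < C ∧ ∀ (m : ℝ → ℂ) (a : ℤ × Bool → ℂ), Measurable m → (∀ w, ‖a w‖ ≤ 1) →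
      (∀ (k : ℤ) (ε : Bool), ∀ ξ ∈ lacI k ε, m ξ = a (k, ε)) → m 0 = 0 →
      ∀ f : SchwartzMap ℝ ℂ, eLpNorm (multOp m f) (ENNReal.ofReal p) volume ≤
        ENNReal.ofReal C * eLpNorm f (ENNReal.ofReal p) volume := by
  have hpq := Real.HolderConjugate.conjExponent hp
  obtain ⟨C, hC, H⟩ := exists_norm_integral_step_le hpq
  refine ⟨(2 * (2 * C + 1) ^ (p - 1) * C + 1) ^ p⁻¹, by positivity,
    fun m a hm ha hma hm0 f => ?_⟩
  have hf := isTest_schwartz f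
  have hft := integrable_ft_schwartz f
  have hmf : Integrable fun ξ => m ξ * ft f ξ := hft.bdd_mul hm.aestronglyMeasurable
    (Filter.Eventually.of_forall (norm_le_of_eq_on_lacI ha hma hm0))
  have hum := (continuous_multOp hmf).measurable
  obtain ⟨hui, hle⟩ := integrable_norm_rpow_of_pairing_le hpq hum (norm_multOp_le m f) hC
    (a := C * ∫ x, ‖f x‖ ^ p) fun g hg => by
      rw [integral_multOp_mul hmf hg.integrable, ← mul_add]
      exact H m a hm ha hma hm0 f g hf hg hft
  refine eLpNorm_le_of_integral_norm_rpow_le hp (by positivity) hum hf.measurable hui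
    (hf.norm_rpow_integrable hp.le) (hle.trans ?_)
  have : 0 ≤ ∫ x, ‖f x‖ ^ p := integral_nonneg fun x => by positivity
  rw [← mul_assoc, add_mul, one_mul]
  linarith

end Multiplier

end LacunaryMultiplier

/-- **Step multipliers constant on the lacunary intervals** (a form of the
Marcinkiewicz multiplier theorem).  If `m = ∑_{ω ∈ Δ} a_ω 1_ω` with `|a_ω| ≤ A`, then
for every `1 < p < ∞`, `‖A_m f‖_p ≤ C_p A ‖f‖_p` for all Schwartz `f`, i.e.
`‖A_m‖_{L^p→L^p} ≤ C_p sup_{ω∈Δ} |a_ω|`. -/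
theorem lacunary_step_multiplier (p : ℝ) (hp1 : 1 < p) :
    ∃ C : ℝ, 0 < C ∧
      ∀ (m : ℝ → ℂ) (a : ℤ × Bool → ℂ) (A : ℝ),
        Measurable m →
        (∀ w : ℤ × Bool, ‖a w‖ ≤ A) →
        (∀ (k : ℤ) (ε : Bool), ∀ ξ ∈ lacI k ε, m ξ = a (k, ε)) →
        m 0 = 0 →
        ∀ f : SchwartzMap ℝ ℂ,
          eLpNorm (multOp m (⇑f)) (ENNReal.ofReal p) volume
            ≤ ENNReal.ofReal (C * A) * eLpNorm (⇑f) (ENNReal.ofReal p) volume := by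
  obtain ⟨C, hC, H⟩ := LacunaryMultiplier.exists_eLpNorm_multOp_le_of_norm_le_one hp1
  refine ⟨C, hC, fun m a A hm ha hma hm0 f => ?_⟩
  have hmA := LacunaryMultiplier.norm_le_of_eq_on_lacI ha hma hm0
  rcases ((norm_nonneg _).trans (ha (0, true))).eq_or_lt' with rfl | hA
  · have h0 : multOp m f = 0 := by
      ext x
      have : ∀ ξ, m ξ = 0 := fun ξ => norm_le_zero_iff.1 (hmA ξ)
      simp [multOp, this]
    simp [h0]
  have hA' : (A : ℂ) ≠ 0 := Complex.ofReal_ne_zero.2 hA.ne'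
  have hscale : multOp m f = (A : ℂ) • multOp (fun ξ => (A : ℂ)⁻¹ * m ξ) f := by
    ext x
    rw [Pi.smul_apply, smul_eq_mul, multOp, multOp, ← integral_const_mul]
    congr 1; ext ξ
    field_simp
  have h := H (fun ξ => (A : ℂ)⁻¹ * m ξ) (fun w => (A : ℂ)⁻¹ * a w) (hm.const_mul _)
    (fun w => by
      rw [norm_mul, norm_inv, Complex.norm_of_nonneg hA.le, inv_mul_le_one₀ hA]
      exact ha w)
    (fun k ε ξ hξ => by simp only [hma k ε ξ hξ]) (by simp [hm0]) f
  rw [hscale, eLpNorm_const_smul, mul_comm C A, ENNReal.ofReal_mul hA.le, mul_assoc]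
  gcongr
  rw [← ofReal_norm, Complex.norm_of_nonneg hA.le]
end
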